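/- arXiv:math/0503719 — 4 statements merged into one kernel-verified Lean document; each statement's English description precedes it below -/
import Mathlib

section
/- Fix integers n ≥ 1 and k ≥ 2n. Then there exist complex numbers D_{j,p}(a), for integers j ≥ 2n and p ∈ {0,1}, depending linearly on a, with D_{j,1}(a) = 0 whenever j/k is not an integer, such that for every real d > 2n/k which is not of the form j/k (j ∈ ℕ): I_{n,k}(λ) = Σ_{j ≥ 2n, j/k < d} Σ_{p∈{0,1}} D_{j,p}(a) λ^{−j/k} (log λ)^p + O(λ^{−d}) as λ → ∞. In particular I_{n,k}(λ) admits a full asymptotic expansion in the powers λ^{−j/k} (j ≥ 2n) and λ^{−j/k} log λ, the logarithmic terms occurring only when j/k is a positive integer. -/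
/- STATEMENT 1: Existence of a full asymptotic expansion for
I_{n,k}(λ) = ∫_0^∞ (∫_ℝ a(λ y₁^k y₂, y₁, y₂) dy₂) y₁^{2n−1} dy₁ in the powers
λ^{−j/k} (j ≥ 2n) and λ^{−j/k} log λ, the logarithms occurring only when k ∣ j
(Lemma "Theo IO 2eme carte", existence part, regime k ≥ 2n). -/

open MeasureTheory Filter

/-!
Put `ε = λ ^ (-1 / k)` and let `F_{m,b}(ε)` be the integral with weight `y₁ ^ m` and amplitude `b`.
The substitution `y₁ = ε s` gives the Euler equation `ε F' = (m + 1) F + F_{m+1, ∂_y₁ b}`, whose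
solution operator turns an expansion for the weight `m + 1` into one for the weight `m`; so only
large `m` matter. For `m ≥ 2 k` the substitution `t = λ y₁ ^ k y₂` gives a second Euler equation
`ε F' = k F + k ε ^ k F_{m-k, t ∂_y₂ b}`, and iterating it shows that `F` is a combination of the
pure powers `ε ^ (k l)`, `l ≥ 1`, up to an error of high order. Logarithms come only from resonance,
when the term `ε ^ (m + 1)` is already present in the inhomogeneity of the first equation, which
forces `k ∣ m + 1`. Uniqueness of the coefficients glues the expansions of all orders together.
-/

open Topology Asymptotics

section RealPowers

variable {E : Type*} [NormedAddCommGroup E]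

theorem isBigO_rpow_rpow_nhdsGT_zero {p q : ℝ} (h : q ≤ p) :
    (fun x : ℝ => x ^ p) =O[𝓝[>] 0] fun x => x ^ q := by
  refine IsBigO.of_bound' ?_
  filter_upwards [Ioo_mem_nhdsGT one_pos] with x hx
  rw [Real.norm_of_nonneg (Real.rpow_nonneg hx.1.le _),
    Real.norm_of_nonneg (Real.rpow_nonneg hx.1.le _)]
  exact Real.rpow_le_rpow_of_exponent_ge hx.1 hx.2.le h

theorem isBigO_const_rpow_nhdsGT_zero (v : E) {q : ℝ} (hq : q ≤ 0) :
    (fun _ => v) =O[𝓝[>] 0] fun x : ℝ => x ^ q := by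
  refine (isBigO_const_const v (one_ne_zero (α := ℝ)) _).trans ?_
  simpa using isBigO_rpow_rpow_nhdsGT_zero hq

theorem tendsto_rpow_nhdsGT_zero {q : ℝ} (hq : 0 < q) :
    Tendsto (fun x : ℝ => x ^ q) (𝓝[>] 0) (𝓝 0) := by
  have h := (Real.continuousAt_rpow_const 0 q (Or.inr hq.le)).tendsto
  rw [Real.zero_rpow hq.ne'] at h
  exact h.mono_left nhdsWithin_le_nhds

variable [NormedSpace ℝ E]

theorem isBigO_rpow_smul_nhdsGT_zero {f : ℝ → E} {q : ℝ}
    (hf : f =O[𝓝[>] 0] fun x => x ^ q) (p : ℝ) :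
    (fun x => x ^ p • f x) =O[𝓝[>] 0] fun x => x ^ (p + q) := by
  refine ((isBigO_refl _ _).smul hf).congr' EventuallyEq.rfl ?_
  filter_upwards [self_mem_nhdsWithin] with x (hx : 0 < x)
  rw [smul_eq_mul, Real.rpow_add hx]

theorem isBigO_pow_smul_add_log_smul (u v : E) {i : ℕ} {q : ℝ} (hq : q < i) :
    (fun x : ℝ => x ^ i • (u + Real.log x • v)) =O[𝓝[>] 0] fun x => x ^ q := by
  have hlog : (fun x : ℝ => Real.log x • v) =O[𝓝[>] 0] fun x => x ^ (q - i) := by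
    simpa using (isLittleO_log_rpow_nhdsGT_zero (sub_neg.2 hq)).isBigO.smul
      (isBigO_const_const v (one_ne_zero (α := ℝ)) (𝓝[>] (0 : ℝ)))
  have h := isBigO_rpow_smul_nhdsGT_zero
    ((isBigO_const_rpow_nhdsGT_zero u (sub_neg.2 hq).le).add hlog) i
  simpa using h

theorem eq_zero_of_tendsto_add_log_smul {u v : E}
    (h : Tendsto (fun x : ℝ => u + Real.log x • v) (𝓝[>] 0) (𝓝 0)) : u = 0 ∧ v = 0 := by
  have hinv : Tendsto (fun x => (Real.log x)⁻¹) (𝓝[>] 0) (𝓝 0) :=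
    Real.tendsto_log_nhdsGT_zero.inv_tendsto_atBot
  have hv : Tendsto (fun x => (Real.log x)⁻¹ • (u + Real.log x • v)) (𝓝[>] 0) (𝓝 v) := by
    have huv : Tendsto (fun x => (Real.log x)⁻¹ • u + v) (𝓝[>] 0) (𝓝 v) := by
      simpa using (hinv.smul_const u).add_const v
    refine huv.congr' ?_
    filter_upwards [Real.tendsto_log_nhdsGT_zero.eventually_ne_atBot 0] with x hx
    rw [smul_add, inv_smul_smul₀ hx]
  have hv0 : v = 0 := tendsto_nhds_unique hv (by simpa using hinv.smul h)
  subst hv0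
  exact ⟨by simpa using h, rfl⟩

variable {h h' : ℝ → E} {q : ℝ}

theorem exists_norm_sub_le_abs_rpow_sub (hq : q ≠ 0) (hd : ∀ x, 0 < x → HasDerivAt h (h' x) x)
    (hO : h' =O[𝓝[>] 0] fun x : ℝ => x ^ (q - 1)) :
    ∃ δ > 0, ∃ M, ∀ x ∈ Set.Ioo 0 δ, ∀ y ∈ Set.Ioo 0 δ, ‖h y - h x‖ ≤ M * |y ^ q - x ^ q| := by
  obtain ⟨K, hK⟩ := hO.bound
  obtain ⟨δ, hδ, hKδ⟩ := mem_nhdsGT_iff_exists_Ioo_subset.1 hK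
  have hmono : ∀ x y, 0 < x → x ≤ y → y < δ → ‖h y - h x‖ ≤ K / q * (y ^ q - x ^ q) := by
    intro x y hx hxy hy
    have hB : ∀ t, 0 < t →
        HasDerivAt (fun t => K / q * (t ^ q - x ^ q)) (K * t ^ (q - 1)) t := fun t ht =>
      (((Real.hasDerivAt_rpow_const (Or.inl ht.ne')).sub_const _).const_mul _).congr_deriv
        (by field_simp)
    refine image_norm_le_of_norm_deriv_right_le_deriv_boundary' (f := fun t => h t - h x)
      (fun t ht => ((hd t (hx.trans_le ht.1)).sub_const _).continuousAt.continuousWithinAt)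
      (fun t ht => ((hd t (hx.trans_le ht.1)).sub_const _).hasDerivWithinAt) (by simp)
      (fun t ht => (hB t (hx.trans_le ht.1)).continuousAt.continuousWithinAt)
      (fun t ht => (hB t (hx.trans_le ht.1)).hasDerivWithinAt) (fun t ht => ?_)
      (Set.right_mem_Icc.2 hxy)
    have ht0 : 0 < t := hx.trans_le ht.1
    simpa [abs_of_pos (Real.rpow_pos_of_pos ht0 _)] using hKδ ⟨ht0, ht.2.trans hy⟩
  have habs : ∀ x y, 0 < x → x ≤ y → y < δ → ‖h y - h x‖ ≤ |K / q| * |y ^ q - x ^ q| :=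
    fun x y hx hxy hy => (hmono x y hx hxy hy).trans ((le_abs_self _).trans (abs_mul _ _).le)
  refine ⟨δ, hδ, |K / q|, fun x hx y hy => ?_⟩
  rcases le_total x y with hxy | hyx
  · exact habs x y hx.1 hxy hy.2
  · rw [norm_sub_rev, abs_sub_comm]
    exact habs y x hy.1 hyx hx.2

theorem isBigO_rpow_of_deriv_isBigO_rpow (hq : q < 0) (hd : ∀ x, 0 < x → HasDerivAt h (h' x) x)
    (hO : h' =O[𝓝[>] 0] fun x : ℝ => x ^ (q - 1)) : h =O[𝓝[>] 0] fun x => x ^ q := by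
  obtain ⟨δ, hδ, M, hM⟩ := exists_norm_sub_le_abs_rpow_sub hq.ne hd hO
  have hdiff : (fun y => h y - h (δ / 2)) =O[𝓝[>] 0] fun y => y ^ q - (δ / 2) ^ q :=
    IsBigO.of_bound M <| by
      filter_upwards [Ioo_mem_nhdsGT hδ] with y hy
      exact hM _ ⟨half_pos hδ, half_lt_self hδ⟩ y hy
  have hpow : (fun y : ℝ => y ^ q - (δ / 2) ^ q) =O[𝓝[>] 0] fun y => y ^ q :=
    (isBigO_refl _ _).sub (isBigO_const_rpow_nhdsGT_zero _ hq.le)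
  simpa using (hdiff.trans hpow).add (isBigO_const_rpow_nhdsGT_zero (h (δ / 2)) hq.le)

theorem exists_sub_isBigO_rpow_of_deriv_isBigO_rpow [CompleteSpace E] (hq : 0 < q)
    (hd : ∀ x, 0 < x → HasDerivAt h (h' x) x)
    (hO : h' =O[𝓝[>] 0] fun x : ℝ => x ^ (q - 1)) :
    ∃ C, (fun x => h x - C) =O[𝓝[>] 0] fun x => x ^ q := by
  obtain ⟨δ, hδ, M, hM⟩ := exists_norm_sub_le_abs_rpow_sub hq.ne' hd hO
  have h0 := tendsto_rpow_nhdsGT_zero hq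
  have hcauchy : Cauchy (map h (𝓝[>] 0)) := by
    rw [cauchy_map_iff', tendsto_uniformity_iff_dist_tendsto_zero]
    have hlim : Tendsto (fun p : ℝ × ℝ => M * |p.1 ^ q - p.2 ^ q|) (𝓝[>] 0 ×ˢ 𝓝[>] 0) (𝓝 0) := by
      simpa using ((h0.comp tendsto_fst).sub (h0.comp tendsto_snd)).abs.const_mul M
    refine squeeze_zero' (Eventually.of_forall fun _ => dist_nonneg) ?_ hlim
    filter_upwards [prod_mem_prod (Ioo_mem_nhdsGT hδ) (Ioo_mem_nhdsGT hδ)] with p hp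
    rw [dist_eq_norm]
    exact hM _ hp.2 _ hp.1
  obtain ⟨C, hC⟩ := cauchy_map_iff_exists_tendsto.1 hcauchy
  refine ⟨C, IsBigO.of_bound M ?_⟩
  filter_upwards [Ioo_mem_nhdsGT hδ] with y hy
  have hlim : Tendsto (fun x : ℝ => M * |y ^ q - x ^ q|) (𝓝[>] 0) (𝓝 (M * ‖y ^ q‖)) := by
    simpa using (h0.const_sub (y ^ q)).abs.const_mul M
  refine le_of_tendsto_of_tendsto (hC.const_sub (h y)).norm hlim ?_
  filter_upwards [Ioo_mem_nhdsGT hδ] with x hx using hM x hx y hy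

theorem hasDerivAt_pow_inv_mul (i : ℕ) {x : ℝ} (hx : x ≠ 0) :
    HasDerivAt (fun x : ℝ => x ^ i) (x⁻¹ * (i * x ^ i)) x := by
  refine (hasDerivAt_pow i x).congr_deriv ?_
  rcases i with _ | i
  · simp
  · rw [Nat.add_sub_cancel, pow_succ]
    field_simp

/-- The Euler equation `x R' = j R + r` says that `x ^ (-j) • R` has derivative
`x ^ (-j - 1) • r`. -/
theorem exists_sub_pow_smul_isBigO_rpow_of_euler [CompleteSpace E] {R r : ℝ → E} {j : ℕ}
    (hR : ∀ x, 0 < x → HasDerivAt R (x⁻¹ • ((j : ℝ) • R x + r x)) x)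
    (hr : r =O[𝓝[>] 0] fun x => x ^ q) (hq : (j : ℝ) ≠ q) :
    ∃ C, (q < j → C = 0) ∧ (fun x => R x - x ^ j • C) =O[𝓝[>] 0] fun x => x ^ q := by
  have hd : ∀ x, 0 < x →
      HasDerivAt (fun x => x ^ (-j : ℝ) • R x) (x ^ (-j - 1 : ℝ) • r x) x := by
    intro x hx
    refine ((Real.hasDerivAt_rpow_const (Or.inl hx.ne')).smul (hR x hx)).congr_deriv ?_
    rw [Real.rpow_sub_one hx.ne']
    module
  have hO : (fun x => x ^ (-j - 1 : ℝ) • r x) =O[𝓝[>] 0] fun x : ℝ => x ^ (q - j - 1) :=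
    (isBigO_rpow_smul_nhdsGT_zero hr _).congr_right fun x => by ring_nf
  have hC : ∃ C, (q < j → C = 0) ∧
      (fun x => x ^ (-j : ℝ) • R x - C) =O[𝓝[>] 0] fun x => x ^ (q - j) := by
    rcases lt_or_gt_of_ne hq with hjq | hqj
    · obtain ⟨C, hC⟩ := exists_sub_isBigO_rpow_of_deriv_isBigO_rpow (sub_pos.2 hjq) hd hO
      exact ⟨C, fun h => absurd h hjq.not_gt, hC⟩
    · exact ⟨0, fun _ => rfl, by
        simpa using isBigO_rpow_of_deriv_isBigO_rpow (sub_neg.2 hqj) hd hO⟩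
  obtain ⟨C, hC0, hC⟩ := hC
  refine ⟨C, hC0, (isBigO_rpow_smul_nhdsGT_zero hC j).congr' ?_ (by simp)⟩
  filter_upwards [self_mem_nhdsWithin] with x (hx : 0 < x)
  rw [smul_sub, smul_smul, ← Real.rpow_add hx, add_neg_cancel, Real.rpow_zero, one_smul,
    Real.rpow_natCast]

end RealPowers

section LogExpansions

variable {E : Type*} [NormedAddCommGroup E] [NormedSpace ℝ E]
  {f g : ℝ → E} {c e : ℕ → E × E} {q q' : ℝ}

/-- The sum of `x ^ i • (u + log x • v)`, where `(u, v) = c i`, over all `i < q`. -/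
noncomputable def logPartialSum (c : ℕ → E × E) (q x : ℝ) : E :=
  ∑ i ∈ Finset.range ⌈q⌉₊, x ^ i • ((c i).1 + Real.log x • (c i).2)

/-- `f` has an asymptotic expansion at `0⁺` in the functions `x ^ i` and `x ^ i log x`, with
coefficients `c i` and remainder `O(x ^ q)`. -/
def HasLogExpansionTo (f : ℝ → E) (c : ℕ → E × E) (q : ℝ) : Prop :=
  (fun x => f x - logPartialSum c q x) =O[𝓝[>] 0] fun x => x ^ q

/-- `f` has a full asymptotic expansion at `0⁺` in the functions `x ^ i` and `x ^ i log x`, with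
coefficients `c i`. Natural orders `q` are left out because `x ^ q log x` is not `O(x ^ q)`. -/
def HasLogExpansion (f : ℝ → E) (c : ℕ → E × E) : Prop :=
  ∀ q : ℝ, (∀ i : ℕ, (i : ℝ) ≠ q) → HasLogExpansionTo f c q

theorem logPartialSum_congr (h : ∀ i : ℕ, (i : ℝ) < q → c i = e i) (x : ℝ) :
    logPartialSum c q x = logPartialSum e q x :=
  Finset.sum_congr rfl fun i hi => by rw [h i (Nat.lt_ceil.1 (Finset.mem_range.1 hi))]

theorem logPartialSum_add (c e : ℕ → E × E) (q x : ℝ) :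
    logPartialSum (c + e) q x = logPartialSum c q x + logPartialSum e q x := by
  simp only [logPartialSum, ← Finset.sum_add_distrib]
  refine Finset.sum_congr rfl fun i _ => ?_
  simp only [Pi.add_apply, Prod.fst_add, Prod.snd_add]
  module

theorem logPartialSum_smul {𝕜 : Type*} [Monoid 𝕜] [DistribMulAction 𝕜 E] [SMulCommClass ℝ 𝕜 E]
    (a : 𝕜) (c : ℕ → E × E) (q x : ℝ) :
    logPartialSum (a • c) q x = a • logPartialSum c q x := by
  simp [logPartialSum, Finset.smul_sum, smul_comm _ a]

theorem HasLogExpansionTo.congr (h : HasLogExpansionTo f c q)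
    (hce : ∀ i : ℕ, (i : ℝ) < q → c i = e i) : HasLogExpansionTo f e q := by
  simpa only [HasLogExpansionTo, logPartialSum_congr hce] using h

theorem HasLogExpansionTo.add (hf : HasLogExpansionTo f c q) (hg : HasLogExpansionTo g e q) :
    HasLogExpansionTo (f + g) (c + e) q := by
  refine (IsBigO.add hf hg).congr_left fun x => ?_
  rw [logPartialSum_add, Pi.add_apply, add_sub_add_comm]

theorem HasLogExpansionTo.smul {𝕜 : Type*} [NormedField 𝕜] [NormedSpace 𝕜 E]
    [SMulCommClass ℝ 𝕜 E] (hf : HasLogExpansionTo f c q) (a : 𝕜) :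
    HasLogExpansionTo (a • f) (a • c) q := by
  refine (IsBigO.const_smul_left hf a).congr_left fun x => ?_
  rw [logPartialSum_smul, Pi.smul_apply, Pi.smul_apply, smul_sub]

theorem HasLogExpansionTo.mono (hf : HasLogExpansionTo f c q) (hqq' : q' ≤ q)
    (hq' : ∀ i : ℕ, (i : ℝ) ≠ q') : HasLogExpansionTo f c q' := by
  have hsum : ∀ x, logPartialSum c q x = logPartialSum c q' x +
      ∑ i ∈ Finset.Ico ⌈q'⌉₊ ⌈q⌉₊, x ^ i • ((c i).1 + Real.log x • (c i).2) := fun x =>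
    (Finset.sum_range_add_sum_Ico _ (Nat.ceil_mono hqq')).symm
  have htail : (fun x => ∑ i ∈ Finset.Ico ⌈q'⌉₊ ⌈q⌉₊, x ^ i • ((c i).1 + Real.log x • (c i).2))
      =O[𝓝[>] 0] fun x => x ^ q' :=
    IsBigO.fun_sum fun i hi => isBigO_pow_smul_add_log_smul _ _ <|
      (Nat.ceil_le.1 (Finset.mem_Ico.1 hi).1).lt_of_ne (hq' i).symm
  refine ((IsBigO.trans hf (isBigO_rpow_rpow_nhdsGT_zero hqq')).add htail).congr_left fun x => ?_
  rw [hsum]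
  abel

theorem HasLogExpansionTo.pow_smul (hf : HasLogExpansionTo f c q) (hq : 0 ≤ q) (k : ℕ) :
    HasLogExpansionTo (fun x => x ^ k • f x) (fun i => if k ≤ i then c (i - k) else 0)
      (k + q) := by
  have hsum : ∀ x, logPartialSum (fun i => if k ≤ i then c (i - k) else 0) (k + q) x =
      x ^ k • logPartialSum c q x := by
    intro x
    rw [logPartialSum, add_comm, Nat.ceil_add_natCast hq, add_comm, Finset.sum_range_add,
      Finset.sum_eq_zero fun i hi => by simp [(Finset.mem_range.1 hi).not_ge], zero_add,
      logPartialSum, Finset.smul_sum]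
    exact Finset.sum_congr rfl fun i _ => by simp [pow_add, mul_smul]
  refine (isBigO_rpow_smul_nhdsGT_zero hf k).congr_left fun x => ?_
  rw [hsum, Real.rpow_natCast, smul_sub]

theorem HasLogExpansionTo.eq_zero (h : HasLogExpansionTo (0 : ℝ → E) c q) (i : ℕ)
    (hi : (i : ℝ) < q) : c i = 0 := by
  induction i using Nat.strong_induction_on with
  | h i ih =>
    obtain ⟨q', hiq', hq'⟩ := exists_between (lt_min hi (lt_add_one (i : ℝ)))
    have hnat : ∀ j : ℕ, (j : ℝ) ≠ q' := by
      rintro j rfl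
      have h1 : i < j := mod_cast hiq'
      have h2 : j < i + 1 := mod_cast (lt_min_iff.1 hq').2
      omega
    have hceil : ⌈q'⌉₊ = i + 1 := (Nat.ceil_eq_iff i.succ_ne_zero).2
      ⟨by simpa using hiq', by simpa using (lt_min_iff.1 hq').2.le⟩
    have hterm :
        (fun x => x ^ i • ((c i).1 + Real.log x • (c i).2)) =O[𝓝[>] 0] fun x => x ^ q' := by
      refine (h.mono (lt_min_iff.1 hq').1.le hnat).neg_left.congr_left fun x => ?_
      rw [logPartialSum, hceil, Finset.sum_range_succ, Finset.sum_eq_zero fun j hj => ?_]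
      · simp
      · have hj := Finset.mem_range.1 hj
        simp [ih j hj ((Nat.cast_lt.2 hj).trans hi)]
    have hlim : Tendsto (fun x => (c i).1 + Real.log x • (c i).2) (𝓝[>] 0) (𝓝 0) := by
      refine ((isBigO_rpow_smul_nhdsGT_zero hterm (-i)).congr' ?_ EventuallyEq.rfl).trans_tendsto
        (tendsto_rpow_nhdsGT_zero (by linarith))
      filter_upwards [self_mem_nhdsWithin] with x (hx : 0 < x)
      rw [Real.rpow_neg hx.le, Real.rpow_natCast, inv_smul_smul₀ (pow_pos hx i).ne']
    exact Prod.ext_iff.2 (eq_zero_of_tendsto_add_log_smul hlim)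

theorem HasLogExpansionTo.unique (hc : HasLogExpansionTo f c q) (he : HasLogExpansionTo f e q)
    (i : ℕ) (hi : (i : ℝ) < q) : c i = e i := by
  have h : HasLogExpansionTo (0 : ℝ → E) (c - e) q := by
    simpa [sub_eq_add_neg] using hc.add (he.smul (-1 : ℝ))
  exact sub_eq_zero.1 (h.eq_zero i hi)

theorem HasLogExpansion.add (hf : HasLogExpansion f c) (hg : HasLogExpansion g e) :
    HasLogExpansion (f + g) (c + e) :=
  fun q hq => (hf q hq).add (hg q hq)

theorem HasLogExpansion.smul {𝕜 : Type*} [NormedField 𝕜] [NormedSpace 𝕜 E]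
    [SMulCommClass ℝ 𝕜 E] (hf : HasLogExpansion f c) (a : 𝕜) : HasLogExpansion (a • f) (a • c) :=
  fun q hq => (hf q hq).smul a

theorem natCast_ne_natCast_add_half (i j : ℕ) : (i : ℝ) ≠ j + 1 / 2 := by
  intro h
  have h' : 2 * i = 2 * j + 1 := by
    have : (2 * i : ℝ) = 2 * j + 1 := by linarith
    exact_mod_cast this
  omega

theorem HasLogExpansion.unique (hc : HasLogExpansion f c) (he : HasLogExpansion f e) : c = e :=
  funext fun i => (hc _ (natCast_ne_natCast_add_half · i)).unique
    (he _ (natCast_ne_natCast_add_half · i)) i (by linarith)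

theorem exists_hasLogExpansion {P : ℕ → E × E → Prop}
    (h : ∀ q : ℝ, (∀ i : ℕ, (i : ℝ) ≠ q) →
      ∃ c, (∀ i, P i (c i)) ∧ HasLogExpansionTo f c q) :
    ∃ c, (∀ i, P i (c i)) ∧ HasLogExpansion f c := by
  choose c hP hc using fun N : ℕ => h (N + 1 / 2) (natCast_ne_natCast_add_half · N)
  refine ⟨fun i => c i i, fun i => hP i i, fun q hq => ?_⟩
  have hqN : q ≤ ⌈q⌉₊ + 1 / 2 := (Nat.le_ceil q).trans (by linarith)
  refine ((hc ⌈q⌉₊).mono hqN hq).congr fun i hi => ?_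
  have hiN : (i : ℝ) ≤ ⌈q⌉₊ := hi.le.trans (Nat.le_ceil q)
  exact ((hc ⌈q⌉₊).mono (by linarith) (natCast_ne_natCast_add_half · i)).unique (hc i) i
    (by linarith)

theorem hasDerivAt_pow_smul_add_log_smul (u v : E) (i : ℕ) {x : ℝ} (hx : 0 < x) :
    HasDerivAt (fun x : ℝ => x ^ i • (u + Real.log x • v))
      (x⁻¹ • ((i : ℝ) • x ^ i • (u + Real.log x • v) + x ^ i • v)) x := by
  refine ((hasDerivAt_pow_inv_mul i hx.ne').smul
    (((Real.hasDerivAt_log hx.ne').smul_const v).const_add u)).congr_deriv ?_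
  module

/-- The coefficients of the solutions of `x f' = j f + g`, where `g` has the coefficients `c` and
no term `x ^ j log x`: the solutions differ by multiples `x ^ j • C`, and a term `x ^ j` of `g`
is resonant and produces a logarithm. -/
noncomputable def eulerCoeff (j : ℕ) (C : E) (c : ℕ → E × E) (i : ℕ) : E × E :=
  if i = j then (C, (c j).1)
  else ((i - j : ℝ)⁻¹ • (c i).1 - ((i - j : ℝ)⁻¹ ^ 2) • (c i).2, (i - j : ℝ)⁻¹ • (c i).2)

theorem hasDerivAt_logPartialSum_eulerCoeff {j : ℕ} (hc : (c j).2 = 0) (q : ℝ) {x : ℝ}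
    (hx : 0 < x) :
    HasDerivAt (logPartialSum (eulerCoeff j 0 c) q)
      (x⁻¹ • ((j : ℝ) • logPartialSum (eulerCoeff j 0 c) q x + logPartialSum c q x)) x := by
  refine (HasDerivAt.fun_sum fun i _ =>
    hasDerivAt_pow_smul_add_log_smul _ _ i hx).congr_deriv ?_
  simp only [logPartialSum, Finset.smul_sum, ← Finset.sum_add_distrib]
  refine Finset.sum_congr rfl fun i _ => ?_
  rcases eq_or_ne i j with rfl | hij
  · simp [eulerCoeff, hc]
  · have hij' : (i - j : ℝ) ≠ 0 := sub_ne_zero.2 (Nat.cast_injective.ne hij)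
    simp only [eulerCoeff, if_neg hij]
    match_scalars <;> field_simp <;> ring

theorem logPartialSum_eulerCoeff (j : ℕ) (C : E) (c : ℕ → E × E) (q x : ℝ) :
    logPartialSum (eulerCoeff j C c) q x =
      logPartialSum (eulerCoeff j 0 c) q x + if (j : ℝ) < q then x ^ j • C else 0 := by
  have hterm : ∀ i, x ^ i • ((eulerCoeff j C c i).1 + Real.log x • (eulerCoeff j C c i).2) =
      x ^ i • ((eulerCoeff j 0 c i).1 + Real.log x • (eulerCoeff j 0 c i).2) +
        if i = j then x ^ j • C else 0 := by
    intro i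
    rcases eq_or_ne i j with rfl | hij
    · simp only [eulerCoeff, if_true]
      module
    · simp [eulerCoeff, hij]
  simp only [logPartialSum, hterm, Finset.sum_add_distrib, Finset.sum_ite_eq', Finset.mem_range,
    Nat.lt_ceil]

theorem HasLogExpansionTo.exists_of_euler [CompleteSpace E] {j : ℕ}
    (hg : HasLogExpansionTo g c q) (hc : (c j).2 = 0) (hq : (j : ℝ) ≠ q)
    (hf : ∀ x, 0 < x → HasDerivAt f (x⁻¹ • ((j : ℝ) • f x + g x)) x) :
    ∃ C, HasLogExpansionTo f (eulerCoeff j C c) q := by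
  obtain ⟨C, hC0, hC⟩ := exists_sub_pow_smul_isBigO_rpow_of_euler
    (R := fun x => f x - logPartialSum (eulerCoeff j 0 c) q x)
    (fun x hx => ((hf x hx).sub (hasDerivAt_logPartialSum_eulerCoeff hc q hx)).congr_deriv
      (by module)) hg hq
  refine ⟨C, hC.congr_left fun x => ?_⟩
  rw [logPartialSum_eulerCoeff j C, sub_add_eq_sub_sub]
  split_ifs with hjq
  · rfl
  · rw [hC0 (lt_of_le_of_ne' (not_lt.1 hjq) hq), smul_zero]

end LogExpansions

section HalfPlane

variable {E : Type*} [NormedAddCommGroup E] [NormedSpace ℝ E] {b b' : ℝ × ℝ × ℝ → E}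

/-- The half plane `y > 0` of points `(y, z)`. -/
def halfPlane : Set (ℝ × ℝ) := Set.Ioi 0 ×ˢ Set.univ

theorem measurableSet_halfPlane : MeasurableSet halfPlane := measurableSet_Ioi.prod .univ

/-- The integral of `y ^ m • b (Ψ (y, z))` over the half plane. -/
noncomputable def halfPlaneIntegral (m : ℕ) (b : ℝ × ℝ × ℝ → E) (Ψ : ℝ × ℝ → ℝ × ℝ × ℝ) : E :=
  ∫ p in halfPlane, p.1 ^ m • b (Ψ p)

/-- A continuous map on the half plane which is linearly coercive, with rate `δ` in `y`. It pulls
compactly supported functions back to functions with bounded support. -/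
structure IsHalfPlaneCoercive (δ : ℝ) (Ψ : ℝ × ℝ → ℝ × ℝ × ℝ) : Prop where
  continuousOn : ContinuousOn Ψ halfPlane
  mul_fst_le : ∀ p ∈ halfPlane, δ * p.1 ≤ ‖Ψ p‖
  abs_snd_le : ∀ p ∈ halfPlane, |p.2| ≤ ‖Ψ p‖

theorem IsHalfPlaneCoercive.mono {δ δ' : ℝ} {Ψ : ℝ × ℝ → ℝ × ℝ × ℝ}
    (h : IsHalfPlaneCoercive δ Ψ) (hδ : δ' ≤ δ) :
    IsHalfPlaneCoercive δ' Ψ where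
  continuousOn := h.continuousOn
  mul_fst_le p hp := (mul_le_mul_of_nonneg_right hδ (le_of_lt hp.1)).trans (h.mul_fst_le p hp)
  abs_snd_le := h.abs_snd_le

theorem exists_integrableOn_bound (m : ℕ) (hb : Continuous b) (hc : HasCompactSupport b)
    {δ : ℝ} (hδ : 0 < δ) :
    ∃ G : ℝ × ℝ → ℝ, IntegrableOn G halfPlane ∧
      ∀ Ψ, IsHalfPlaneCoercive δ Ψ → ∀ p ∈ halfPlane, ‖p.1 ^ m • b (Ψ p)‖ ≤ G p := by
  obtain ⟨M, hM⟩ := hc.exists_bound_of_continuous hb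
  obtain ⟨R, hR⟩ := hc.isCompact.isBounded.exists_norm_le
  have hM0 : 0 ≤ M := (norm_nonneg _).trans (hM 0)
  set K : Set (ℝ × ℝ) := Set.Icc 0 (R / δ) ×ˢ Set.Icc (-R) R
  refine ⟨K.indicator fun p => |p.1| ^ m * M, ?_, fun Ψ hΨ p hp => ?_⟩
  · refine Integrable.integrableOn ((integrable_indicator_iff
      (measurableSet_Icc.prod measurableSet_Icc)).2 ?_)
    exact ContinuousOn.integrableOn_compact (isCompact_Icc.prod isCompact_Icc) (by fun_prop)
  · by_cases h0 : b (Ψ p) = 0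
    · rw [h0, smul_zero, norm_zero]
      exact Set.indicator_nonneg (fun _ _ => by positivity) _
    · have hΨR : ‖Ψ p‖ ≤ R := hR _ (subset_tsupport _ h0)
      have hpK : p ∈ K := ⟨⟨le_of_lt hp.1,
        (le_div_iff₀' hδ).2 ((hΨ.mul_fst_le p hp).trans hΨR)⟩,
        abs_le.1 ((hΨ.abs_snd_le p hp).trans hΨR)⟩
      rw [Set.indicator_of_mem hpK, norm_smul, norm_pow, Real.norm_eq_abs]
      gcongr
      exact hM _

variable {m m' : ℕ} {δ : ℝ}

theorem IsHalfPlaneCoercive.aestronglyMeasurable {Ψ : ℝ × ℝ → ℝ × ℝ × ℝ}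
    (hΨ : IsHalfPlaneCoercive δ Ψ) (hb : Continuous b) (m : ℕ) :
    AEStronglyMeasurable (fun p => p.1 ^ m • b (Ψ p)) (volume.restrict halfPlane) :=
  ContinuousOn.aestronglyMeasurable
    ((by fun_prop : Continuous fun p : ℝ × ℝ => p.1 ^ m).continuousOn.smul
      (hb.comp_continuousOn hΨ.continuousOn)) measurableSet_halfPlane

theorem IsHalfPlaneCoercive.integrableOn {Ψ : ℝ × ℝ → ℝ × ℝ × ℝ}
    (hΨ : IsHalfPlaneCoercive δ Ψ) (hδ : 0 < δ) (hb : Continuous b)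
    (hc : HasCompactSupport b) (m : ℕ) :
    IntegrableOn (fun p => p.1 ^ m • b (Ψ p)) halfPlane := by
  obtain ⟨G, hG, hbound⟩ := exists_integrableOn_bound m hb hc hδ
  exact hG.mono' (hΨ.aestronglyMeasurable hb m)
    (ae_restrict_of_forall_mem measurableSet_halfPlane (hbound Ψ hΨ))

theorem IsHalfPlaneCoercive.halfPlaneIntegral_eq {Ψ : ℝ × ℝ → ℝ × ℝ × ℝ}
    (hΨ : IsHalfPlaneCoercive δ Ψ) (hδ : 0 < δ) (hb : Continuous b)
    (hc : HasCompactSupport b) (m : ℕ) :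
    halfPlaneIntegral m b Ψ = ∫ y in Set.Ioi (0 : ℝ), y ^ m • ∫ z : ℝ, b (Ψ (y, z)) := by
  have h := setIntegral_prod (μ := (volume : Measure ℝ)) (ν := (volume : Measure ℝ))
    (s := Set.Ioi 0) (t := Set.univ) _ (hΨ.integrableOn hδ hb hc m)
  simp only [Measure.restrict_univ, integral_smul] at h
  exact h

theorem exists_norm_halfPlaneIntegral_le (m : ℕ) (hb : Continuous b) (hc : HasCompactSupport b)
    (hδ : 0 < δ) : ∃ C, ∀ Ψ, IsHalfPlaneCoercive δ Ψ → ‖halfPlaneIntegral m b Ψ‖ ≤ C := by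
  obtain ⟨G, hG, hbound⟩ := exists_integrableOn_bound m hb hc hδ
  exact ⟨_, fun Ψ hΨ => norm_integral_le_of_norm_le hG
    (ae_restrict_of_forall_mem measurableSet_halfPlane (hbound Ψ hΨ))⟩

theorem hasDerivAt_halfPlaneIntegral (hb : Continuous b) (hc : HasCompactSupport b)
    (hb' : Continuous b') (hc' : HasCompactSupport b') (hδ : 0 < δ)
    {Ψ : ℝ → ℝ × ℝ → ℝ × ℝ × ℝ} {s : Set ℝ} {x : ℝ} (hs : s ∈ 𝓝 x)
    (hΨ : ∀ t ∈ s, IsHalfPlaneCoercive δ (Ψ t))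
    (hd : ∀ p ∈ halfPlane, ∀ t ∈ s,
      HasDerivAt (fun t => p.1 ^ m • b (Ψ t p)) (p.1 ^ m' • b' (Ψ t p)) t) :
    HasDerivAt (fun t => halfPlaneIntegral m b (Ψ t)) (halfPlaneIntegral m' b' (Ψ x)) x := by
  obtain ⟨G, hG, hbound⟩ := exists_integrableOn_bound m' hb' hc' hδ
  have hx := hΨ x (mem_of_mem_nhds hs)
  exact (hasDerivAt_integral_of_dominated_loc_of_deriv_le (bound := G) hs
    (eventually_of_mem hs fun t ht => (hΨ t ht).aestronglyMeasurable hb m)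
    (hx.integrableOn hδ hb hc m) (hx.aestronglyMeasurable hb' m')
    (ae_restrict_of_forall_mem measurableSet_halfPlane fun p hp t ht => hbound _ (hΨ t ht) p hp)
    hG (ae_restrict_of_forall_mem measurableSet_halfPlane hd)).2

end HalfPlane

section OscillatoryIntegral

variable {E : Type*} [NormedAddCommGroup E] [NormedSpace ℝ E] {b : ℝ × ℝ × ℝ → E}
  {k m : ℕ} {x : ℝ}

/-- The integral `∫_0^∞ y ^ m (∫_ℝ b (μ y ^ k z, y, z) dz) dy`. -/
noncomputable def oscIntegral (k m : ℕ) (b : ℝ × ℝ × ℝ → E) (μ : ℝ) : E :=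
  ∫ y in Set.Ioi (0 : ℝ), y ^ m • ∫ z : ℝ, b (μ * y ^ k * z, y, z)

/-- The map into the arguments of `b` after the substitution `y = ε s` in `oscIntegral`, where
`μ = ε ^ (-k)`. -/
def dilation (k : ℕ) (ε : ℝ) (p : ℝ × ℝ) : ℝ × ℝ × ℝ := (p.1 ^ k * p.2, ε * p.1, p.2)

/-- The map into the arguments of `b` after the substitution `t = μ y ^ k z` in `oscIntegral`,
where `μ = η⁻¹`. -/
noncomputable def blowUp (k : ℕ) (η : ℝ) (p : ℝ × ℝ) : ℝ × ℝ × ℝ :=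
  (p.2, p.1, η * (p.2 / p.1 ^ k))

theorem isHalfPlaneCoercive_dilation (k : ℕ) (ε : ℝ) : IsHalfPlaneCoercive ε (dilation k ε) where
  continuousOn := by unfold dilation; fun_prop
  mul_fst_le p _ := (le_abs_self _).trans
    ((norm_fst_le (dilation k ε p).2).trans (norm_snd_le (dilation k ε p)))
  abs_snd_le p _ := (norm_snd_le (dilation k ε p).2).trans (norm_snd_le (dilation k ε p))

theorem isHalfPlaneCoercive_blowUp (k : ℕ) (η : ℝ) : IsHalfPlaneCoercive 1 (blowUp k η) where
  continuousOn p hp := by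
    have hp' : p.1 ^ k ≠ 0 := pow_ne_zero _ (ne_of_gt hp.1)
    unfold blowUp
    exact ContinuousAt.continuousWithinAt (by fun_prop (disch := exact hp'))
  mul_fst_le p _ := (one_mul p.1).trans_le <| (le_abs_self _).trans
    ((norm_fst_le (blowUp k η p).2).trans (norm_snd_le (blowUp k η p)))
  abs_snd_le p _ := norm_fst_le (blowUp k η p)

theorem oscIntegral_eq_dilation (k m : ℕ) (hb : Continuous b) (hc : HasCompactSupport b)
    {ε : ℝ} (hε : 0 < ε) :
    oscIntegral k m b (ε ^ k)⁻¹ = ε ^ (m + 1) • halfPlaneIntegral m b (dilation k ε) := by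
  have hsubst := integral_comp_mul_left_Ioi
    (fun y : ℝ => y ^ m • ∫ z : ℝ, b ((ε ^ k)⁻¹ * y ^ k * z, y, z)) 0 hε
  rw [mul_zero, eq_inv_smul_iff₀ hε.ne'] at hsubst
  rw [(isHalfPlaneCoercive_dilation k ε).halfPlaneIntegral_eq hε hb hc, oscIntegral, ← hsubst,
    pow_succ', mul_smul, ← integral_smul (ε ^ m)]
  simp only [mul_pow ε, mul_smul, inv_mul_cancel_left₀ (pow_pos hε k).ne', dilation]

theorem oscIntegral_eq_blowUp (k m : ℕ) (hb : Continuous b) (hc : HasCompactSupport b)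
    {ε : ℝ} (hε : 0 < ε) :
    oscIntegral k (k + m) b (ε ^ k)⁻¹ = ε ^ k • halfPlaneIntegral m b (blowUp k (ε ^ k)) := by
  rw [(isHalfPlaneCoercive_blowUp k _).halfPlaneIntegral_eq one_pos hb hc, oscIntegral,
    ← integral_smul]
  refine setIntegral_congr_fun measurableSet_Ioi fun y (hy : 0 < y) => ?_
  have hsubst := Measure.integral_comp_mul_left (fun t : ℝ => b (t, y, ε ^ k * (t / y ^ k)))
    ((ε ^ k)⁻¹ * y ^ k)
  have hz : ∀ z : ℝ, ε ^ k * ((ε ^ k)⁻¹ * y ^ k * z / y ^ k) = z := fun z => by field_simp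
  simp only [hz] at hsubst
  simp only [blowUp, hsubst, smul_smul]
  rw [abs_of_pos (by positivity), pow_add]
  congr 1
  field_simp

theorem hasDerivAt_halfPlaneIntegral_dilation (k m : ℕ) (hb : ContDiff ℝ 1 b)
    (hc : HasCompactSupport b) (hx : 0 < x) :
    HasDerivAt (fun ε => halfPlaneIntegral m b (dilation k ε))
      (halfPlaneIntegral (m + 1) (fun q => fderiv ℝ b q (0, 1, 0)) (dilation k x)) x := by
  refine hasDerivAt_halfPlaneIntegral hb.continuous hc
    ((hb.continuous_fderiv one_ne_zero).clm_apply continuous_const) (hc.fderiv_apply ℝ _)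
    (half_pos hx) (Ioi_mem_nhds (half_lt_self hx))
    (fun t ht => (isHalfPlaneCoercive_dilation k t).mono (le_of_lt ht)) fun p _ t _ => ?_
  have hd : HasDerivAt (fun t => dilation k t p) (p.1 • (0, 1, 0)) t := by
    simpa [dilation] using (hasDerivAt_const t (p.1 ^ k * p.2)).prodMk
      (((hasDerivAt_id t).mul_const p.1).prodMk (hasDerivAt_const t p.2))
  refine (((hb.differentiable one_ne_zero _).hasFDerivAt.comp_hasDerivAt t hd).const_smul
    (p.1 ^ m)).congr_deriv ?_
  rw [map_smul, smul_smul, pow_succ]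

theorem hasDerivAt_halfPlaneIntegral_blowUp (k m : ℕ) (hb : ContDiff ℝ 1 b)
    (hc : HasCompactSupport b) (η : ℝ) :
    HasDerivAt (fun η => halfPlaneIntegral (k + m) b (blowUp k η))
      (halfPlaneIntegral m (fun q => q.1 • fderiv ℝ b q (0, 0, 1)) (blowUp k η)) η := by
  have hb' : Continuous fun q : ℝ × ℝ × ℝ => q.1 • fderiv ℝ b q (0, 0, 1) :=
    continuous_fst.smul ((hb.continuous_fderiv one_ne_zero).clm_apply continuous_const)
  refine hasDerivAt_halfPlaneIntegral hb.continuous hc hb' (hc.fderiv_apply ℝ _).smul_left one_pos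
    univ_mem (fun t _ => isHalfPlaneCoercive_blowUp k t) fun p hp t _ => ?_
  have hd : HasDerivAt (fun t => blowUp k t p) ((p.2 / p.1 ^ k) • (0, 0, 1)) t := by
    simpa [blowUp] using (hasDerivAt_const t p.2).prodMk
      ((hasDerivAt_const t p.1).prodMk ((hasDerivAt_id t).mul_const (p.2 / p.1 ^ k)))
  refine (((hb.differentiable one_ne_zero _).hasFDerivAt.comp_hasDerivAt t hd).const_smul
    (p.1 ^ (k + m))).congr_deriv ?_
  have hp1 : p.1 ≠ 0 := ne_of_gt hp.1
  rw [map_smul, smul_smul, smul_smul, pow_add, blowUp]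
  congr 1
  field_simp

theorem hasDerivAt_oscIntegral_dilation (k m : ℕ) (hb : ContDiff ℝ 1 b)
    (hc : HasCompactSupport b) (hx : 0 < x) :
    HasDerivAt (fun ε => oscIntegral k m b (ε ^ k)⁻¹)
      (x⁻¹ • (((m + 1 : ℕ) : ℝ) • oscIntegral k m b (x ^ k)⁻¹ +
        oscIntegral k (m + 1) (fun q => fderiv ℝ b q (0, 1, 0)) (x ^ k)⁻¹)) x := by
  have hb' := (hb.continuous_fderiv one_ne_zero).clm_apply (continuous_const (y := (0, 1, 0)))
  have heq : (fun ε => oscIntegral k m b (ε ^ k)⁻¹) =ᶠ[𝓝 x]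
      fun ε => ε ^ (m + 1) • halfPlaneIntegral m b (dilation k ε) :=
    eventually_of_mem (Ioi_mem_nhds hx) fun ε hε => oscIntegral_eq_dilation k m hb.continuous hc hε
  refine HasDerivAt.congr_of_eventuallyEq (((hasDerivAt_pow_inv_mul (m + 1) hx.ne').smul
    (hasDerivAt_halfPlaneIntegral_dilation k m hb hc hx)).congr_deriv ?_) heq
  rw [oscIntegral_eq_dilation k m hb.continuous hc hx,
    oscIntegral_eq_dilation k (m + 1) hb' (hc.fderiv_apply ℝ _) hx]
  match_scalars <;> field

theorem hasDerivAt_oscIntegral_blowUp (k m : ℕ) (hb : ContDiff ℝ 1 b)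
    (hc : HasCompactSupport b) (hx : 0 < x) :
    HasDerivAt (fun ε => oscIntegral k (k + (k + m)) b (ε ^ k)⁻¹)
      (x⁻¹ • ((k : ℝ) • oscIntegral k (k + (k + m)) b (x ^ k)⁻¹ + (k : ℝ) • x ^ k •
        oscIntegral k (k + m) (fun q => q.1 • fderiv ℝ b q (0, 0, 1)) (x ^ k)⁻¹)) x := by
  have hb' : Continuous fun q : ℝ × ℝ × ℝ => q.1 • fderiv ℝ b q (0, 0, 1) :=
    continuous_fst.smul ((hb.continuous_fderiv one_ne_zero).clm_apply continuous_const)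
  have heq : (fun ε => oscIntegral k (k + (k + m)) b (ε ^ k)⁻¹) =ᶠ[𝓝 x]
      fun ε => ε ^ k • halfPlaneIntegral (k + m) b (blowUp k (ε ^ k)) :=
    eventually_of_mem (Ioi_mem_nhds hx) fun ε hε =>
      oscIntegral_eq_blowUp k (k + m) hb.continuous hc hε
  have hpow := hasDerivAt_pow_inv_mul k hx.ne'
  have hJ : HasDerivAt (fun ε => halfPlaneIntegral (k + m) b (blowUp k (ε ^ k)))
      ((x⁻¹ * (k * x ^ k)) •
        halfPlaneIntegral m (fun q => q.1 • fderiv ℝ b q (0, 0, 1)) (blowUp k (x ^ k))) x :=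
    (hasDerivAt_halfPlaneIntegral_blowUp k m hb hc (x ^ k)).scomp x hpow
  refine HasDerivAt.congr_of_eventuallyEq ((hpow.smul hJ).congr_deriv ?_) heq
  rw [oscIntegral_eq_blowUp k (k + m) hb.continuous hc hx,
    oscIntegral_eq_blowUp k m hb' (hc.fderiv_apply ℝ _).smul_left hx]
  module

theorem isBigO_oscIntegral (k m : ℕ) (hb : Continuous b) (hc : HasCompactSupport b) :
    (fun ε => oscIntegral k (k + m) b (ε ^ k)⁻¹) =O[𝓝[>] 0] fun x : ℝ => x ^ (k : ℝ) := by
  obtain ⟨C, hC⟩ := exists_norm_halfPlaneIntegral_le m hb hc one_pos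
  refine IsBigO.of_bound C ?_
  filter_upwards [self_mem_nhdsWithin] with x (hx : 0 < x)
  rw [oscIntegral_eq_blowUp k m hb hc hx, norm_smul, Real.rpow_natCast, mul_comm]
  exact mul_le_mul_of_nonneg_right (hC _ (isHalfPlaneCoercive_blowUp k _)) (norm_nonneg _)

end OscillatoryIntegral

section OscillatoryCoefficients

/-- The coefficients that may occur at order `i` in the expansion of
`ε ↦ oscIntegral k m b (ε ^ k)⁻¹`: powers `ε ^ i` where `i` is a positive multiple of `k` or
exceeds `m`, and logarithmic terms where both hold. -/
def IsOscCoeff {E : Type*} [Zero E] (k m i : ℕ) (v : E × E) : Prop :=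
  (v.1 ≠ 0 → 0 < i ∧ k ∣ i ∨ m < i) ∧ (v.2 ≠ 0 → k ∣ i ∧ m < i)

theorem IsOscCoeff.eq_zero {E : Type*} [Zero E] {k m i : ℕ} {v : E × E}
    (hv : IsOscCoeff k m i v) (hi : i < min k (m + 1)) : v = 0 := by
  have him : ¬ m < i := by lia
  refine Prod.ext_iff.2 ⟨by_contra fun h => ?_, by_contra fun h => him (hv.2 h).2⟩
  obtain ⟨h0, hdvd⟩ := (hv.1 h).resolve_right him
  exact (Nat.le_of_dvd h0 hdvd).not_gt (lt_min_iff.1 hi).1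

theorem isOscCoeff_eulerCoeff {E : Type*} [NormedAddCommGroup E] [NormedSpace ℝ E] {k m : ℕ}
    {c : ℕ → E × E} (hc : ∀ i, IsOscCoeff k (m + 1) i (c i)) (C : E) (i : ℕ) :
    IsOscCoeff k m i (eulerCoeff (m + 1) C c i) := by
  obtain ⟨hpow, hlog⟩ := hc i
  rcases eq_or_ne i (m + 1) with rfl | him
  · refine ⟨fun _ => Or.inr m.lt_succ_self, fun h => ⟨?_, m.lt_succ_self⟩⟩
    simp only [eulerCoeff, if_true] at h
    exact ((hpow h).resolve_right (lt_irrefl _)).2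
  · simp only [eulerCoeff, if_neg him]
    refine ⟨fun h => ?_, fun h => (hlog (right_ne_zero_of_smul h)).imp_right (by lia)⟩
    by_cases h2 : (c i).2 = 0
    · rw [h2, smul_zero, sub_zero] at h
      exact (hpow (right_ne_zero_of_smul h)).imp_right (by lia)
    · exact Or.inr (by have := (hlog h2).2; lia)

end OscillatoryCoefficients

section Existence

variable {E : Type*} [NormedAddCommGroup E] [NormedSpace ℝ E] [CompleteSpace E]
  {b : ℝ × ℝ × ℝ → E} {k m : ℕ}

theorem exists_hasLogExpansionTo_oscIntegral_of_mul_le (hk : 0 < k) {L : ℕ} (hm : k * L ≤ m)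
    (hb : ContDiff ℝ (⊤ : ℕ∞) b) (hc : HasCompactSupport b) :
    ∃ c : ℕ → E × E, (∀ i, (c i).2 = 0 ∧ ((c i).1 ≠ 0 → 0 < i ∧ k ∣ i)) ∧
      HasLogExpansionTo (fun ε => oscIntegral k (k + m) b (ε ^ k)⁻¹) c (k * (L + 1 : ℕ)) := by
  induction L generalizing m b with
  | zero =>
    refine ⟨0, by simp, (isBigO_oscIntegral k m hb.continuous hc).congr (fun x => ?_) (by simp)⟩
    simp [logPartialSum]
  | succ L ih =>
    obtain ⟨m, rfl⟩ := Nat.exists_eq_add_of_le ((Nat.le_mul_of_pos_right k L.succ_pos).trans hm)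
    obtain ⟨c, hcoeff, hexp⟩ := ih (m := m) (by rw [mul_add_one] at hm; lia)
      (contDiff_fst.smul ((hb.fderiv_right le_rfl).clm_apply (contDiff_const (c := (0, 0, 1)))))
      (hc.fderiv_apply ℝ (0, 0, 1)).smul_left
    have hk' : (0 : ℝ) < k := Nat.cast_pos.2 hk
    obtain ⟨C, hC⟩ := ((hexp.pow_smul (by positivity) k).smul (k : ℝ)).exists_of_euler (j := k)
      (by simp [(hcoeff _).1]) (ne_of_lt (lt_add_of_pos_right _ (by positivity)))
      fun x hx => hasDerivAt_oscIntegral_blowUp k m (hb.of_le (mod_cast le_top)) hc hx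
    have hq : (k : ℝ) * (L + 1 + 1 : ℕ) = k + k * (L + 1 : ℕ) := by push_cast; ring
    refine ⟨_, fun i => ?_, hq ▸ hC⟩
    rcases eq_or_ne i k with rfl | hik
    · have hc0 : (c 0).1 = 0 := by
        by_contra h
        exact ((hcoeff 0).2 h).1.false
      simp [eulerCoeff, hc0, hk]
    · rcases lt_or_ge i k with hlt | hle
      · simp [eulerCoeff, hik, hlt.not_ge]
      · obtain ⟨l, rfl⟩ := Nat.exists_eq_add_of_le hle
        have hl0 : l ≠ 0 := by simpa using hik
        have hl : (c l).1 ≠ 0 → k ∣ l := fun h => ((hcoeff l).2 h).2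
        simp +contextual [eulerCoeff, (hcoeff l).1, hk, hl, hl0]

theorem exists_hasLogExpansionTo_oscIntegral (hk : 0 < k) {q : ℝ} (hq : ∀ i : ℕ, (i : ℝ) ≠ q)
    (m : ℕ) (hb : ContDiff ℝ (⊤ : ℕ∞) b) (hc : HasCompactSupport b) :
    ∃ c : ℕ → E × E, (∀ i, IsOscCoeff k m i (c i)) ∧
      HasLogExpansionTo (fun ε => oscIntegral k m b (ε ^ k)⁻¹) c q := by
  obtain ⟨r, hr⟩ : ∃ r, k + k * ⌈q⌉₊ ≤ m + r := ⟨_, Nat.le_add_left _ _⟩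
  induction r generalizing m b with
  | zero =>
    obtain ⟨m, rfl⟩ := Nat.exists_eq_add_of_le ((Nat.le_add_right _ _).trans hr)
    obtain ⟨c, hcoeff, hexp⟩ := exists_hasLogExpansionTo_oscIntegral_of_mul_le hk
      (by lia : k * ⌈q⌉₊ ≤ m) hb hc
    refine ⟨c, fun i => ⟨fun h => Or.inl ((hcoeff i).2 h), fun h => absurd (hcoeff i).1 h⟩,
      hexp.mono ((Nat.le_ceil q).trans ?_) hq⟩
    exact_mod_cast (Nat.le_succ _).trans (Nat.le_mul_of_pos_left _ hk)
  | succ r ih =>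
    obtain ⟨c, hcoeff, hexp⟩ := ih (m + 1)
      ((hb.fderiv_right le_rfl).clm_apply (contDiff_const (c := (0, 1, 0))))
      (hc.fderiv_apply ℝ (0, 1, 0)) (by lia)
    have hres : (c (m + 1)).2 = 0 := by
      by_contra h
      exact ((hcoeff _).2 h).2.false
    obtain ⟨C, hC⟩ := hexp.exists_of_euler hres (hq _) fun x hx =>
      hasDerivAt_oscIntegral_dilation k m (hb.of_le (mod_cast le_top)) hc hx
    exact ⟨_, isOscCoeff_eulerCoeff hcoeff C, hC⟩

theorem exists_hasLogExpansion_oscIntegral (hk : 0 < k) (m : ℕ) (hb : ContDiff ℝ (⊤ : ℕ∞) b)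
    (hc : HasCompactSupport b) :
    ∃ c : ℕ → E × E, (∀ i, IsOscCoeff k m i (c i)) ∧
      HasLogExpansion (fun ε => oscIntegral k m b (ε ^ k)⁻¹) c :=
  exists_hasLogExpansion fun _ hq => exists_hasLogExpansionTo_oscIntegral hk hq m hb hc

end Existence

section LinearCoefficients

variable {𝕜 E : Type*} [NormedField 𝕜] [NormedAddCommGroup E] [NormedSpace ℝ E] [NormedSpace 𝕜 E]
  [SMulCommClass ℝ 𝕜 E] {b b' : ℝ × ℝ × ℝ → E} {k : ℕ}

theorem oscIntegral_add (hb : Continuous b) (hc : HasCompactSupport b) (hb' : Continuous b')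
    (hc' : HasCompactSupport b') (k m : ℕ) (μ : ℝ) :
    oscIntegral k m (b + b') μ = oscIntegral k m b μ + oscIntegral k m b' μ := by
  have hΨ : IsHalfPlaneCoercive 1 fun p : ℝ × ℝ => (μ * p.1 ^ k * p.2, p.1, p.2) :=
    { continuousOn := by fun_prop
      mul_fst_le := fun p _ => (one_mul p.1).trans_le <| (le_abs_self _).trans
        ((norm_fst_le p).trans (norm_snd_le (μ * p.1 ^ k * p.2, p)))
      abs_snd_le := fun p _ => (norm_snd_le p).trans (norm_snd_le (μ * p.1 ^ k * p.2, p)) }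
  simp only [oscIntegral]
  rw [← hΨ.halfPlaneIntegral_eq one_pos hb hc, ← hΨ.halfPlaneIntegral_eq one_pos hb' hc',
    ← hΨ.halfPlaneIntegral_eq one_pos (hb.add hb') (hc.add hc'), halfPlaneIntegral,
    halfPlaneIntegral, halfPlaneIntegral,
    ← integral_add (hΨ.integrableOn one_pos hb hc m) (hΨ.integrableOn one_pos hb' hc' m)]
  simp only [Pi.add_apply, smul_add]

theorem oscIntegral_smul (k m : ℕ) (a : 𝕜) (b : ℝ × ℝ × ℝ → E) (μ : ℝ) :
    oscIntegral k m (a • b) μ = a • oscIntegral k m b μ := by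
  simp only [oscIntegral, Pi.smul_apply, integral_smul, smul_comm _ a]

/-- The smooth compactly supported functions from `V` to `E`, as a subspace of all functions. -/
def testFunctions (𝕜 V E : Type*) [NormedField 𝕜] [NormedAddCommGroup V] [NormedSpace ℝ V]
    [NormedAddCommGroup E] [NormedSpace ℝ E] [NormedSpace 𝕜 E] [SMulCommClass ℝ 𝕜 E] :
    Submodule 𝕜 (V → E) where
  carrier := {b | ContDiff ℝ (⊤ : ℕ∞) b ∧ HasCompactSupport b}
  add_mem' hb hb' := ⟨hb.1.add hb'.1, hb.2.add hb'.2⟩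
  zero_mem' := ⟨contDiff_const, HasCompactSupport.zero⟩
  smul_mem' a _ hb := ⟨hb.1.const_smul a, hb.2.smul_left⟩

variable (𝕜 E)

/-- Uniqueness of expansions makes the coefficients linear on test functions; a linear projection
onto the test functions extends them to all functions. -/
theorem exists_linearMap_hasLogExpansion_oscIntegral [CompleteSpace E] (hk : 0 < k) (m : ℕ) :
    ∃ T : (ℝ × ℝ × ℝ → E) →ₗ[𝕜] ℕ → E × E, (∀ b i, IsOscCoeff k m i (T b i)) ∧
      ∀ b, ContDiff ℝ (⊤ : ℕ∞) b → HasCompactSupport b →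
        HasLogExpansion (fun ε => oscIntegral k m b (ε ^ k)⁻¹) (T b) := by
  choose c hcoeff hexp using fun b : testFunctions 𝕜 (ℝ × ℝ × ℝ) E =>
    exists_hasLogExpansion_oscIntegral hk m b.2.1 b.2.2
  have hadd : ∀ b b', c (b + b') = c b + c b' := fun b b' => by
    refine (hexp (b + b')).unique ?_
    convert (hexp b).add (hexp b') using 2 with ε
    exact oscIntegral_add b.2.1.continuous b.2.2 b'.2.1.continuous b'.2.2 k m _
  have hsmul : ∀ (a : 𝕜) b, c (a • b) = a • c b := fun a b => by
    refine (hexp (a • b)).unique ?_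
    convert (hexp b).smul a using 2 with ε
    exact oscIntegral_smul k m a b.1 _
  obtain ⟨P, hP⟩ := (testFunctions 𝕜 (ℝ × ℝ × ℝ) E).subtype.exists_leftInverse_of_injective
    (Submodule.ker_subtype _)
  refine ⟨{ toFun := c, map_add' := hadd, map_smul' := hsmul } ∘ₗ P, fun b => hcoeff (P b),
    fun b hb hc => ?_⟩
  have hPb : P b = ⟨b, hb, hc⟩ := LinearMap.congr_fun hP (⟨b, hb, hc⟩ : testFunctions 𝕜 _ E)
  simpa [hPb] using hexp ⟨b, hb, hc⟩

end LinearCoefficients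

section AtTop

variable {E : Type*} [NormedAddCommGroup E] [NormedSpace ℝ E] {c : ℕ → E × E} {k : ℕ} {d : ℝ}

/-- The coefficients of `lam ^ (-j / k) * log lam ^ p`, for `p ∈ {0, 1}`, in the expansion at
infinity which the substitution `ε = lam ^ (-1 / k)` makes of an expansion at `0⁺` with
coefficients `c`. -/
noncomputable def atTopCoeff (𝕜 E : Type*) [NormedField 𝕜] [NormedAddCommGroup E] [NormedSpace ℝ E]
    [NormedSpace 𝕜 E] [SMulCommClass ℝ 𝕜 E] (k : ℕ) : (ℕ → E × E) →ₗ[𝕜] ℕ → ℕ → E where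
  toFun c j p := if p = 0 then (c j).1 else -(k : ℝ)⁻¹ • (c j).2
  map_add' c e := by
    ext j p
    simp only [Pi.add_apply, Prod.fst_add, Prod.snd_add, smul_add]
    split_ifs <;> rfl
  map_smul' s c := by
    ext j p
    simp only [Pi.smul_apply, Prod.smul_fst, Prod.smul_snd, smul_comm _ s, RingHom.id_apply]
    split_ifs <;> rfl

theorem HasLogExpansionTo.isBigO_atTop (𝕜 : Type*) [NormedField 𝕜] [NormedSpace 𝕜 E]
    [SMulCommClass ℝ 𝕜 E] {I : ℝ → E} (hk : 0 < k)
    (hI : HasLogExpansionTo (fun ε => I (ε ^ k)⁻¹) c (d * k)) :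
    (fun lam : ℝ => I lam - ∑ j ∈ Finset.range ⌈d * k⌉₊, ∑ p ∈ Finset.range 2,
      (lam ^ (-(j : ℝ) / k) * Real.log lam ^ p) • atTopCoeff 𝕜 E k c j p)
      =O[atTop] fun lam => lam ^ (-d) := by
  have hk' : (0 : ℝ) < k := Nat.cast_pos.2 hk
  have hε : Tendsto (fun lam : ℝ => lam ^ (-(k : ℝ)⁻¹)) atTop (𝓝[>] 0) :=
    tendsto_nhdsWithin_iff.2 ⟨tendsto_rpow_neg_atTop (inv_pos.2 hk'),
      (eventually_gt_atTop 0).mono fun lam hlam => Real.rpow_pos_of_pos hlam _⟩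
  have hpow : ∀ lam : ℝ, 0 < lam → ∀ r : ℝ, (lam ^ (-(k : ℝ)⁻¹)) ^ r = lam ^ (-r / k) :=
    fun lam hlam r => by rw [← Real.rpow_mul hlam.le]; congr 1; ring
  refine (hI.comp_tendsto hε).congr' ?_ ?_ <;> filter_upwards [eventually_gt_atTop 0] with lam hlam
  · have hinv : ((lam ^ (-(k : ℝ)⁻¹)) ^ k)⁻¹ = lam := by
      rw [← Real.rpow_natCast, hpow lam hlam, neg_div, div_self hk'.ne', Real.rpow_neg_one, inv_inv]
    rw [Function.comp_apply, hinv, logPartialSum]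
    refine congrArg (I lam - ·) (Finset.sum_congr rfl fun j _ => ?_)
    rw [← Real.rpow_natCast, hpow lam hlam, Real.log_rpow hlam, Finset.sum_range_succ,
      Finset.sum_range_one]
    simp only [atTopCoeff, LinearMap.coe_mk, AddHom.coe_mk, if_true, one_ne_zero, if_false]
    module
  · rw [Function.comp_apply, hpow lam hlam]
    congr 1
    field_simp

theorem sum_range_ceil_eq_sum_filter_div_lt {M : Type*} [AddCommMonoid M] {f : ℕ → M} {N : ℕ}
    (hk : 0 < k) (hf : ∀ j < N, f j = 0) :
    ∑ j ∈ Finset.range ⌈d * k⌉₊, f j =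
      ∑ j ∈ (Finset.range (⌈d * k⌉₊ + 1)).filter (fun j => N ≤ j ∧ (j : ℝ) / k < d), f j := by
  simp only [div_lt_iff₀ (Nat.cast_pos.2 hk : (0 : ℝ) < k), ← Nat.lt_ceil]
  refine (Finset.sum_subset (fun j hj => ?_) fun j hj hj' => hf j ?_).symm <;>
    simp only [Finset.mem_filter, Finset.mem_range] at * <;> lia

end AtTop

theorem Ink_full_asymptotic_expansion_general (𝕜 E : Type*) [NormedField 𝕜]
    [NormedAddCommGroup E] [NormedSpace ℝ E] [NormedSpace 𝕜 E] [SMulCommClass ℝ 𝕜 E]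
    [CompleteSpace E] {k : ℕ} (hk : 0 < k) (m : ℕ) :
    ∃ D : (ℝ → ℝ → ℝ → E) →ₗ[𝕜] ℕ → ℕ → E,
      (∀ a j, D a j 0 ≠ 0 → 0 < j ∧ k ∣ j ∨ m < j) ∧
      (∀ a j, D a j 1 ≠ 0 → k ∣ j ∧ m < j) ∧
      ∀ a : ℝ → ℝ → ℝ → E,
        ContDiff ℝ (⊤ : ℕ∞) (fun q : ℝ × ℝ × ℝ => a q.1 q.2.1 q.2.2) →
        HasCompactSupport (fun q : ℝ × ℝ × ℝ => a q.1 q.2.1 q.2.2) →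
        ∀ d : ℝ, (∀ j : ℕ, (j : ℝ) / k ≠ d) →
          (fun lam : ℝ =>
            (∫ y₁ in Set.Ioi (0 : ℝ), y₁ ^ m • ∫ y₂ : ℝ, a (lam * y₁ ^ k * y₂) y₁ y₂) -
            ∑ j ∈ (Finset.range (⌈d * k⌉₊ + 1)).filter
                (fun j => min k (m + 1) ≤ j ∧ (j : ℝ) / k < d),
              ∑ p ∈ Finset.range 2, (lam ^ (-(j : ℝ) / k) * Real.log lam ^ p) • D a j p)
          =O[atTop] fun lam : ℝ => lam ^ (-d) := by
  obtain ⟨T, hT, hexp⟩ := exists_linearMap_hasLogExpansion_oscIntegral 𝕜 E hk m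
  let uncurry : (ℝ → ℝ → ℝ → E) →ₗ[𝕜] ℝ × ℝ × ℝ → E :=
    { toFun := fun a q => a q.1 q.2.1 q.2.2
      map_add' := fun _ _ => rfl
      map_smul' := fun _ _ => rfl }
  refine ⟨atTopCoeff 𝕜 E k ∘ₗ T ∘ₗ uncurry, fun a j h => (hT _ j).1 h,
    fun a j h => (hT _ j).2 (right_ne_zero_of_smul h), fun a ha hc d hd => ?_⟩
  have hdk : ∀ j : ℕ, (j : ℝ) ≠ d * k := fun j h =>
    hd j ((div_eq_iff (Nat.cast_ne_zero.2 hk.ne')).2 h)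
  refine ((hexp (uncurry a) ha hc (d * k) hdk).isBigO_atTop 𝕜 hk).congr_left fun lam => ?_
  rw [sum_range_ceil_eq_sum_filter_div_lt hk (N := min k (m + 1)) fun j hj => ?_]
  · rfl
  · simp [atTopCoeff, (hT (uncurry a) j).eq_zero hj]

open Classical in
theorem Ink_full_asymptotic_expansion
    (n k : ℕ) (hn : 1 ≤ n) (hk : 2 * n ≤ k) :
    ∃ D : (ℝ → ℝ → ℝ → ℂ) → ℕ → ℕ → ℂ,
      -- D depends linearly on a
      (∀ a b : ℝ → ℝ → ℝ → ℂ, ∀ j p : ℕ,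
        D (fun t y₁ y₂ => a t y₁ y₂ + b t y₁ y₂) j p = D a j p + D b j p) ∧
      (∀ (c : ℂ) (a : ℝ → ℝ → ℝ → ℂ), ∀ j p : ℕ,
        D (fun t y₁ y₂ => c * a t y₁ y₂) j p = c * D a j p) ∧
      -- no logarithmic term unless j/k is an integer
      (∀ (a : ℝ → ℝ → ℝ → ℂ) (j : ℕ), ¬ k ∣ j → D a j 1 = 0) ∧
      -- the asymptotic expansion with remainder O(λ^{-d})
      (∀ a : ℝ → ℝ → ℝ → ℂ,
        ContDiff ℝ (⊤ : ℕ∞) (fun q : ℝ × ℝ × ℝ => a q.1 q.2.1 q.2.2) →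
        HasCompactSupport (fun q : ℝ × ℝ × ℝ => a q.1 q.2.1 q.2.2) →
        ∀ d : ℝ, (2 * n : ℝ) / k < d → (∀ j : ℕ, (j : ℝ) / k ≠ d) →
          (fun lam : ℝ =>
            (∫ y₁ in Set.Ioi (0 : ℝ),
              (∫ y₂ : ℝ, a (lam * y₁ ^ k * y₂) y₁ y₂) * ((y₁ ^ (2 * n - 1) : ℝ) : ℂ)) -
            ∑ j ∈ (Finset.range (Nat.ceil (d * k) + 1)).filter
                (fun j => 2 * n ≤ j ∧ (j : ℝ) / k < d),
              ∑ p ∈ Finset.range 2,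
                D a j p * ((lam ^ (-(j : ℝ) / k) * (Real.log lam) ^ p : ℝ) : ℂ))
          =O[atTop] fun lam : ℝ => lam ^ (-d)) := by
  obtain ⟨D, -, hlog, hexp⟩ :=
    Ink_full_asymptotic_expansion_general ℂ ℂ (by omega : 0 < k) (2 * n - 1)
  refine ⟨D, fun a b j p => congrFun₂ (D.map_add a b) j p,
    fun c a j p => congrFun₂ (D.map_smul c a) j p,
    fun a j hj => by_contra fun h => hj (hlog a j h).1, fun a ha hc d _ hd => ?_⟩
  have h := hexp a ha hc d hd
  simp only [Nat.sub_add_cancel (by omega : 1 ≤ 2 * n), min_eq_right hk, Complex.real_smul] at h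
  simpa only [mul_comm] using h
end

section
/- Fix integers n ≥ 1 and k > 2n, and set C_{n,k} = (1/k) Π_{j=1}^{2n} (j − 2n/k)^{−1}. Then as λ → ∞: I_{n,k}(λ) = λ^{−2n/k} d(a) + O(λ^{−(2n+1)/k} log λ), where d(a) = C_{n,k} ∫_0^∞ ∫_0^∞ t^{2n/k − 1} y₂^{2n − 2n/k} [ (∂_{y₂}^{2n} a)(t, 0, y₂) + (∂_{y₂}^{2n} a)(−t, 0, −y₂) ] dy₂ dt. Moreover, if (2n+1)/k is not an integer the remainder can be improved to O(λ^{−(2n+1)/k}). -/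
/- STATEMENT 2: Leading term of I_{n,k}(λ) in the non-integer (simple pole) case
2n/k ∉ ℕ, k > 2n: I_{n,k}(λ) = λ^{−2n/k} d(a) + O(λ^{−(2n+1)/k} log λ), with the
explicit coefficient d(a), and remainder O(λ^{−(2n+1)/k}) when (2n+1)/k ∉ ℕ
(Lemma "Theo IO 2eme carte", leading-term part). -/

open MeasureTheory Filter

/-!
Fix `y₂ = y` and freeze the second variable of the amplitude at `0`. Substituting
`t = lam * y * s ^ k` in the frozen integral makes it exactly homogeneous in `lam * y`; integrating
over `y` gives `lam ^ (-2n/k)` times a constant, which `2n` integrations by parts in `y` turn into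
`d(a)`. By compactness of the support the fibre has length `O((lam * y) ^ (-1/k))`, so a Lipschitz
amplitude makes freezing cost at most a constant times
`min ((lam * y) ^ (-2n/k)) ((lam * y) ^ (-(2n+1)/k))`. The integral of this over `y` in a bounded
interval is of order `lam ^ (-(2n+1)/k)`, except that `(2n+1)/k = 1` costs a logarithm. The
half-line `y < 0` follows by reflection.
-/

section

open Set

section WeightedIntegrals

theorem locallyIntegrable_rpow {p : ℝ} (hp : -1 < p) : LocallyIntegrable fun y : ℝ => y ^ p := by
  refine locallyIntegrable_of_norm_le_rpow (C := 1) (α := -p) (by simp) (by simp; linarith)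
    (.of_forall fun y => ?_) (by fun_prop)
  simpa using Real.abs_rpow_le_abs_rpow y p

theorem locallyIntegrable_mul_prod {X Y : Type*} [TopologicalSpace X] [MeasurableSpace X]
    [TopologicalSpace Y] [MeasurableSpace Y] {μ : Measure X} {ν : Measure Y} [SFinite μ] [SFinite ν]
    {f : X → ℝ} {g : Y → ℝ} (hf : LocallyIntegrable f μ) (hg : LocallyIntegrable g ν) :
    LocallyIntegrable (fun z : X × Y => f z.1 * g z.2) (μ.prod ν) := fun z => by
  obtain ⟨U, hU, hfU⟩ := hf z.1
  obtain ⟨V, hV, hgV⟩ := hg z.2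
  refine ⟨U ×ˢ V, prod_mem_nhds hU hV, ?_⟩
  rw [IntegrableOn, ← Measure.prod_restrict]
  exact hfU.mul_prod hgV

theorem hasCompactSupport_comp_of_norm_le {X Y M : Type*} [SeminormedAddCommGroup X]
    [ProperSpace X] [NormedAddCommGroup Y] [Zero M] {f : Y → M} (hf : HasCompactSupport f)
    {φ : X → Y} (hφ : ∀ x, ‖x‖ ≤ ‖φ x‖) : HasCompactSupport fun x => f (φ x) := by
  obtain ⟨R, -, hR⟩ := hf.exists_pos_le_norm
  refine HasCompactSupport.intro (isCompact_closedBall 0 R) fun x hx => hR _ ?_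
  rw [mem_closedBall_zero_iff, not_le] at hx
  exact hx.le.trans (hφ x)

theorem eventuallyEq_zero_atTop {M : Type*} [Zero M] {g : ℝ → M} (hg : HasCompactSupport g) :
    g =ᶠ[atTop] 0 :=
  (hasCompactSupport_iff_eventuallyEq.1 hg).filter_mono
    (atTop_le_cocompact.trans cocompact_le_coclosedCompact)

variable {E : Type*} [NormedAddCommGroup E] [NormedSpace ℝ E]

theorem integrableOn_Ioi_rpow_smul {p : ℝ} (hp : -1 < p) {g : ℝ → E} (hg : Continuous g)
    (hg0 : g =ᶠ[atTop] 0) : IntegrableOn (fun y => y ^ p • g y) (Ioi 0) := by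
  obtain ⟨T, hT⟩ := eventually_atTop.1 hg0
  refine IntegrableOn.of_forall_sdiff_eq_zero (s := Icc 0 T) ?_ measurableSet_Ioi ?_
  · exact ((locallyIntegrable_rpow hp).integrableOn_isCompact isCompact_Icc).smul_continuousOn
      hg.continuousOn isCompact_Icc
  · rintro y ⟨hy, hyT⟩
    rw [mem_Icc, not_and, not_le] at hyT
    simp [hT y (hyT (le_of_lt hy)).le]

theorem hasCompactSupport_iteratedDeriv {g : ℝ → E} (hg : HasCompactSupport g) (m : ℕ) :
    HasCompactSupport (iteratedDeriv m g) := by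
  induction m with
  | zero => simpa using hg
  | succ m ih => rw [iteratedDeriv_succ]; exact ih.deriv

theorem integral_Ioi_rpow_smul_comp_mul_rpow {ν k c : ℝ} (hk : 0 < k) (hc : 0 < c) (b : ℝ → E) :
    ∫ s in Ioi (0 : ℝ), s ^ (ν - 1) • b (c * s ^ k) =
      (c ^ (-(ν / k)) * k⁻¹) • ∫ t in Ioi (0 : ℝ), t ^ (ν / k - 1) • b t := by
  have hsubst : ∫ t in Ioi (0 : ℝ), t ^ (ν / k - 1) • b t =
      c • ∫ s in Ioi (0 : ℝ), (k * s ^ (k - 1)) • (c * s ^ k) ^ (ν / k - 1) • b (c * s ^ k) := by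
    rw [integral_comp_rpow_Ioi_of_pos (g := fun u => (c * u) ^ (ν / k - 1) • b (c * u)) hk,
      integral_comp_mul_left_Ioi' (fun t => t ^ (ν / k - 1) • b t) 0 hc, mul_zero]
  rw [hsubst, smul_smul, ← integral_smul]
  refine setIntegral_congr_fun measurableSet_Ioi fun s (hs : 0 < s) => ?_
  have hc_pow : c ^ (-(ν / k)) * c * c ^ (ν / k - 1) = 1 := by
    rw [← Real.rpow_add_one hc.ne', ← Real.rpow_add hc]
    simp
  have hs_pow : s ^ (ν - 1) = s ^ (k - 1) * (s ^ k) ^ (ν / k - 1) := by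
    rw [← Real.rpow_mul hs.le, ← Real.rpow_add hs]
    congr 1
    field_simp
    ring
  simp only [smul_smul]
  rw [hs_pow, Real.mul_rpow hc.le (by positivity)]
  congr 1
  linear_combination -(s ^ (k - 1) * (s ^ k) ^ (ν / k - 1)) *
    (k⁻¹ * k * hc_pow + inv_mul_cancel₀ hk.ne')

variable [CompleteSpace E]

theorem integral_Ioi_rpow_smul_eq_deriv {p : ℝ} (hp : -1 < p) {g : ℝ → E} (hg : ContDiff ℝ 1 g)
    (hgs : HasCompactSupport g) :
    ∫ y in Ioi (0 : ℝ), y ^ p • g y =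
      -(p + 1)⁻¹ • ∫ y in Ioi (0 : ℝ), y ^ (p + 1) • deriv g y := by
  have hp1 : p + 1 ≠ 0 := by linarith
  have hint := integrableOn_Ioi_rpow_smul hp hg.continuous (eventuallyEq_zero_atTop hgs)
  have hint' := integrableOn_Ioi_rpow_smul (p := p + 1) (by linarith)
    (hg.continuous_deriv le_rfl) (eventuallyEq_zero_atTop hgs.deriv)
  have hcont : Continuous fun y : ℝ => y ^ (p + 1) • g y :=
    (Real.continuous_rpow_const (by linarith)).smul hg.continuous
  have hderiv (y : ℝ) (hy : y ∈ Ioi (0 : ℝ)) : HasDerivAt (fun y : ℝ => y ^ (p + 1) • g y)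
      ((p + 1) • y ^ p • g y + y ^ (p + 1) • deriv g y) y := by
    have hpow := Real.hasDerivAt_rpow_const (p := p + 1) (Or.inl (ne_of_gt hy))
    refine (hpow.fun_smul (hg.differentiable one_ne_zero y).hasDerivAt).congr_deriv ?_
    rw [add_sub_cancel_right, mul_smul, add_comm]
  have hlim : Tendsto (fun y : ℝ => y ^ (p + 1) • g y) atTop (nhds 0) := by
    refine tendsto_const_nhds.congr' ?_
    filter_upwards [eventuallyEq_zero_atTop hgs] with y hy
    simp [hy]
  have hftc := integral_Ioi_of_hasDerivAt_of_tendsto hcont.continuousWithinAt hderiv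
    ((hint.fun_smul (p + 1)).add hint') hlim
  rw [integral_add (hint.fun_smul (p + 1)) hint', integral_smul, Real.zero_rpow hp1, zero_smul,
    sub_zero] at hftc
  rw [← inv_smul_smul₀ hp1 (∫ y in Ioi (0 : ℝ), y ^ p • g y), eq_neg_of_add_eq_zero_left hftc,
    smul_neg, neg_smul]

theorem integral_Ioi_rpow_smul_eq_iteratedDeriv {σ : ℝ} (hσ : σ < 1) {g : ℝ → E} {m : ℕ}
    (hg : ContDiff ℝ m g) (hgs : HasCompactSupport g) :
    ∫ y in Ioi (0 : ℝ), y ^ (-σ) • g y =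
      ((-1) ^ m * ∏ j ∈ Finset.Icc 1 m, ((j : ℝ) - σ)⁻¹) •
        ∫ y in Ioi (0 : ℝ), y ^ ((m : ℝ) - σ) • iteratedDeriv m g y := by
  induction m with
  | zero => simp
  | succ m ih =>
    have hm : -1 < (m : ℝ) - σ := by linarith [m.cast_nonneg (α := ℝ)]
    have hexp : (m : ℝ) - σ + 1 = ((m + 1 : ℕ) : ℝ) - σ := by push_cast; ring
    have hderiv : ContDiff ℝ 1 (iteratedDeriv m g) := by
      rw [iteratedDeriv_eq_iterate]
      exact ContDiff.iterate_deriv' 1 m (by simpa [add_comm] using hg)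
    rw [ih (hg.of_le (by simp)), integral_Ioi_rpow_smul_eq_deriv hm hderiv
      (hasCompactSupport_iteratedDeriv hgs m), Finset.prod_Icc_succ_top (by omega),
      iteratedDeriv_succ, smul_smul, hexp]
    congr 1
    ring

theorem integral_Ioi_rpow_smul_add_comp_neg {σ : ℝ} (hσ : σ < 1) {g h : ℝ → E} {m : ℕ}
    (hg : ContDiff ℝ m g) (hgs : HasCompactSupport g) (hh : ContDiff ℝ m h)
    (hhs : HasCompactSupport h) :
    (∫ y in Ioi (0 : ℝ), y ^ (-σ) • g y) + ∫ y in Ioi (0 : ℝ), y ^ (-σ) • h (-y) =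
      (∏ j ∈ Finset.Icc 1 m, ((j : ℝ) - σ)⁻¹) • ∫ y in Ioi (0 : ℝ), y ^ ((m : ℝ) - σ) •
        ((-1 : ℝ) ^ m • iteratedDeriv m g y + iteratedDeriv m h (-y)) := by
  have hm : -1 < (m : ℝ) - σ := by linarith [m.cast_nonneg (α := ℝ)]
  have hint {u : ℝ → E} (hu : ContDiff ℝ m u) (hus : HasCompactSupport u) :=
    integrableOn_Ioi_rpow_smul hm (hu.continuous_iteratedDeriv m le_rfl)
      (eventuallyEq_zero_atTop (hasCompactSupport_iteratedDeriv hus m))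
  have hneg : ContDiff ℝ m fun y => h (-y) := hh.comp contDiff_neg
  have hnegs : HasCompactSupport fun y => h (-y) := hhs.comp_homeomorph (Homeomorph.neg ℝ)
  have hsplit := integral_add ((hint hg hgs).fun_smul ((-1 : ℝ) ^ m))
    ((hint hneg hnegs).fun_smul ((-1 : ℝ) ^ m))
  have hsq : (-1 : ℝ) ^ m * (-1) ^ m = 1 := by rw [← mul_pow]; simp
  rw [integral_Ioi_rpow_smul_eq_iteratedDeriv hσ hg hgs,
    integral_Ioi_rpow_smul_eq_iteratedDeriv hσ hneg hnegs, ← smul_add, mul_comm, mul_smul, smul_add,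
    ← integral_smul, ← integral_smul, ← hsplit]
  simp only [iteratedDeriv_comp_neg, smul_add,
    smul_comm ((-1 : ℝ) ^ m) (_ ^ ((m : ℝ) - σ)), smul_smul ((-1 : ℝ) ^ m), hsq, one_smul]

end WeightedIntegrals

section Remainder

variable {σ τ : ℝ}

theorem intervalIntegrable_min_rpow (hσ : σ < 1) {b : ℝ} (hb : 0 ≤ b) :
    IntervalIntegrable (fun u : ℝ => min (u ^ (-σ)) (u ^ (-τ))) volume 0 b := by
  refine (intervalIntegral.intervalIntegrable_rpow' (r := -σ) (by linarith)).mono_fun'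
    (by fun_prop) ?_
  rw [uIoc_of_le hb]
  filter_upwards [ae_restrict_mem measurableSet_Ioc] with u hu
  have := hu.1
  rw [Real.norm_of_nonneg (by positivity)]
  exact min_le_left _ _

/-- The order of the remainder: the integral over `y` in `(0, 1)` of the error
`min (u ^ (-σ)) (u ^ (-τ))` on the fibre at height `y`, where `u = lam * y`. -/
noncomputable def remainderBound (σ τ lam : ℝ) : ℝ :=
  lam⁻¹ * ∫ u in 0..lam, min (u ^ (-σ)) (u ^ (-τ))

theorem remainderBound_nonneg {lam : ℝ} (hl : 0 ≤ lam) : 0 ≤ remainderBound σ τ lam :=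
  mul_nonneg (inv_nonneg.2 hl) <| intervalIntegral.integral_nonneg hl fun u hu => by
    have := hu.1
    positivity

theorem integral_min_mul_rpow {lam R : ℝ} (hl : 0 < lam) (hR : 0 < R) :
    ∫ y in 0..R, min ((lam * y / R) ^ (-σ)) ((lam * y / R) ^ (-τ)) =
      R * remainderBound σ τ lam := by
  have hscale := intervalIntegral.integral_comp_mul_left (a := 0) (b := R)
    (fun u : ℝ => min (u ^ (-σ)) (u ^ (-τ))) (div_ne_zero hl.ne' hR.ne')
  simp only [div_mul_eq_mul_div, mul_zero, mul_div_cancel_right₀ lam hR.ne'] at hscale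
  rw [hscale, remainderBound, inv_div, smul_eq_mul]
  ring

theorem intervalIntegrable_min_mul_rpow (hσ : σ < 1) {lam : ℝ} (hl : 0 < lam) (R : ℝ) :
    IntervalIntegrable (fun y : ℝ => min ((lam * y / R) ^ (-σ)) ((lam * y / R) ^ (-τ)))
      volume 0 R := by
  simpa only [div_mul_eq_mul_div, zero_div, div_div_cancel₀ hl.ne'] using
    (intervalIntegrable_min_rpow (τ := τ) hσ hl.le).comp_mul_left (c := lam / R)

theorem integral_rpow_neg {p b : ℝ} (hp : p < 1) :
    ∫ u in (0 : ℝ)..b, u ^ (-p) = b ^ (1 - p) / (1 - p) := by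
  rw [integral_rpow (Or.inl (by linarith)), Real.zero_rpow (by linarith), sub_zero, neg_add_eq_sub]

theorem remainderBound_isBigO (hσ : σ < 1) (hτ : τ < 1) :
    remainderBound σ τ =O[atTop] fun lam : ℝ => lam ^ (-τ) := by
  refine Asymptotics.IsBigO.of_bound (1 - τ)⁻¹ ?_
  filter_upwards [eventually_gt_atTop 0] with lam hl
  rw [Real.norm_of_nonneg (remainderBound_nonneg hl.le), Real.norm_of_nonneg (by positivity)]
  calc remainderBound σ τ lam ≤ lam⁻¹ * ∫ u in 0..lam, u ^ (-τ) := by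
        refine mul_le_mul_of_nonneg_left ?_ (by positivity)
        exact intervalIntegral.integral_mono_on hl.le (intervalIntegrable_min_rpow hσ hl.le)
          (intervalIntegral.intervalIntegrable_rpow' (by linarith)) fun u _ => min_le_right _ _
    _ = (1 - τ)⁻¹ * lam ^ (-τ) := by
        rw [integral_rpow_neg hτ, sub_eq_add_neg, Real.rpow_add hl, Real.rpow_one]
        field_simp

theorem integral_min_rpow_inv_le (hσ : σ < 1) {b : ℝ} (hb : 1 ≤ b) :
    ∫ u in 0..b, min (u ^ (-σ)) (u ^ (-1 : ℝ)) ≤ (1 - σ)⁻¹ + Real.log b := by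
  have hb0 : 0 < b := by linarith
  have hnear := intervalIntegrable_min_rpow (τ := 1) hσ zero_le_one
  have hall := intervalIntegrable_min_rpow (τ := 1) hσ hb0.le
  have hfar := hnear.symm.trans hall
  have hinv : IntervalIntegrable (fun u : ℝ => u⁻¹) volume 1 b :=
    intervalIntegrable_inv_iff.2 (Or.inr fun h => by
      rw [uIcc_of_le hb] at h
      linarith [h.1])
  rw [← intervalIntegral.integral_add_adjacent_intervals hnear hfar]
  refine add_le_add ?_ ?_
  · refine (intervalIntegral.integral_mono_on zero_le_one hnear
      (intervalIntegral.intervalIntegrable_rpow' (by linarith))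
      fun u _ => min_le_left _ _).trans_eq ?_
    rw [integral_rpow_neg hσ, Real.one_rpow, one_div]
  · refine (intervalIntegral.integral_mono_on hb hfar hinv fun u _ =>
      (min_le_right _ _).trans_eq (Real.rpow_neg_one u)).trans_eq ?_
    rw [integral_inv_of_pos one_pos hb0, div_one]

theorem remainderBound_one_isBigO (hσ : σ < 1) :
    remainderBound σ 1 =O[atTop] fun lam : ℝ => lam ^ (-1 : ℝ) * Real.log lam := by
  refine Asymptotics.IsBigO.of_bound ((1 - σ)⁻¹ + 1) ?_
  have hσ' : 0 ≤ (1 - σ)⁻¹ := inv_nonneg.2 (by linarith)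
  filter_upwards [eventually_ge_atTop 1,
    Real.tendsto_log_atTop.eventually_ge_atTop 1] with lam hl hlog
  have hl0 : 0 < lam := by linarith
  rw [Real.norm_of_nonneg (remainderBound_nonneg hl0.le), Real.norm_of_nonneg (by positivity),
    Real.rpow_neg_one]
  calc remainderBound σ 1 lam ≤ lam⁻¹ * ((1 - σ)⁻¹ + Real.log lam) :=
        mul_le_mul_of_nonneg_left (integral_min_rpow_inv_le hσ hl) (by positivity)
    _ ≤ lam⁻¹ * ((1 - σ)⁻¹ * Real.log lam + Real.log lam) := by
        gcongr
        exact le_mul_of_one_le_right hσ' hlog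
    _ = ((1 - σ)⁻¹ + 1) * (lam⁻¹ * Real.log lam) := by ring

theorem remainderBound_isBigO_log (hσ : σ < 1) (hτ : τ ≤ 1) :
    remainderBound σ τ =O[atTop] fun lam : ℝ => lam ^ (-τ) * Real.log lam := by
  rcases hτ.eq_or_lt with rfl | hτ
  · exact remainderBound_one_isBigO hσ
  · simpa using (remainderBound_isBigO hσ hτ).mul (Real.isLittleO_const_log_atTop (c := 1)).isBigO

end Remainder

section Fibre

variable {E : Type*} [NormedAddCommGroup E] [NormedSpace ℝ E] {a : ℝ × ℝ × ℝ → E}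

theorem norm_integral_Ioi_rpow_smul_le {ν q T M : ℝ} (hνq : 0 < ν + q) (hT : 0 ≤ T) {h : ℝ → E}
    (h_zero : ∀ s, T < s → h s = 0) (h_le : ∀ s ∈ Ioc 0 T, ‖h s‖ ≤ M * s ^ q) :
    ‖∫ s in Ioi (0 : ℝ), s ^ (ν - 1) • h s‖ ≤ M * (T ^ (ν + q) / (ν + q)) := by
  have hexp : -1 < ν + q - 1 := by linarith
  have hint : IntervalIntegrable (fun s : ℝ => M * s ^ (ν + q - 1)) volume 0 T :=
    (intervalIntegral.intervalIntegrable_rpow' hexp).const_mul M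
  rw [setIntegral_eq_of_subset_of_forall_sdiff_eq_zero measurableSet_Ioi
    (Ioc_subset_Ioi_self : Ioc 0 T ⊆ Ioi 0) fun s hs => by
      rw [h_zero s (not_le.1 fun hsT => hs.2 ⟨hs.1, hsT⟩), smul_zero]]
  calc ‖∫ s in Ioc 0 T, s ^ (ν - 1) • h s‖ ≤ ∫ s in Ioc 0 T, M * s ^ (ν + q - 1) := by
        refine norm_integral_le_of_norm_le hint.1 ?_
        filter_upwards [ae_restrict_mem measurableSet_Ioc] with s hs
        have hs0 : 0 < s := hs.1
        rw [norm_smul, Real.norm_of_nonneg (by positivity), add_sub_right_comm, Real.rpow_add hs0,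
          mul_left_comm]
        exact mul_le_mul_of_nonneg_left (h_le s hs) (by positivity)
    _ = M * (T ^ (ν + q) / (ν + q)) := by
        rw [integral_const_mul, ← intervalIntegral.integral_of_le hT,
          integral_rpow (Or.inl hexp), sub_add_cancel, Real.zero_rpow hνq.ne', sub_zero]

theorem exists_norm_sub_le_mul_min (ha : ContDiff ℝ 1 a) (hs : HasCompactSupport a) :
    ∃ M, 0 ≤ M ∧ ∀ t s y, ‖a (t, s, y) - a (t, 0, y)‖ ≤ M * min 1 |s| := by
  obtain ⟨C, hC⟩ := hs.exists_bound_of_continuous ha.continuous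
  obtain ⟨L, hL⟩ := ContDiff.lipschitzWith_of_hasCompactSupport hs ha one_ne_zero
  have hnonneg : 0 ≤ max (C + C) (L : ℝ) := le_max_of_le_right L.coe_nonneg
  refine ⟨max (C + C) L, hnonneg, fun t s y => ?_⟩
  rw [mul_min_of_nonneg _ _ hnonneg, mul_one]
  refine le_min ((norm_sub_le_of_le (hC _) (hC _)).trans (le_max_left _ _)) ?_
  calc ‖a (t, s, y) - a (t, 0, y)‖ ≤ L * ‖(t, s, y) - (t, 0, y)‖ := hL.norm_sub_le _ _
    _ = L * |s| := by simp [Prod.norm_def]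
    _ ≤ max (C + C) L * |s| := by gcongr; exact le_max_right _ _

theorem norm_integral_rpow_smul_sub_le {R M ν k c : ℝ} (hR : 0 < R) (hM : 0 ≤ M)
    (ha_zero : ∀ q, R ≤ ‖q‖ → a q = 0)
    (ha_sub : ∀ t s y, ‖a (t, s, y) - a (t, 0, y)‖ ≤ M * min 1 |s|)
    (hν : 0 < ν) (hk : 0 < k) (hc : 0 < c) (y : ℝ) :
    ‖∫ s in Ioi (0 : ℝ), s ^ (ν - 1) • (a (c * s ^ k, s, y) - a (c * s ^ k, 0, y))‖ ≤
      M / ν * min ((c / R) ^ (-(ν / k))) ((c / R) ^ (-((ν + 1) / k))) := by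
  have hcR : 0 ≤ R / c := by positivity
  set T := (R / c) ^ k⁻¹ with hT
  have hT0 : 0 ≤ T := by positivity
  have hT_pow (p : ℝ) : (c / R) ^ (-(p / k)) = T ^ p := by
    rw [hT, ← Real.rpow_mul hcR, ← inv_div c R, Real.inv_rpow (by positivity),
      Real.rpow_neg (by positivity), inv_mul_eq_div]
  have h_zero (s : ℝ) (hs : T < s) : a (c * s ^ k, s, y) - a (c * s ^ k, 0, y) = 0 := by
    have hlt : R < c * s ^ k := (div_lt_iff₀' hc).1
      ((Real.rpow_inv_lt_iff_of_pos hcR (hT0.trans hs.le) hk).1 hs)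
    have hnorm (s' : ℝ) : R ≤ ‖(c * s ^ k, s', y)‖ :=
      (hlt.le.trans (le_abs_self _)).trans (norm_fst_le (c * s ^ k, s', y))
    rw [ha_zero _ (hnorm s), ha_zero _ (hnorm 0), sub_zero]
  have h_le (s : ℝ) (hs : s ∈ Ioc 0 T) :
      ‖a (c * s ^ k, s, y) - a (c * s ^ k, 0, y)‖ ≤ M * min 1 s := by
    simpa only [abs_of_pos hs.1] using ha_sub (c * s ^ k) s y
  rw [hT_pow, hT_pow, mul_min_of_nonneg _ _ (by positivity)]
  refine le_min ?_ ?_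
  · refine (norm_integral_Ioi_rpow_smul_le (M := M) (q := 0) (by linarith) hT0 h_zero fun s hs =>
      (h_le s hs).trans ?_).trans_eq (by rw [add_zero]; ring)
    rw [Real.rpow_zero]
    exact mul_le_mul_of_nonneg_left (min_le_left _ _) hM
  · refine (norm_integral_Ioi_rpow_smul_le (M := M) (q := 1) (by linarith) hT0 h_zero fun s hs =>
      (h_le s hs).trans ?_).trans ?_
    · rw [Real.rpow_one]
      exact mul_le_mul_of_nonneg_left (min_le_right _ _) hM
    · rw [div_mul_eq_mul_div, mul_div_assoc]
      gcongr
      linarith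

end Fibre

section HalfLine

variable {E : Type*} [NormedAddCommGroup E] [NormedSpace ℝ E] {a : ℝ × ℝ × ℝ → E}

theorem integrable_rpow_mul_rpow_smul {p q : ℝ} (hp : -1 < p) (hq : -1 < q) {F : ℝ × ℝ → E}
    (hF : Continuous F) (hFs : HasCompactSupport F) :
    Integrable (fun z : ℝ × ℝ => (z.1 ^ p * z.2 ^ q) • F z)
      ((volume.restrict (Ioi 0)).prod volume) := by
  have hint := (locallyIntegrable_mul_prod (locallyIntegrable_rpow hp)
    (locallyIntegrable_rpow hq)).integrable_smul_right_of_hasCompactSupport hF hFs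
  have hrestr := hint.integrableOn (s := Ioi 0 ×ˢ univ)
  rwa [IntegrableOn, ← Measure.prod_restrict, Measure.restrict_univ] at hrestr

/-- The integral `I(lam)` of the theorem, with `2 * n` replaced by a real exponent `ν`. -/
noncomputable def scaledIntegral (ν k : ℝ) (a : ℝ × ℝ × ℝ → E) (lam : ℝ) : E :=
  ∫ s in Ioi (0 : ℝ), s ^ (ν - 1) • ∫ y, a (lam * s ^ k * y, s, y)

/-- The contribution of `y > 0` to `scaledIntegral ν k a lam`, with the `s`-fibre integrated first
because that is where the comparison with the amplitude frozen at `s = 0` takes place. -/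
noncomputable def halfIntegral (ν k : ℝ) (a : ℝ × ℝ × ℝ → E) (lam : ℝ) : E :=
  ∫ y in Ioi (0 : ℝ), ∫ s in Ioi (0 : ℝ), s ^ (ν - 1) • a (lam * y * s ^ k, s, y)

/-- The coefficient of `lam ^ (-(ν / k))` in `halfIntegral ν k a`. -/
noncomputable def halfCoeff (ν k : ℝ) (a : ℝ × ℝ × ℝ → E) : E :=
  k⁻¹ • ∫ t in Ioi (0 : ℝ), ∫ y in Ioi (0 : ℝ), (t ^ (ν / k - 1) * y ^ (-(ν / k))) • a (t, 0, y)

theorem integrable_rpow_smul_scaled (ha : Continuous a) (hs : HasCompactSupport a) {ν k : ℝ}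
    (hν : 0 < ν) (hk : 0 ≤ k) (lam : ℝ) :
    Integrable (fun z : ℝ × ℝ => z.1 ^ (ν - 1) • a (lam * z.2 * z.1 ^ k, z.1, z.2))
      ((volume.restrict (Ioi 0)).prod volume) := by
  have hcont : Continuous fun z : ℝ × ℝ => a (lam * z.2 * z.1 ^ k, z.1, z.2) :=
    ha.comp (((continuous_const.mul continuous_snd).mul
      ((Real.continuous_rpow_const hk).comp continuous_fst)).prodMk continuous_id)
  have hsupp : HasCompactSupport fun z : ℝ × ℝ => a (lam * z.2 * z.1 ^ k, z.1, z.2) :=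
    hasCompactSupport_comp_of_norm_le hs fun z => norm_snd_le (lam * z.2 * z.1 ^ k, z)
  simpa using integrable_rpow_mul_rpow_smul (by linarith : -1 < ν - 1) (by simp : -1 < (0 : ℝ))
    hcont hsupp

theorem integrable_rpow_mul_rpow_smul_zero (ha : Continuous a) (hs : HasCompactSupport a) {σ : ℝ}
    (hσ0 : 0 < σ) (hσ1 : σ < 1) :
    Integrable (fun z : ℝ × ℝ => (z.1 ^ (σ - 1) * z.2 ^ (-σ)) • a (z.1, 0, z.2))
      ((volume.restrict (Ioi 0)).prod (volume.restrict (Ioi 0))) := by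
  have hint := integrable_rpow_mul_rpow_smul (by linarith : -1 < σ - 1) (by linarith : -1 < -σ)
    (ha.comp (by fun_prop : Continuous fun z : ℝ × ℝ => (z.1, (0 : ℝ), z.2)))
    (hasCompactSupport_comp_of_norm_le hs fun z : ℝ × ℝ => by simp [Prod.norm_def])
  exact hint.mono_measure (Measure.prod_mono le_rfl Measure.restrict_le_self)

theorem integral_rpow_smul_zero_eq {ν k lam y : ℝ} (hk : 0 < k) (hl : 0 < lam) (hy : 0 < y) :
    ∫ s in Ioi (0 : ℝ), s ^ (ν - 1) • a (lam * y * s ^ k, 0, y) = (lam ^ (-(ν / k)) * k⁻¹) •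
      ∫ t in Ioi (0 : ℝ), (t ^ (ν / k - 1) * y ^ (-(ν / k))) • a (t, 0, y) := by
  simp only [mul_comm (_ ^ (ν / k - 1)), mul_smul, integral_smul]
  rw [integral_Ioi_rpow_smul_comp_mul_rpow hk (mul_pos hl hy) fun t => a (t, 0, y),
    Real.mul_rpow hl.le hy.le]
  simp only [mul_smul, smul_comm k⁻¹]

theorem integrableOn_integral_rpow_smul_zero (ha : Continuous a) (hs : HasCompactSupport a)
    {ν k lam : ℝ} (hν : 0 < ν) (hk : ν < k) (hl : 0 < lam) :
    IntegrableOn (fun y => ∫ s in Ioi (0 : ℝ), s ^ (ν - 1) • a (lam * y * s ^ k, 0, y))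
      (Ioi 0) := by
  have hk0 : 0 < k := hν.trans hk
  have hint := (integrable_rpow_mul_rpow_smul_zero ha hs (div_pos hν hk0)
    ((div_lt_one hk0).2 hk)).integral_prod_right
  exact IntegrableOn.congr_fun (hint.fun_smul (lam ^ (-(ν / k)) * k⁻¹))
    (fun y hy => (integral_rpow_smul_zero_eq hk0 hl hy).symm) measurableSet_Ioi

theorem rpow_smul_halfCoeff (ha : Continuous a) (hs : HasCompactSupport a) {ν k lam : ℝ}
    (hν : 0 < ν) (hk : ν < k) (hl : 0 < lam) :
    lam ^ (-(ν / k)) • halfCoeff ν k a =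
      ∫ y in Ioi (0 : ℝ), ∫ s in Ioi (0 : ℝ), s ^ (ν - 1) • a (lam * y * s ^ k, 0, y) := by
  have hk0 : 0 < k := hν.trans hk
  rw [halfCoeff, smul_smul, integral_integral_swap (integrable_rpow_mul_rpow_smul_zero ha hs
    (div_pos hν hk0) ((div_lt_one hk0).2 hk)), ← integral_smul]
  exact setIntegral_congr_fun measurableSet_Ioi fun y hy =>
    (integral_rpow_smul_zero_eq hk0 hl hy).symm

theorem halfIntegral_sub_rpow_smul_halfCoeff (ha : Continuous a) (hs : HasCompactSupport a)
    {ν k : ℝ} (hν : 0 < ν) (hk : ν < k) {lam : ℝ} (hl : 0 < lam) :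
    halfIntegral ν k a lam - lam ^ (-(ν / k)) • halfCoeff ν k a =
      ∫ y in Ioi (0 : ℝ), ∫ s in Ioi (0 : ℝ),
        s ^ (ν - 1) • (a (lam * y * s ^ k, s, y) - a (lam * y * s ^ k, 0, y)) := by
  have hk0 : 0 < k := hν.trans hk
  have hν1 : -1 < ν - 1 := by linarith
  have hint := (integrable_rpow_smul_scaled ha hs hν hk0.le lam).integral_prod_right
  rw [rpow_smul_halfCoeff ha hs hν hk hl, halfIntegral,
    ← integral_sub hint.integrableOn (integrableOn_integral_rpow_smul_zero ha hs hν hk hl)]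
  refine setIntegral_congr_fun measurableSet_Ioi fun y (hy : 0 < y) => ?_
  have hpow : Continuous fun s : ℝ => lam * y * s ^ k :=
    continuous_const.mul (Real.continuous_rpow_const hk0.le)
  have hpow_top : Tendsto (fun s : ℝ => lam * y * s ^ k) atTop atTop :=
    (tendsto_rpow_atTop hk0).const_mul_atTop (mul_pos hl hy)
  have hfull := integrableOn_Ioi_rpow_smul hν1 (g := fun s => a (lam * y * s ^ k, s, y))
    (ha.comp (hpow.prodMk (by fun_prop)))
    (eventuallyEq_zero_atTop (hasCompactSupport_comp_of_norm_le hs fun s =>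
      (norm_fst_le (s, y)).trans (norm_snd_le (lam * y * s ^ k, s, y))))
  have hfrozen := integrableOn_Ioi_rpow_smul hν1 (g := fun s => a (lam * y * s ^ k, 0, y))
    (ha.comp (hpow.prodMk continuous_const))
    ((eventuallyEq_zero_atTop (hasCompactSupport_comp_of_norm_le hs fun t =>
      norm_fst_le (t, (0 : ℝ), y))).comp_tendsto hpow_top)
  simp only [smul_sub]
  exact (integral_sub hfull hfrozen).symm

theorem halfIntegral_sub_isBigO (ha : ContDiff ℝ 1 a) (hs : HasCompactSupport a) {ν k : ℝ}
    (hν : 0 < ν) (hk : ν < k) :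
    (fun lam => halfIntegral ν k a lam - lam ^ (-(ν / k)) • halfCoeff ν k a)
      =O[atTop] remainderBound (ν / k) ((ν + 1) / k) := by
  have hk0 : 0 < k := hν.trans hk
  obtain ⟨R, hR, ha_zero⟩ := hs.exists_pos_le_norm
  obtain ⟨M, hM, ha_sub⟩ := exists_norm_sub_le_mul_min ha hs
  refine Asymptotics.IsBigO.of_bound (M / ν * R) ?_
  filter_upwards [eventually_gt_atTop 0] with lam hl
  have hint : IntervalIntegrable (fun y : ℝ => M / ν *
      min ((lam * y / R) ^ (-(ν / k))) ((lam * y / R) ^ (-((ν + 1) / k)))) volume 0 R :=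
    (intervalIntegrable_min_mul_rpow ((div_lt_one hk0).2 hk) hl R).const_mul _
  rw [halfIntegral_sub_rpow_smul_halfCoeff ha.continuous hs hν hk hl,
    Real.norm_of_nonneg (remainderBound_nonneg hl.le),
    setIntegral_eq_of_subset_of_forall_sdiff_eq_zero measurableSet_Ioi
      (Ioc_subset_Ioi_self : Ioc 0 R ⊆ Ioi 0) fun y hy => ?_]
  · refine (norm_integral_le_of_norm_le hint.1 ?_).trans_eq ?_
    · filter_upwards [ae_restrict_mem measurableSet_Ioc] with y hy
      exact norm_integral_rpow_smul_sub_le hR hM ha_zero ha_sub hν hk0 (mul_pos hl hy.1) y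
    · rw [← intervalIntegral.integral_of_le hR.le, intervalIntegral.integral_const_mul,
        integral_min_mul_rpow hl hR, mul_assoc]
  · have hy_norm (t s : ℝ) : R ≤ ‖(t, s, y)‖ :=
      (not_le.1 fun hyR => hy.2 ⟨hy.1, hyR⟩).le.trans <| (le_abs_self y).trans <|
        (norm_snd_le (s, y)).trans (norm_snd_le (t, s, y))
    simp [ha_zero _ (hy_norm _ _)]

end HalfLine

section Splitting

variable {E : Type*} [NormedAddCommGroup E]

/-- The reflection of an amplitude in its first and last variables, both signs being needed to
turn the half-line `y < 0` into `y > 0` in `a (lam * s ^ k * y, s, y)`. -/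
def reflect (a : ℝ × ℝ × ℝ → E) (q : ℝ × ℝ × ℝ) : E :=
  a (-q.1, q.2.1, -q.2.2)

theorem hasCompactSupport_reflect {a : ℝ × ℝ × ℝ → E} (hs : HasCompactSupport a) :
    HasCompactSupport (reflect a) :=
  hasCompactSupport_comp_of_norm_le hs fun q => by simp [Prod.norm_def]

variable [NormedSpace ℝ E] {a : ℝ × ℝ × ℝ → E}

theorem contDiff_reflect {n : WithTop ℕ∞} (ha : ContDiff ℝ n a) : ContDiff ℝ n (reflect a) :=
  ha.comp (by fun_prop : ContDiff ℝ n fun q : ℝ × ℝ × ℝ => (-q.1, q.2.1, -q.2.2))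

/-- The coefficient `d(a)` of the theorem, with `2 * n` replaced by a real exponent `ν` in the
powers and by a natural number `m` as the order of differentiation in `y`. -/
noncomputable def poleCoeff (ν k : ℝ) (m : ℕ) (a : ℝ × ℝ × ℝ → E) : E :=
  (k⁻¹ * ∏ j ∈ Finset.Icc 1 m, ((j : ℝ) - ν / k)⁻¹) •
    ∫ t in Ioi (0 : ℝ), ∫ y in Ioi (0 : ℝ), (t ^ (ν / k - 1) * y ^ ((m : ℝ) - ν / k)) •
      ((-1 : ℝ) ^ m • iteratedDeriv m (fun s => a (t, 0, s)) y +
        iteratedDeriv m (fun s => a (-t, 0, s)) (-y))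

theorem scaledIntegral_eq_add (ha : Continuous a) (hs : HasCompactSupport a) {ν k : ℝ}
    (hν : 0 < ν) (hk : 0 ≤ k) (lam : ℝ) :
    scaledIntegral ν k a lam = halfIntegral ν k a lam + halfIntegral ν k (reflect a) lam := by
  have hint := integrable_rpow_smul_scaled ha hs hν hk lam
  have hright := hint.integral_prod_right
  have hneg := integral_comp_neg_Ioi 0 fun y : ℝ =>
    ∫ s in Ioi (0 : ℝ), s ^ (ν - 1) • a (lam * y * s ^ k, s, y)
  rw [neg_zero] at hneg
  simp only [scaledIntegral, ← integral_smul, mul_right_comm lam]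
  rw [integral_integral_swap hint, ← intervalIntegral.integral_Iic_add_Ioi
    (b := 0) hright.integrableOn hright.integrableOn, add_comm, ← hneg]
  simp only [halfIntegral, reflect, mul_neg, neg_mul]

variable [CompleteSpace E]

theorem halfCoeff_add_halfCoeff_reflect {m : ℕ} (ha : ContDiff ℝ m a) (hs : HasCompactSupport a)
    {ν k : ℝ} (hν : 0 < ν) (hk : ν < k) :
    halfCoeff ν k a + halfCoeff ν k (reflect a) = poleCoeff ν k m a := by
  have hσ0 : 0 < ν / k := div_pos hν (hν.trans hk)
  have hσ1 : ν / k < 1 := (div_lt_one (hν.trans hk)).2 hk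
  have hslice (t : ℝ) : ContDiff ℝ m fun y => a (t, 0, y) := ha.comp (by fun_prop)
  have hslices (t : ℝ) : HasCompactSupport fun y => a (t, 0, y) :=
    hasCompactSupport_comp_of_norm_le hs fun y =>
      (norm_snd_le ((0 : ℝ), y)).trans (norm_snd_le (t, (0 : ℝ), y))
  have hint := (integrable_rpow_mul_rpow_smul_zero ha.continuous hs hσ0 hσ1).integral_prod_left
  have hint_reflect := (integrable_rpow_mul_rpow_smul_zero (contDiff_reflect ha).continuous
    (hasCompactSupport_reflect hs) hσ0 hσ1).integral_prod_left
  rw [halfCoeff, halfCoeff, ← smul_add, ← integral_add hint hint_reflect, poleCoeff, mul_smul]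
  congr 1
  rw [← integral_smul]
  refine setIntegral_congr_fun measurableSet_Ioi fun t _ => ?_
  simp only [mul_smul, integral_smul]
  rw [← smul_add, smul_comm, ← integral_Ioi_rpow_smul_add_comp_neg hσ1 (hslice t) (hslices t)
    (hslice (-t)) (hslices (-t))]
  rfl

theorem Ink_leading_term_simple_pole_general {ν k : ℝ} (hν : 0 < ν) (hk : ν + 1 ≤ k) {m : ℕ}
    (hm : m ≠ 0) (ha : ContDiff ℝ m a) (hs : HasCompactSupport a) :
    ((fun lam => scaledIntegral ν k a lam - lam ^ (-ν / k) • poleCoeff ν k m a)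
      =O[atTop] fun lam => lam ^ (-(ν + 1) / k) * Real.log lam) ∧
    (ν + 1 < k → (fun lam => scaledIntegral ν k a lam - lam ^ (-ν / k) • poleCoeff ν k m a)
      =O[atTop] fun lam => lam ^ (-(ν + 1) / k)) := by
  have hνk : ν < k := by linarith
  have hk0 : 0 < k := hν.trans hνk
  have ha1 : ContDiff ℝ 1 a := ha.of_le (by exact_mod_cast Nat.one_le_iff_ne_zero.2 hm)
  have hbound : (fun lam => scaledIntegral ν k a lam - lam ^ (-ν / k) • poleCoeff ν k m a)
      =O[atTop] remainderBound (ν / k) ((ν + 1) / k) := by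
    refine ((halfIntegral_sub_isBigO ha1 hs hν hνk).add (halfIntegral_sub_isBigO
      (contDiff_reflect ha1) (hasCompactSupport_reflect hs) hν hνk)).congr_left fun lam => ?_
    rw [scaledIntegral_eq_add ha.continuous hs hν hk0.le,
      ← halfCoeff_add_halfCoeff_reflect ha hs hν hνk, smul_add, neg_div]
    abel
  have hσ : ν / k < 1 := (div_lt_one hk0).2 hνk
  simp only [neg_div k (ν + 1)]
  exact ⟨hbound.trans (remainderBound_isBigO_log hσ ((div_le_one hk0).2 hk)),
    fun hlt => hbound.trans (remainderBound_isBigO hσ ((div_lt_one hk0).2 hlt))⟩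

end Splitting

section ComplexAmplitude

variable {a : ℝ × ℝ × ℝ → ℂ}

theorem scaledIntegral_natCast {N : ℕ} (hN : 1 ≤ N) (k : ℕ) (lam : ℝ) :
    scaledIntegral N k a lam =
      ∫ s in Ioi (0 : ℝ), (∫ y, a (lam * s ^ k * y, s, y)) * ((s ^ (N - 1) : ℝ) : ℂ) := by
  simp only [scaledIntegral, ← Nat.cast_pred hN, Real.rpow_natCast, Complex.real_smul, mul_comm]

theorem poleCoeff_of_even {m : ℕ} (hm : Even m) (ν k : ℝ) :
    poleCoeff ν k m a = ((k⁻¹ * ∏ j ∈ Finset.Icc 1 m, ((j : ℝ) - ν / k)⁻¹ : ℝ) : ℂ) *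
      ∫ t in Ioi (0 : ℝ), ∫ y in Ioi (0 : ℝ), ((t ^ (ν / k - 1) * y ^ ((m : ℝ) - ν / k) : ℝ) : ℂ) *
        (iteratedDeriv m (fun s => a (t, 0, s)) y +
          iteratedDeriv m (fun s => a (-t, 0, s)) (-y)) := by
  simp only [poleCoeff, hm.neg_one_pow, one_smul, Complex.real_smul]

end ComplexAmplitude

end

theorem Ink_leading_term_simple_pole
    (n k : ℕ) (hn : 1 ≤ n) (hk : 2 * n < k)
    (a : ℝ → ℝ → ℝ → ℂ)
    (ha_smooth : ContDiff ℝ (⊤ : ℕ∞) (fun q : ℝ × ℝ × ℝ => a q.1 q.2.1 q.2.2))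
    (ha_supp : HasCompactSupport (fun q : ℝ × ℝ × ℝ => a q.1 q.2.1 q.2.2))
    (Cnk : ℝ)
    (hCnk : Cnk = (1 / (k : ℝ)) * ∏ j ∈ Finset.Icc 1 (2 * n), ((j : ℝ) - 2 * n / k)⁻¹)
    (da : ℂ)
    (hda : da = (Cnk : ℂ) *
      ∫ t in Set.Ioi (0 : ℝ), ∫ y₂ in Set.Ioi (0 : ℝ),
        ((t ^ ((2 * n : ℝ) / k - 1) * y₂ ^ ((2 * n : ℝ) - (2 * n : ℝ) / k) : ℝ) : ℂ) *
          (iteratedDeriv (2 * n) (fun s : ℝ => a t 0 s) y₂ +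
           iteratedDeriv (2 * n) (fun s : ℝ => a (-t) 0 s) (-y₂)))
    (I : ℝ → ℂ)
    (hI : ∀ lam : ℝ, I lam = ∫ y₁ in Set.Ioi (0 : ℝ),
        (∫ y₂ : ℝ, a (lam * y₁ ^ k * y₂) y₁ y₂) * ((y₁ ^ (2 * n - 1) : ℝ) : ℂ)) :
    ((fun lam : ℝ => I lam - ((lam ^ (-(2 * n : ℝ) / k) : ℝ) : ℂ) * da)
        =O[atTop] fun lam : ℝ => lam ^ (-((2 * n : ℝ) + 1) / k) * Real.log lam) ∧
    (¬ k ∣ (2 * n + 1) →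
      (fun lam : ℝ => I lam - ((lam ^ (-(2 * n : ℝ) / k) : ℝ) : ℂ) * da)
        =O[atTop] fun lam : ℝ => lam ^ (-((2 * n : ℝ) + 1) / k)) := by
  obtain ⟨hlog, hpow⟩ := Ink_leading_term_simple_pole_general (ν := (2 * n : ℕ)) (k := k)
    (by exact_mod_cast (by omega : 0 < 2 * n)) (by exact_mod_cast hk) (by omega : 2 * n ≠ 0)
    (contDiff_infty.1 ha_smooth (2 * n)) ha_supp
  simp only [scaledIntegral_natCast (by omega : 1 ≤ 2 * n), poleCoeff_of_even (even_two_mul n),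
    Complex.real_smul] at hlog hpow
  push_cast at hlog hpow
  subst hCnk hda
  simp only [hI, one_div]
  push_cast
  exact ⟨hlog, fun hdvd => hpow <| by
    exact_mod_cast (show 2 * n + 1 ≤ k from hk).lt_of_ne fun h => hdvd (h ▸ dvd_rfl)⟩
end

section
/- Let k > 2, write z = (x,ξ) ∈ ℝ^n × ℝ^n and let z₀ = (x₀,ξ₀). Let p₀ be a smooth real-valued function on a neighborhood of z₀ with p₀(z₀) = E_c and with all partial derivatives of order 1 ≤ j ≤ k−1 vanishing at z₀; let 𝔭_k denote the degree-k homogeneous term of the Taylor expansion of p₀ at z₀ (a homogeneous polynomial of degree k in z − z₀). Let S be a smooth real-valued function on (−T,T) × Ω, Ω a neighborhood of z₀, satisfying the Hamilton–Jacobi equation ∂_t S(t,x,ξ) + p₀(x, ∂_x S(t,x,ξ)) = 0 with initial condition S(0,x,ξ) = ⟨x,ξ⟩ (and such that (x, ∂_xS(t,x,ξ)) stays in the domain of p₀). Then, on a possibly smaller neighborhood (−T,T) × Ω′ of (0,z₀), one can write S(t,x,ξ) − ⟨x,ξ⟩ + tE_c = −t( 𝔭_k(x,ξ) + R(x,ξ)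 + t·G(t,x,ξ) ), where R = p₀ − E_c − 𝔭_k satisfies |R(z)| ≤ C|z−z₀|^{k+1}, and G is smooth with |G(t,z)| ≤ C|z−z₀|^{k+1} uniformly for t in compact subsets of (−T,T). -/
/- STATEMENT 9: Structure of the phase ("Lemma structure phase"): the generating
function S of the Hamiltonian flow of p₀ near a critical point z₀ with flat
(k−1)-jet satisfies S(t,x,ξ) − ⟨x,ξ⟩ + tE_c = −t(𝔭_k + R + tG) with
R = p₀ − E_c − 𝔭_k = O(|z−z₀|^{k+1}) and G = O(|z−z₀|^{k+1}) uniformly for t in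
compact subsets of (−T,T). -/

open MeasureTheory

/-! Let `Φ(t, z) = (x, ∂ₓS(t, z))`, so that `∂ₜS = -p₀ ∘ Φ`. Differentiating this equation gives
`∂ₜΦ = O(|dp₀(Φ)|)` and `∂ₜ²S = -dp₀(Φ) ∂ₜΦ = O(|dp₀(Φ)|²)`. Since `dp₀` is locally Lipschitz and
vanishes at `z₀`, Grönwall's inequality yields `Φ(t, z₀) = z₀` for all `t`, so
`Φ(t, z) - z₀ = O(|z - z₀|)` and `∂ₜ²S = O(|z - z₀|^{2(k-1)})`. The function `-G` is the integral
remainder `∫₀¹ (1 - s) ∂ₜ²S(st, z) ds` of the second order Taylor formula in time at `t = 0`, where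
`S = ⟨x, ξ⟩` and `∂ₜS = -p₀`. -/

open Set Filter Topology Asymptotics
open scoped ContDiff Pointwise

universe u

section Asymptotics

variable {X E F : Type*} [TopologicalSpace X] [NormedAddCommGroup E] [NormedAddCommGroup F]
  {f : X → E} {g : X → F}

theorem isBigO_principal_of_forall_nhds {K : Set X} (hK : IsCompact K)
    (h : ∀ x ∈ K, f =O[𝓝 x] g) : f =O[𝓟 K] g := by
  refine hK.induction_on (p := fun s => f =O[𝓟 s] g) (by simp)
    (fun s t hst ht => ht.mono (principal_mono.2 hst))
    (fun s t hs ht => by simpa only [sup_principal] using hs.sup ht) fun x hx => ?_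
  obtain ⟨c, hc⟩ := (h x hx).bound
  exact ⟨_, mem_nhdsWithin_of_mem_nhds hc, IsBigO.of_bound c (mem_principal_self _)⟩

theorem isBigO_nhds_of_continuousAt_of_ne_zero {x : X} (hf : ContinuousAt f x)
    (hg : ContinuousAt g x) (hgx : g x ≠ 0) : f =O[𝓝 x] g := by
  refine (hf.tendsto.isBigO_one ℝ).trans ((isBigO_const_left_iff_pos_le_norm one_ne_zero).2
    ⟨‖g x‖ / 2, half_pos (norm_pos_iff.2 hgx), ?_⟩)
  exact (hg.norm.eventually_const_lt (half_lt_self (norm_pos_iff.2 hgx))).mono fun _ => le_of_lt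

end Asymptotics

section Gronwall

variable {E : Type*} [NormedAddCommGroup E] [NormedSpace ℝ E]

theorem eq_zero_of_forall_deriv_isBigO {y y' : ℝ → E} {t₀ t : ℝ}
    (hy : ∀ s ∈ uIcc t₀ t, HasDerivAt y (y' s) s) (hO : ∀ s ∈ uIcc t₀ t, y' =O[𝓝 s] y)
    (hy₀ : y t₀ = 0) : y t = 0 := by
  obtain ⟨C, hC⟩ := isBigO_principal.1 (isBigO_principal_of_forall_nhds isCompact_uIcc hO)
  have hmem {s : ℝ} (hs : s ∈ Icc (0 : ℝ) 1) : AffineMap.lineMap t₀ t s ∈ uIcc t₀ t := by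
    rw [← segment_eq_uIcc, segment_eq_image_lineMap]
    exact mem_image_of_mem _ hs
  have hderiv {s : ℝ} (hs : s ∈ Icc (0 : ℝ) 1) : HasDerivAt (y ∘ AffineMap.lineMap t₀ t)
      ((t - t₀) • y' (AffineMap.lineMap t₀ t s)) s :=
    (hy _ (hmem hs)).scomp s AffineMap.hasDerivAt_lineMap
  have hzero := eq_zero_of_abs_deriv_le_mul_abs_self_of_eq_zero_right (K := ‖t - t₀‖ * C)
    (fun s hs => (hderiv hs).continuousAt.continuousWithinAt)
    (fun s hs => (hderiv (Ico_subset_Icc_self hs)).hasDerivWithinAt) (by simpa using hy₀)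
    (fun s hs => ?_) 1 (right_mem_Icc.2 zero_le_one)
  · simpa using hzero
  · rw [norm_smul, mul_assoc]
    gcongr
    exact hC _ (hmem (Ico_subset_Icc_self hs))

end Gronwall

section Taylor

variable {E F : Type*} [NormedAddCommGroup E] [NormedSpace ℝ E] [NormedAddCommGroup F]
  [NormedSpace ℝ F] {f : E → F} {x₀ : E} {m : ℕ}

theorem sub_sum_iteratedFDeriv_isBigO [CompleteSpace F] (hf : ContDiffAt ℝ (m + 1) f x₀) :
    (fun x => f x - ∑ j ∈ Finset.range (m + 1),
      (j.factorial : ℝ)⁻¹ • iteratedFDeriv ℝ j f x₀ (fun _ => x - x₀))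
      =O[𝓝 x₀] fun x => ‖x - x₀‖ ^ (m + 1) := by
  have hbound : ∀ᶠ x in 𝓝 x₀, ‖iteratedFDeriv ℝ (m + 1) f x‖
      < ‖iteratedFDeriv ℝ (m + 1) f x₀‖ + 1 :=
    (hf.iteratedFDeriv_right (m := 0) (i := m + 1)
      (by simp)).continuousAt.norm.eventually_lt_const (lt_add_one _)
  obtain ⟨r, hr, hball⟩ := Metric.eventually_nhds_iff_ball.1
    ((hf.eventually (by exact_mod_cast WithTop.natCast_ne_top (m + 1))).and hbound)
  refine IsBigO.of_bound ((m.factorial : ℝ)⁻¹ * (‖iteratedFDeriv ℝ (m + 1) f x₀‖ + 1)) ?_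
  filter_upwards [Metric.ball_mem_nhds x₀ hr] with x hx
  have hseg : ∀ t ∈ Icc (0 : ℝ) 1, x₀ + t • (x - x₀) ∈ Metric.ball x₀ r := fun t ht =>
    (convex_ball x₀ r).add_smul_sub_mem (Metric.mem_ball_self hr) hx ht
  have htaylor := map_add_eq_sum_add_integral_iteratedFDeriv fun t ht => (hball _ (hseg t ht)).1
  rw [add_sub_cancel] at htaylor
  rw [htaylor, add_sub_cancel_left, norm_smul, norm_inv, Real.norm_natCast, mul_assoc]
  gcongr
  refine (intervalIntegral.norm_integral_le_of_norm_le_const (C := _) fun t ht => ?_).trans_eq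
    (by rw [sub_zero, abs_one, mul_one])
  rw [uIoc_of_le zero_le_one] at ht
  calc ‖(1 - t) ^ m • iteratedFDeriv ℝ (m + 1) f (x₀ + t • (x - x₀)) fun _ => x - x₀‖
      ≤ 1 * (‖iteratedFDeriv ℝ (m + 1) f (x₀ + t • (x - x₀))‖ * ‖x - x₀‖ ^ (m + 1)) := by
        rw [norm_smul]
        gcongr
        · rw [norm_pow, Real.norm_of_nonneg (by linarith [ht.2])]
          exact pow_le_one₀ (by linarith [ht.2]) (by linarith [ht.1])
        · simpa using ContinuousMultilinearMap.le_opNorm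
            (iteratedFDeriv ℝ (m + 1) f (x₀ + t • (x - x₀))) fun _ => x - x₀
    _ ≤ (‖iteratedFDeriv ℝ (m + 1) f x₀‖ + 1) * ‖‖x - x₀‖ ^ (m + 1)‖ := by
        rw [one_mul, norm_pow, norm_norm]
        gcongr
        exact (hball _ (hseg t (Ioc_subset_Icc_self ht))).2.le

theorem isBigO_pow_of_iteratedFDeriv_eq_zero [CompleteSpace F] (hf : ContDiffAt ℝ m f x₀)
    (hjets : ∀ j < m, iteratedFDeriv ℝ j f x₀ = 0) : f =O[𝓝 x₀] fun x => ‖x - x₀‖ ^ m := by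
  cases m with
  | zero => simpa using hf.continuousAt.tendsto.isBigO_one ℝ
  | succ m =>
    refine (sub_sum_iteratedFDeriv_isBigO (mod_cast hf)).congr_left fun x => ?_
    rw [Finset.sum_eq_zero fun j hj => by simp [hjets j (Finset.mem_range.1 hj)], sub_zero]

theorem fderiv_isBigO_pow_of_iteratedFDeriv_eq_zero [CompleteSpace F]
    (hf : ContDiffAt ℝ (m + 1) f x₀)
    (hjets : ∀ j, 1 ≤ j → j ≤ m → iteratedFDeriv ℝ j f x₀ = 0) :
    fderiv ℝ f =O[𝓝 x₀] fun x => ‖x - x₀‖ ^ m := by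
  refine isBigO_pow_of_iteratedFDeriv_eq_zero (hf.fderiv_right le_rfl) fun j hj => ?_
  rw [← norm_eq_zero, norm_iteratedFDeriv_fderiv, hjets (j + 1) (by omega) hj, norm_zero]

theorem sub_sub_iteratedFDeriv_isBigO_pow [CompleteSpace F] (hm : m ≠ 0)
    (hf : ContDiffAt ℝ (m + 1) f x₀)
    (hjets : ∀ j, 1 ≤ j → j < m → iteratedFDeriv ℝ j f x₀ = 0) :
    (fun x => f x - f x₀ - (m.factorial : ℝ)⁻¹ • iteratedFDeriv ℝ m f x₀ fun _ => x - x₀)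
      =O[𝓝 x₀] fun x => ‖x - x₀‖ ^ (m + 1) := by
  refine (sub_sum_iteratedFDeriv_isBigO hf).congr_left fun x => ?_
  have hsum : ∑ j ∈ Finset.range m,
      (j.factorial : ℝ)⁻¹ • iteratedFDeriv ℝ j f x₀ (fun _ => x - x₀) = f x₀ := by
    have hvanish : ∀ j ∈ Finset.range m, j ≠ 0 →
        (j.factorial : ℝ)⁻¹ • iteratedFDeriv ℝ j f x₀ (fun _ => x - x₀) = 0 := fun j hj hj0 => by
      simp [hjets j (Nat.one_le_iff_ne_zero.2 hj0) (Finset.mem_range.1 hj)]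
    rw [Finset.sum_eq_single_of_mem 0 (Finset.mem_range.2 (Nat.pos_of_ne_zero hm)) hvanish]
    simp
  rw [Finset.sum_range_succ, hsum, sub_sub]

end Taylor

section ParametricIntegral

variable {E F : Type*} [NormedAddCommGroup E] [NormedAddCommGroup F] {f : E × ℝ → F}
  {U : Set (E × ℝ)} {W : Set E} {a b : ℝ} {q₀ : E}

theorem exists_eventually_forall_uIcc_norm_le (hU : IsOpen U) (hf : ContinuousOn f U)
    (hq₀ : ∀ s ∈ uIcc a b, (q₀, s) ∈ U) :
    ∃ C : ℝ, ∀ᶠ q in 𝓝 q₀, ∀ s ∈ uIcc a b, (q, s) ∈ U ∧ ‖f (q, s)‖ ≤ C := by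
  have hcont : ContinuousOn (fun s => f (q₀, s)) (uIcc a b) := hf.comp (by fun_prop) hq₀
  obtain ⟨C, hC⟩ := isCompact_uIcc.exists_bound_of_continuousOn hcont
  refine ⟨C + 1, isCompact_uIcc.eventually_forall_of_forall_eventually fun s hs => ?_⟩
  have hfs : ContinuousAt f (q₀, s) := hf.continuousAt (hU.mem_nhds (hq₀ s hs))
  filter_upwards [hU.mem_nhds (hq₀ s hs),
    hfs.norm.eventually_lt_const ((hC s hs).trans_lt (lt_add_one C))] with p hpU hpC
  exact ⟨hpU, hpC.le⟩

theorem aestronglyMeasurable_slice (hf : ContinuousOn f U) {q : E}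
    (hq : ∀ s ∈ uIcc a b, (q, s) ∈ U) :
    AEStronglyMeasurable (fun s => f (q, s)) (volume.restrict (uIoc a b)) := by
  have hcont : ContinuousOn (fun s => f (q, s)) (uIcc a b) := hf.comp (by fun_prop) hq
  exact (hcont.mono uIoc_subset_uIcc).aestronglyMeasurable measurableSet_uIoc

theorem continuousOn_parametric_intervalIntegral [NormedSpace ℝ F] (hU : IsOpen U)
    (hWU : ∀ q ∈ W, ∀ s ∈ uIcc a b, (q, s) ∈ U) (hf : ContinuousOn f U) :
    ContinuousOn (fun q => ∫ s in a..b, f (q, s)) W := by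
  intro q₀ hq₀
  obtain ⟨C, hC⟩ := exists_eventually_forall_uIcc_norm_le hU hf (hWU q₀ hq₀)
  refine (intervalIntegral.continuousAt_of_dominated_interval (bound := fun _ => C)
    (hC.mono fun q hq => aestronglyMeasurable_slice hf fun s hs => (hq s hs).1)
    (hC.mono fun q hq => .of_forall fun s hs => (hq s (uIoc_subset_uIcc hs)).2)
    (by simp) (.of_forall fun s hs => ?_)).continuousWithinAt
  exact (hf.continuousAt (hU.mem_nhds (hWU q₀ hq₀ s (uIoc_subset_uIcc hs)))).comp
    (f := fun q => (q, s)) (by fun_prop)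

variable [NormedSpace ℝ E] [NormedSpace ℝ F]

theorem hasFDerivAt_parametric_intervalIntegral (hU : IsOpen U)
    (hq₀ : ∀ s ∈ uIcc a b, (q₀, s) ∈ U) (hf : ContDiffOn ℝ 1 f U) :
    HasFDerivAt (fun q => ∫ s in a..b, f (q, s))
      (∫ s in a..b, (fderiv ℝ f (q₀, s)).comp (ContinuousLinearMap.inl ℝ E ℝ)) q₀ := by
  have hf' : ContinuousOn (fun p => (fderiv ℝ f p).comp (ContinuousLinearMap.inl ℝ E ℝ)) U :=
    (hf.continuousOn_fderiv_of_isOpen hU le_rfl).clm_comp continuousOn_const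
  have hslice : ContinuousOn (fun s => f (q₀, s)) (uIcc a b) :=
    hf.continuousOn.comp (by fun_prop) hq₀
  obtain ⟨C, hC⟩ := exists_eventually_forall_uIcc_norm_le hU hf' hq₀
  refine intervalIntegral.hasFDerivAt_integral_of_dominated_of_fderiv_le (bound := fun _ => C)
    (F' := fun q s => (fderiv ℝ f (q, s)).comp (ContinuousLinearMap.inl ℝ E ℝ)) hC
    (hC.mono fun q hq => aestronglyMeasurable_slice hf.continuousOn fun s hs => (hq s hs).1)
    hslice.intervalIntegrable (aestronglyMeasurable_slice hf' hq₀)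
    (.of_forall fun s hs q hq => (hq s (uIoc_subset_uIcc hs)).2) (by simp)
    (.of_forall fun s hs q hq => ?_)
  have hd : DifferentiableAt ℝ f (q, s) :=
    (hf.contDiffAt (hU.mem_nhds (hq s (uIoc_subset_uIcc hs)).1)).differentiableAt one_ne_zero
  exact hd.hasFDerivAt.comp q (hasFDerivAt_prodMk_left q s)

-- `E` and `F` share a universe because the induction replaces `F` by `E →L[ℝ] F`.
theorem contDiffOn_parametric_intervalIntegral {E F : Type u} [NormedAddCommGroup E]
    [NormedSpace ℝ E] [NormedAddCommGroup F] [NormedSpace ℝ F] {f : E × ℝ → F}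
    {U : Set (E × ℝ)} {W : Set E} {n : ℕ∞} (hU : IsOpen U) (hW : IsOpen W)
    (hWU : ∀ q ∈ W, ∀ s ∈ uIcc a b, (q, s) ∈ U) (hf : ContDiffOn ℝ n f U) :
    ContDiffOn ℝ n (fun q => ∫ s in a..b, f (q, s)) W := by
  induction n using ENat.nat_induction generalizing F with
  | zero =>
    simp only [WithTop.coe_zero, contDiffOn_zero] at hf ⊢
    exact continuousOn_parametric_intervalIntegral hU hWU hf
  | succ n ih =>
    have hf : ContDiffOn ℝ (n + 1) f U := mod_cast hf
    have hderiv : ∀ q ∈ W, HasFDerivAt (fun q => ∫ s in a..b, f (q, s))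
        (∫ s in a..b, (fderiv ℝ f (q, s)).comp (ContinuousLinearMap.inl ℝ E ℝ)) q := fun q hq =>
      hasFDerivAt_parametric_intervalIntegral hU (hWU q hq) (hf.of_le (by simp))
    suffices ContDiffOn ℝ (n + 1) (fun q => ∫ s in a..b, f (q, s)) W from mod_cast this
    rw [contDiffOn_succ_iff_fderiv_of_isOpen hW]
    refine ⟨fun q hq => (hderiv q hq).differentiableAt.differentiableWithinAt, by simp, ?_⟩
    refine (ih (f := fun p => (fderiv ℝ f p).comp (ContinuousLinearMap.inl ℝ E ℝ)) ?_).congr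
      fun q hq => (hderiv q hq).fderiv
    exact (hf.fderiv_of_isOpen hU le_rfl).clm_comp contDiffOn_const
  | top ih =>
    exact contDiffOn_infty.2 fun n => ih n (hf.of_le (mod_cast le_top))

end ParametricIntegral

section TimeTaylor

variable {Z E : Type*} [NormedAddCommGroup Z] [NormedSpace ℝ Z] [NormedAddCommGroup E]
  [NormedSpace ℝ E] {F : ℝ × Z → E} {I : Set ℝ} {t : ℝ} {z : Z}

/-- The second time derivative `∂ₜ²F` of a function `F` of `(t, z)`. -/
noncomputable def secondTimeDeriv (F : ℝ × Z → E) (q : ℝ × Z) : E :=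
  fderiv ℝ (fderiv ℝ F) q (1, 0) (1, 0)

/-- The normalized integral remainder `∫₀¹ (1 - s) ∂ₜ²F(st, z) ds` in the second order Taylor
formula for `t ↦ F(t, z)` at `t = 0`; the actual remainder is `t ^ 2` times this one. -/
noncomputable def timeTaylorRemainder (F : ℝ × Z → E) (t : ℝ) (z : Z) : E :=
  ∫ s in (0 : ℝ)..1, (1 - s) • secondTimeDeriv F (s * t, z)

theorem eq_add_add_sq_smul_timeTaylorRemainder [CompleteSpace E]
    (hF : ∀ s ∈ Icc (0 : ℝ) 1, ContDiffAt ℝ 2 F (s * t, z)) :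
    F (t, z) = F (0, z) + t • fderiv ℝ F (0, z) (1, 0) + t ^ 2 • timeTaylorRemainder F t z := by
  have hline (s : ℝ) : ((0, z) : ℝ × Z) + s • t • (1, 0) = (s * t, z) := by simp
  have htaylor := map_add_eq_sum_add_integral_iteratedFDeriv (n := 1) (f := F) (x := (0, z))
    (y := t • (1, 0)) fun s hs => by
      rw [hline, Nat.cast_one, one_add_one_eq_two]
      exact hF s hs
  have hquad (s : ℝ) : (1 - s) ^ 1 • iteratedFDeriv ℝ (1 + 1) F (s * t, z)
      (fun _ => t • (1, 0)) = t ^ 2 • (1 - s) • secondTimeDeriv F (s * t, z) := by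
    rw [iteratedFDeriv_two_apply]
    simp only [map_smul, smul_apply, secondTimeDeriv]
    module
  have hend : ((0, z) : ℝ × Z) + t • (1, 0) = (t, z) := by simp
  simp only [hline, hquad, hend, intervalIntegral.integral_smul, Finset.sum_range_succ,
    Finset.sum_range_zero, zero_add, Nat.factorial_zero, Nat.factorial_one, Nat.cast_one, inv_one,
    one_smul, iteratedFDeriv_zero_apply, iteratedFDeriv_one_apply, map_smul] at htaylor
  exact htaylor

theorem hasDerivAt_time (hF : DifferentiableAt ℝ F (t, z)) :
    HasDerivAt (fun s => F (s, z)) (fderiv ℝ F (t, z) (1, 0)) t :=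
  hF.hasFDerivAt.comp_hasDerivAt t ((hasDerivAt_id t).prodMk (hasDerivAt_const t z))

theorem continuousAt_secondTimeDeriv {q : ℝ × Z} (hF : ContDiffAt ℝ 2 F q) :
    ContinuousAt (secondTimeDeriv F) q :=
  ((((hF.fderiv_right one_add_one_eq_two.le).fderiv_right
    (zero_add 1).le).continuousAt.clm_apply continuousAt_const).clm_apply continuousAt_const)

theorem contDiffOn_secondTimeDeriv {U : Set (ℝ × Z)} (hU : IsOpen U) (hF : ContDiffOn ℝ ∞ F U) :
    ContDiffOn ℝ ∞ (secondTimeDeriv F) U :=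
  (((hF.fderiv_of_isOpen (m := ∞) hU (by simp)).fderiv_of_isOpen (m := ∞) hU
    (by simp)).clm_apply contDiffOn_const).clm_apply contDiffOn_const

theorem contDiffOn_timeTaylorRemainder {Z E : Type u} [NormedAddCommGroup Z] [NormedSpace ℝ Z]
    [NormedAddCommGroup E] [NormedSpace ℝ E] {F : ℝ × Z → E} {W : Set Z} (hI : IsOpen I)
    (hI₀ : StarConvex ℝ 0 I) (hW : IsOpen W) (hF : ContDiffOn ℝ ∞ F (I ×ˢ W)) :
    ContDiffOn ℝ ∞ (fun q : ℝ × Z => timeTaylorRemainder F q.1 q.2) (I ×ˢ W) := by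
  have hIW : IsOpen (I ×ˢ W) := hI.prod hW
  have hscale : ContDiff ℝ ∞ fun v : (ℝ × Z) × ℝ => (v.2 * v.1.1, v.1.2) := by fun_prop
  refine contDiffOn_parametric_intervalIntegral (n := ⊤)
    (f := fun v => (1 - v.2) • secondTimeDeriv F (v.2 * v.1.1, v.1.2))
    (hIW.preimage hscale.continuous) hIW (fun q hq s hs => ?_) ?_
  · rw [uIcc_of_le zero_le_one] at hs
    exact ⟨hI₀.smul_mem hq.1 hs.1 hs.2, hq.2⟩
  · exact (ContDiff.contDiffOn (by fun_prop)).smul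
      ((contDiffOn_secondTimeDeriv hIW hF).comp hscale.contDiffOn fun v hv => hv)

theorem exists_forall_norm_timeTaylorRemainder_le {E' : Type*} [NormedAddCommGroup E']
    {g : Z → E'} {K : Set ℝ} {B : Set Z} (hI₀ : StarConvex ℝ 0 I) (hK : IsCompact K)
    (hKI : K ⊆ I) (hB : IsCompact B)
    (hO : ∀ t ∈ I, ∀ z ∈ B, secondTimeDeriv F =O[𝓝 (t, z)] fun q => g q.2) :
    ∃ C : ℝ, ∀ t ∈ K, ∀ z ∈ B, ‖timeTaylorRemainder F t z‖ ≤ C * ‖g z‖ := by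
  have hsubset : Icc (0 : ℝ) 1 * K ⊆ I := by
    rintro _ ⟨s, hs, t, ht, rfl⟩
    exact hI₀.smul_mem (hKI ht) hs.1 hs.2
  obtain ⟨C, hC⟩ := isBigO_principal.1 (isBigO_principal_of_forall_nhds
    ((isCompact_Icc.mul hK).prod hB) fun q hq => hO q.1 (hsubset hq.1) q.2 hq.2)
  refine ⟨C, fun t ht z hz => ?_⟩
  refine (intervalIntegral.norm_integral_le_of_norm_le_const fun s hs => ?_).trans_eq
    (by rw [sub_zero, abs_one, mul_one])
  rw [uIoc_of_le zero_le_one] at hs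
  rw [norm_smul, Real.norm_of_nonneg (by linarith [hs.2])]
  exact (mul_le_of_le_one_left (norm_nonneg _) (by linarith [hs.1])).trans
    (hC _ ⟨mul_mem_mul (Ioc_subset_Icc_self hs) ht, hz⟩)

end TimeTaylor

section HamiltonJacobi

variable {X Ξ : Type*} [NormedAddCommGroup X] [NormedSpace ℝ X] [NormedAddCommGroup Ξ]
  [NormedSpace ℝ Ξ] {L : (ℝ × X × Ξ →L[ℝ] ℝ) →L[ℝ] Ξ} {F : ℝ × X × Ξ → ℝ} {p : X × Ξ → ℝ}
  {q : ℝ × X × Ξ} {z₀ : X × Ξ} {I : Set ℝ} {t : ℝ}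

/-- The map `Φ(t, x, ξ) = (x, ∂ₓF(t, x, ξ))` attached to a phase function `F`, where the continuous
linear map `L` extracts the `x`-gradient from the full differential. -/
noncomputable def phaseMap (L : (ℝ × X × Ξ →L[ℝ] ℝ) →L[ℝ] Ξ) (F : ℝ × X × Ξ → ℝ)
    (q : ℝ × X × Ξ) : X × Ξ :=
  (q.2.1, L (fderiv ℝ F q))

theorem contDiffAt_phaseMap (hF : ContDiffAt ℝ 2 F q) : ContDiffAt ℝ 1 (phaseMap L F) q :=
  contDiffAt_fst.comp q contDiffAt_snd |>.prodMk
    (L.contDiff.contDiffAt.comp q (hF.fderiv_right one_add_one_eq_two.le))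

theorem continuousAt_fderiv_phaseMap (hF : ContDiffAt ℝ 2 F q) :
    ContinuousAt (fderiv ℝ (phaseMap L F)) q :=
  ((contDiffAt_phaseMap hF).fderiv_right (m := 0) (by simp)).continuousAt

theorem fderiv_phaseMap_apply_time (hF : ContDiffAt ℝ 2 F q) :
    fderiv ℝ (phaseMap L F) q (1, 0) = (0, L (fderiv ℝ (fderiv ℝ F) q (1, 0))) := by
  have hF' : DifferentiableAt ℝ (fderiv ℝ F) q :=
    (hF.fderiv_right one_add_one_eq_two.le).differentiableAt one_ne_zero
  have hfst : HasFDerivAt (fun q : ℝ × X × Ξ => q.2.1) _ q :=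
    (hasFDerivAt_id (𝕜 := ℝ) q).snd.fst
  have hΦ : HasFDerivAt (phaseMap L F) _ q := hfst.prodMk (L.hasFDerivAt.comp q hF'.hasFDerivAt)
  rw [hΦ.fderiv]
  simp

theorem fderiv_fderiv_apply_time (hF : ContDiffAt ℝ 2 F q)
    (hHJ : ∀ᶠ q' in 𝓝 q, fderiv ℝ F q' (1, 0) = -p (phaseMap L F q'))
    (hp : DifferentiableAt ℝ p (phaseMap L F q)) :
    fderiv ℝ (fderiv ℝ F) q (1, 0)
      = -(fderiv ℝ p (phaseMap L F q)).comp (fderiv ℝ (phaseMap L F) q) := by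
  have hF' : DifferentiableAt ℝ (fderiv ℝ F) q :=
    (hF.fderiv_right one_add_one_eq_two.le).differentiableAt one_ne_zero
  have hΦ : DifferentiableAt ℝ (phaseMap L F) q :=
    (contDiffAt_phaseMap hF).differentiableAt one_ne_zero
  have hleft : HasFDerivAt (fun q => fderiv ℝ F q (1, 0)) _ q :=
    hF'.hasFDerivAt.clm_apply (hasFDerivAt_const ((1, 0) : ℝ × X × Ξ) q)
  have hright : HasFDerivAt (fun q => fderiv ℝ F q (1, 0))
      (-(fderiv ℝ p (phaseMap L F q)).comp (fderiv ℝ (phaseMap L F) q)) q :=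
    (hp.hasFDerivAt.comp q hΦ.hasFDerivAt).neg.congr_of_eventuallyEq hHJ
  refine ContinuousLinearMap.ext fun v => ?_
  rw [(hF.isSymmSndFDerivAt (by simp)).eq, ← hleft.unique hright]
  simp

theorem eventually_fderiv_fderiv_apply_time (hF : ContDiffAt ℝ 2 F q)
    (hHJ : ∀ᶠ q' in 𝓝 q, fderiv ℝ F q' (1, 0) = -p (phaseMap L F q'))
    (hp : ∀ᶠ z in 𝓝 (phaseMap L F q), DifferentiableAt ℝ p z) :
    ∀ᶠ q' in 𝓝 q, fderiv ℝ (fderiv ℝ F) q' (1, 0)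
      = -(fderiv ℝ p (phaseMap L F q')).comp (fderiv ℝ (phaseMap L F) q') := by
  filter_upwards [hF.eventually (by simp), hHJ.eventually_nhds,
    (contDiffAt_phaseMap hF).continuousAt.eventually hp] with q' hF' hHJ' hp'
  exact fderiv_fderiv_apply_time hF' hHJ' hp'

theorem fderiv_phaseMap_apply_time_isBigO (hF : ContDiffAt ℝ 2 F q)
    (hHJ : ∀ᶠ q' in 𝓝 q, fderiv ℝ F q' (1, 0) = -p (phaseMap L F q'))
    (hp : ∀ᶠ z in 𝓝 (phaseMap L F q), DifferentiableAt ℝ p z) :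
    (fun q' => fderiv ℝ (phaseMap L F) q' (1, 0))
      =O[𝓝 q] fun q' => fderiv ℝ p (phaseMap L F q') := by
  have hbdd := (continuousAt_fderiv_phaseMap (L := L) hF).tendsto.isBigO_one ℝ
  have hcomp : (fun q' => (fderiv ℝ p (phaseMap L F q')).comp (fderiv ℝ (phaseMap L F) q'))
      =O[𝓝 q] fun q' => fderiv ℝ p (phaseMap L F q') := by
    refine isBoundedBilinearMap_comp.isBigO_comp.trans ?_
    simpa using (isBigO_refl (fun q' => fderiv ℝ p (phaseMap L F q')) (𝓝 q)).norm_norm.mul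
      hbdd.norm_left
  refine ((isBigO_zero _ _).prod_left ((L.isBigO_comp _ _).trans hcomp.neg_left)).congr' ?_ .rfl
  filter_upwards [hF.eventually (by simp), eventually_fderiv_fderiv_apply_time hF hHJ hp]
    with q' hF' hq'
  rw [fderiv_phaseMap_apply_time hF', hq']

theorem secondTimeDeriv_isBigO_norm_sq (hF : ContDiffAt ℝ 2 F q)
    (hHJ : ∀ᶠ q' in 𝓝 q, fderiv ℝ F q' (1, 0) = -p (phaseMap L F q'))
    (hp : ∀ᶠ z in 𝓝 (phaseMap L F q), DifferentiableAt ℝ p z) :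
    secondTimeDeriv F =O[𝓝 q] fun q' => ‖fderiv ℝ p (phaseMap L F q')‖ ^ 2 := by
  have hmul : (fun q' => fderiv ℝ p (phaseMap L F q') (fderiv ℝ (phaseMap L F) q' (1, 0)))
      =O[𝓝 q] fun q' => ‖fderiv ℝ p (phaseMap L F q')‖ * ‖fderiv ℝ p (phaseMap L F q')‖ :=
    isBoundedBilinearMap_apply.isBigO_comp.trans
      ((isBigO_refl _ _).mul (fderiv_phaseMap_apply_time_isBigO hF hHJ hp).norm_norm)
  refine hmul.neg_left.congr' ?_ (.of_forall fun q' => (sq _).symm)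
  filter_upwards [eventually_fderiv_fderiv_apply_time hF hHJ hp] with q' hq'
  rw [secondTimeDeriv, hq', neg_apply, ContinuousLinearMap.comp_apply]

theorem phaseMap_eq_of_fderiv_eq_zero (hI₀ : StarConvex ℝ 0 I)
    (hF : ∀ s ∈ I, ContDiffAt ℝ 2 F (s, z₀))
    (hHJ : ∀ s ∈ I, ∀ᶠ q in 𝓝 (s, z₀), fderiv ℝ F q (1, 0) = -p (phaseMap L F q))
    (hp : ContDiffAt ℝ 2 p z₀) (hcrit : fderiv ℝ p z₀ = 0) (hinit : phaseMap L F (0, z₀) = z₀)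
    (ht : t ∈ I) : phaseMap L F (t, z₀) = z₀ := by
  have hsub : uIcc 0 t ⊆ I := segment_eq_uIcc (0 : ℝ) t ▸ hI₀.segment_subset ht
  have hderiv (s : ℝ) (hs : s ∈ uIcc 0 t) : HasDerivAt (fun s => phaseMap L F (s, z₀) - z₀)
      (fderiv ℝ (phaseMap L F) (s, z₀) (1, 0)) s := by
    have hΦ := (contDiffAt_phaseMap (L := L) (hF s (hsub hs))).differentiableAt one_ne_zero
    exact (hΦ.hasFDerivAt.comp_hasDerivAt s
      ((hasDerivAt_id s).prodMk (hasDerivAt_const s z₀))).sub_const z₀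
  refine sub_eq_zero.1 (eq_zero_of_forall_deriv_isBigO hderiv (fun s hs => ?_)
    (sub_eq_zero.2 hinit))
  have hslice : Tendsto (fun s : ℝ => (s, z₀)) (𝓝 s) (𝓝 (s, z₀)) :=
    Continuous.tendsto (by fun_prop) s
  rcases ne_or_eq (phaseMap L F (s, z₀) - z₀) 0 with hne | heq
  · have hdΦ : ContinuousAt (fun s => fderiv ℝ (phaseMap L F) (s, z₀) (1, 0)) s :=
      ((continuousAt_fderiv_phaseMap (hF s (hsub hs))).clm_apply continuousAt_const).tendsto.comp
        hslice
    exact isBigO_nhds_of_continuousAt_of_ne_zero hdΦ (hderiv s hs).continuousAt hne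
  · have hΦz : phaseMap L F (s, z₀) = z₀ := sub_eq_zero.1 heq
    have hΦ : Tendsto (fun s => phaseMap L F (s, z₀)) (𝓝 s) (𝓝 z₀) := by
      simpa only [sub_add_cancel, hΦz, zero_add] using
        (hderiv s hs).continuousAt.tendsto.add_const z₀
    have hdp : fderiv ℝ p =O[𝓝 z₀] fun z => z - z₀ := by
      simpa [hcrit] using ((hp.fderiv_right one_add_one_eq_two.le).differentiableAt
        one_ne_zero).isBigO_sub
    have hpdiff : ∀ᶠ z in 𝓝 z₀, DifferentiableAt ℝ p z :=
      (hp.eventually (by simp)).mono fun z hz => hz.differentiableAt two_ne_zero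
    exact ((fderiv_phaseMap_apply_time_isBigO (hF s (hsub hs)) (hHJ s (hsub hs))
      (hΦz.symm ▸ hpdiff)).comp_tendsto hslice).trans (hdp.comp_tendsto hΦ)

theorem phaseMap_sub_isBigO (hI : I ∈ 𝓝 t) (hF : ContDiffAt ℝ 2 F (t, z₀))
    (hfix : ∀ s ∈ I, phaseMap L F (s, z₀) = z₀) :
    (fun q => phaseMap L F q - z₀) =O[𝓝 (t, z₀)] fun q => q.2 - z₀ := by
  have hstrict := ((contDiffAt_phaseMap (L := L) hF).hasStrictFDerivAt one_ne_zero).isBigO_sub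
  have hpair : Tendsto (fun q : ℝ × X × Ξ => (q, (q.1, z₀))) (𝓝 (t, z₀))
      (𝓝 ((t, z₀), (t, z₀))) :=
    Continuous.tendsto' (by fun_prop) _ _ rfl
  refine ((hstrict.comp_tendsto hpair).congr' ?_ .rfl).trans (isBigO_of_le _ fun q => ?_)
  · filter_upwards [continuousAt_fst.eventually hI] with q hq
    simp [hfix q.1 hq]
  · simp [Prod.norm_def]

theorem secondTimeDeriv_isBigO_pow {j : ℕ} (hI : I ∈ 𝓝 t) (hF : ContDiffAt ℝ 2 F (t, z₀))
    (hHJ : ∀ᶠ q in 𝓝 (t, z₀), fderiv ℝ F q (1, 0) = -p (phaseMap L F q))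
    (hp : ∀ᶠ z in 𝓝 z₀, DifferentiableAt ℝ p z)
    (hdp : fderiv ℝ p =O[𝓝 z₀] fun z => ‖z - z₀‖ ^ j)
    (hfix : ∀ s ∈ I, phaseMap L F (s, z₀) = z₀) :
    secondTimeDeriv F =O[𝓝 (t, z₀)] fun q => ‖q.2 - z₀‖ ^ (2 * j) := by
  have hΦz : phaseMap L F (t, z₀) = z₀ := hfix t (mem_of_mem_nhds hI)
  have hΦ : Tendsto (phaseMap L F) (𝓝 (t, z₀)) (𝓝 z₀) := by
    simpa [hΦz] using (contDiffAt_phaseMap (L := L) hF).continuousAt.tendsto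
  have hdpΦ : (fun q => fderiv ℝ p (phaseMap L F q)) =O[𝓝 (t, z₀)] fun q => ‖q.2 - z₀‖ ^ j :=
    (hdp.comp_tendsto hΦ).trans ((phaseMap_sub_isBigO hI hF hfix).norm_norm.pow j)
  refine ((secondTimeDeriv_isBigO_norm_sq hF hHJ (hΦz.symm ▸ hp)).trans
    (hdpΦ.norm_left.pow 2)).congr_right fun q => ?_
  rw [← pow_mul, mul_comm]

theorem secondTimeDeriv_isBigO_pow_of_le {W : Set (X × Ξ)} {z : X × Ξ} {j m : ℕ} (hI : IsOpen I)
    (hI₀ : StarConvex ℝ 0 I) (hW : IsOpen W) (hF : ∀ q ∈ I ×ˢ W, ContDiffAt ℝ 2 F q)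
    (hHJ : ∀ q ∈ I ×ˢ W, fderiv ℝ F q (1, 0) = -p (phaseMap L F q))
    (hinit : ∀ z ∈ W, phaseMap L F (0, z) = z) (hp : ContDiffAt ℝ 2 p z₀)
    (hdp : fderiv ℝ p =O[𝓝 z₀] fun z => ‖z - z₀‖ ^ j) (hm : m ≤ 2 * j) (ht : t ∈ I) (hz : z ∈ W) :
    secondTimeDeriv F =O[𝓝 (t, z)] fun q => ‖q.2 - z₀‖ ^ m := by
  by_cases hzm : ‖z - z₀‖ ^ m = 0
  · obtain ⟨hzz₀, hm₀⟩ := pow_eq_zero_iff'.1 hzm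
    obtain rfl : z = z₀ := sub_eq_zero.1 (norm_eq_zero.1 hzz₀)
    have hHJ' (s : ℝ) (hs : s ∈ I) :
        ∀ᶠ q in 𝓝 (s, z), fderiv ℝ F q (1, 0) = -p (phaseMap L F q) :=
      eventually_of_mem ((hI.prod hW).mem_nhds ⟨hs, hz⟩) hHJ
    have hfix (s : ℝ) (hs : s ∈ I) : phaseMap L F (s, z) = z :=
      phaseMap_eq_of_fderiv_eq_zero hI₀ (fun s hs => hF _ ⟨hs, hz⟩) hHJ' hp
        (hdp.eq_zero_of_norm_pow (by omega)) (hinit z hz) hs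
    have hpdiff : ∀ᶠ z' in 𝓝 z, DifferentiableAt ℝ p z' :=
      (hp.eventually (by simp)).mono fun z' hz' => hz'.differentiableAt two_ne_zero
    have hle_one : ∀ᶠ q : ℝ × X × Ξ in 𝓝 (t, z), ‖q.2 - z‖ ≤ 1 :=
      (Tendsto.eventually_lt_const (by simp : ‖z - z‖ < 1)
        (Continuous.tendsto (by fun_prop) (t, z))).mono fun _ => le_of_lt
    refine (secondTimeDeriv_isBigO_pow (hI.mem_nhds ht) (hF _ ⟨ht, hz⟩) (hHJ' t ht) hpdiff hdp
      hfix).trans (.of_norm_eventuallyLE (hle_one.mono fun q hq => ?_))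
    simpa using pow_le_pow_of_le_one (norm_nonneg _) hq hm
  · exact isBigO_nhds_of_continuousAt_of_ne_zero (continuousAt_secondTimeDeriv (hF _ ⟨ht, hz⟩))
      (by fun_prop) hzm

theorem exists_hamiltonJacobi_remainder {X Ξ : Type} [NormedAddCommGroup X] [NormedSpace ℝ X]
    [NormedAddCommGroup Ξ] [NormedSpace ℝ Ξ] {L : (ℝ × X × Ξ →L[ℝ] ℝ) →L[ℝ] Ξ}
    {F : ℝ × X × Ξ → ℝ} {p : X × Ξ → ℝ} {z₀ : X × Ξ} {W : Set (X × Ξ)} {j m : ℕ} (hI : IsOpen I)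
    (hI₀ : StarConvex ℝ 0 I) (h0I : 0 ∈ I) (hW : IsOpen W) (hF : ContDiffOn ℝ ∞ F (I ×ˢ W))
    (hHJ : ∀ q ∈ I ×ˢ W, fderiv ℝ F q (1, 0) = -p (phaseMap L F q))
    (hinit : ∀ z ∈ W, phaseMap L F (0, z) = z) (hp : ContDiffAt ℝ 2 p z₀)
    (hdp : fderiv ℝ p =O[𝓝 z₀] fun z => ‖z - z₀‖ ^ j) (hm : m ≤ 2 * j) :
    ∃ G : ℝ → X × Ξ → ℝ, ContDiffOn ℝ ∞ (fun q : ℝ × X × Ξ => G q.1 q.2) (I ×ˢ W) ∧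
      (∀ t ∈ I, ∀ z ∈ W, F (t, z) = F (0, z) - t * (p z + t * G t z)) ∧
      ∀ K B, IsCompact K → K ⊆ I → IsCompact B → B ⊆ W →
        ∃ C : ℝ, ∀ t ∈ K, ∀ z ∈ B, |G t z| ≤ C * ‖z - z₀‖ ^ m := by
  have hF₂ (q) (hq : q ∈ I ×ˢ W) : ContDiffAt ℝ 2 F q := mod_cast
    contDiffAt_infty.1 (hF.contDiffAt ((hI.prod hW).mem_nhds hq)) 2
  refine ⟨fun t z => -timeTaylorRemainder F t z,
    (contDiffOn_timeTaylorRemainder hI hI₀ hW hF).neg, fun t ht z hz => ?_,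
    fun K B hK hKI hB hBW => ?_⟩
  · rw [eq_add_add_sq_smul_timeTaylorRemainder fun s hs =>
      hF₂ _ ⟨hI₀.smul_mem ht hs.1 hs.2, hz⟩, hHJ _ ⟨h0I, hz⟩, hinit z hz, smul_eq_mul, smul_eq_mul]
    ring
  · simpa using exists_forall_norm_timeTaylorRemainder_le (g := fun z => ‖z - z₀‖ ^ m) hI₀ hK hKI
      hB fun t ht z hz => secondTimeDeriv_isBigO_pow_of_le hI hI₀ hW hF₂ hHJ hinit hp hdp hm ht
        (hBW hz)

end HamiltonJacobi

section Coordinates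

variable {ι : Type*} [Fintype ι] [DecidableEq ι]

/-- The linear map extracting from the differential at `(t, x, ξ)` of a scalar function its
gradient in the coordinates of `x`. -/
noncomputable def xGradient (ι : Type*) [Fintype ι] [DecidableEq ι] :
    (ℝ × (ι → ℝ) × (ι → ℝ) →L[ℝ] ℝ) →L[ℝ] (ι → ℝ) :=
  ContinuousLinearMap.pi fun i => ContinuousLinearMap.apply ℝ ℝ (0, Pi.single i 1, 0)

theorem phaseMap_xGradient {F : ℝ × (ι → ℝ) × (ι → ℝ) → ℝ} {t : ℝ} {x ξ : ι → ℝ}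
    (hF : DifferentiableAt ℝ F (t, x, ξ)) : phaseMap (xGradient ι) F (t, x, ξ)
      = (x, fun i => fderiv ℝ (fun x' => F (t, x', ξ)) x (Pi.single i 1)) := by
  have hslice : HasFDerivAt (fun x' => F (t, x', ξ)) _ x :=
    hF.hasFDerivAt.comp x ((hasFDerivAt_const t x).prodMk
      ((hasFDerivAt_id x).prodMk (hasFDerivAt_const ξ x)))
  rw [hslice.fderiv]
  ext i <;> simp [phaseMap, xGradient]

theorem fderiv_apply_time_eq_neg {F : ℝ × (ι → ℝ) × (ι → ℝ) → ℝ} {p : (ι → ℝ) × (ι → ℝ) → ℝ}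
    {t : ℝ} {x ξ : ι → ℝ} (hF : DifferentiableAt ℝ F (t, x, ξ))
    (hHJ : deriv (fun s => F (s, x, ξ)) t
      + p (x, fun i => fderiv ℝ (fun x' => F (t, x', ξ)) x (Pi.single i 1)) = 0) :
    fderiv ℝ F (t, x, ξ) (1, 0) = -p (phaseMap (xGradient ι) F (t, x, ξ)) := by
  rw [phaseMap_xGradient hF, ← (hasDerivAt_time hF).deriv]
  exact eq_neg_of_add_eq_zero_left hHJ

theorem phaseMap_xGradient_zero {F : ℝ × (ι → ℝ) × (ι → ℝ) → ℝ} {z : (ι → ℝ) × (ι → ℝ)}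
    (hF : DifferentiableAt ℝ F (0, z))
    (hinit : ∀ᶠ z' in 𝓝 z, F (0, z') = ∑ i, z'.1 i * z'.2 i) :
    phaseMap (xGradient ι) F (0, z) = z := by
  obtain ⟨x, ξ⟩ := z
  have hslice : (fun x' => F (0, x', ξ)) =ᶠ[𝓝 x] fun x' => ∑ i, x' i * ξ i :=
    (Continuous.tendsto (by fun_prop : Continuous fun x' => (x', ξ)) x).eventually hinit
  have hlin : HasFDerivAt (fun x' : ι → ℝ => ∑ i, x' i * ξ i)
      (∑ i, ξ i • ContinuousLinearMap.proj (R := ℝ) (φ := fun _ : ι => ℝ) i) x :=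
    HasFDerivAt.fun_sum fun i _ => (hasFDerivAt_apply i x).mul_const (ξ i)
  rw [phaseMap_xGradient hF, hslice.fderiv_eq, hlin.fderiv]
  ext i <;> simp [Pi.single_apply]

end Coordinates

theorem generating_function_phase_structure_general
    (n k m : ℕ) (hk : k ≠ 0) (hm : m ≤ 2 * (k - 1))
    (Ec T : ℝ) (hT : 0 < T)
    (z₀ : (Fin n → ℝ) × (Fin n → ℝ))
    (p₀ : (Fin n → ℝ) × (Fin n → ℝ) → ℝ)
    (hp₀ : ContDiffAt ℝ ∞ p₀ z₀)
    (hval : p₀ z₀ = Ec)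
    (hjets : ∀ j : ℕ, 1 ≤ j → j ≤ k - 1 → iteratedFDeriv ℝ j p₀ z₀ = 0)
    (P : (Fin n → ℝ) × (Fin n → ℝ) → ℝ)
    (hP : ∀ z : (Fin n → ℝ) × (Fin n → ℝ),
      P z = (1 / (Nat.factorial k : ℝ)) *
        iteratedFDeriv ℝ k p₀ z₀ (fun _ : Fin k => z - z₀))
    (Ω : Set ((Fin n → ℝ) × (Fin n → ℝ))) (hΩ : Ω ∈ 𝓝 z₀)
    (S : ℝ → (Fin n → ℝ) → (Fin n → ℝ) → ℝ)
    (hS : ContDiffOn ℝ (⊤ : ℕ∞)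
      (fun q : ℝ × (Fin n → ℝ) × (Fin n → ℝ) => S q.1 q.2.1 q.2.2)
      (Ioo (-T) T ×ˢ Ω))
    (gradS : ℝ → (Fin n → ℝ) → (Fin n → ℝ) → (Fin n → ℝ))
    (hgradS : ∀ (t : ℝ) (x ξ : Fin n → ℝ),
      gradS t x ξ = fun i => fderiv ℝ (fun x' => S t x' ξ) x (Pi.single i 1))
    (hHJ : ∀ (t : ℝ) (x ξ : Fin n → ℝ), t ∈ Ioo (-T) T → (x, ξ) ∈ Ω →
      deriv (fun s : ℝ => S s x ξ) t + p₀ (x, gradS t x ξ) = 0)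
    (hinit : ∀ x ξ : Fin n → ℝ, (x, ξ) ∈ Ω → S 0 x ξ = ∑ i, x i * ξ i) :
    ∃ Ω' ∈ 𝓝 z₀, Ω' ⊆ Ω ∧
      ∃ G : ℝ → (Fin n → ℝ) × (Fin n → ℝ) → ℝ,
        ContDiffOn ℝ (⊤ : ℕ∞)
          (fun q : ℝ × (Fin n → ℝ) × (Fin n → ℝ) => G q.1 q.2)
          (Ioo (-T) T ×ˢ Ω') ∧
        (∀ (t : ℝ) (x ξ : Fin n → ℝ), t ∈ Ioo (-T) T → (x, ξ) ∈ Ω' →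
          S t x ξ - (∑ i, x i * ξ i) + t * Ec
            = -t * (P (x, ξ) + (p₀ (x, ξ) - Ec - P (x, ξ)) + t * G t (x, ξ))) ∧
        (∃ C : ℝ, ∀ z ∈ Ω', |p₀ z - Ec - P z| ≤ C * ‖z - z₀‖ ^ (k + 1)) ∧
        (∀ K : Set ℝ, IsCompact K → K ⊆ Ioo (-T) T →
          ∃ C : ℝ, ∀ t ∈ K, ∀ z ∈ Ω', |G t z| ≤ C * ‖z - z₀‖ ^ m) := by
  set F : ℝ × (Fin n → ℝ) × (Fin n → ℝ) → ℝ := fun q => S q.1 q.2.1 q.2.2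
  have h0T : 0 ∈ Ioo (-T) T := ⟨neg_neg_of_pos hT, hT⟩
  have hF : ContDiffOn ℝ ∞ F (Ioo (-T) T ×ˢ interior Ω) :=
    hS.mono (prod_mono Subset.rfl interior_subset)
  have hFd (q) (hq : q ∈ Ioo (-T) T ×ˢ interior Ω) : DifferentiableAt ℝ F q :=
    (hF.contDiffAt ((isOpen_Ioo.prod isOpen_interior).mem_nhds hq)).differentiableAt (by simp)
  have hdp : fderiv ℝ p₀ =O[𝓝 z₀] fun z => ‖z - z₀‖ ^ (k - 1) :=
    fderiv_isBigO_pow_of_iteratedFDeriv_eq_zero (mod_cast contDiffAt_infty.1 hp₀ (k - 1 + 1)) hjets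
  have hR : (fun z => p₀ z - Ec - P z) =O[𝓝 z₀] fun z => ‖z - z₀‖ ^ (k + 1) :=
    (sub_sub_iteratedFDeriv_isBigO_pow hk (mod_cast contDiffAt_infty.1 hp₀ (k + 1)) fun j hj hjk =>
      hjets j hj (by omega)).congr_left fun z => by rw [hval, hP, one_div, smul_eq_mul]
  obtain ⟨G, hG, hSG, hGbound⟩ := exists_hamiltonJacobi_remainder (L := xGradient (Fin n))
    isOpen_Ioo ((convex_Ioo (-T) T).starConvex h0T) h0T isOpen_interior hF
    (fun q hq => fderiv_apply_time_eq_neg (hFd q hq)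
      (hgradS q.1 q.2.1 q.2.2 ▸ hHJ q.1 q.2.1 q.2.2 hq.1 (interior_subset hq.2)))
    (fun z hz => phaseMap_xGradient_zero (hFd _ ⟨h0T, hz⟩)
      (eventually_of_mem (mem_interior_iff_mem_nhds.1 hz) fun z' => hinit z'.1 z'.2))
    (mod_cast contDiffAt_infty.1 hp₀ 2) hdp hm
  obtain ⟨C, hC⟩ := hR.bound
  obtain ⟨r, hr, hball⟩ := Metric.nhds_basis_closedBall.mem_iff.1
    (inter_mem (interior_mem_nhds.2 hΩ) hC)
  obtain ⟨hballΩ, hballC⟩ := subset_inter_iff.1 hball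
  refine ⟨Metric.closedBall z₀ r, Metric.closedBall_mem_nhds z₀ hr, hballΩ.trans interior_subset,
    G, hG.mono (prod_mono Subset.rfl hballΩ), fun t x ξ ht hz => ?_,
    ⟨C, fun z hz => by simpa using hballC hz⟩,
    fun K hK hKT => hGbound K _ hK hKT (isCompact_closedBall z₀ r) hballΩ⟩
  have hzero : F (0, x, ξ) = ∑ i, x i * ξ i := hinit x ξ (interior_subset (hballΩ hz))
  linear_combination hSG t ht (x, ξ) (hballΩ hz) + hzero

theorem generating_function_phase_structure
    (n : ℕ) (hn : 1 ≤ n) (k : ℕ) (hk : 2 < k)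
    (Ec T : ℝ) (hT : 0 < T)
    (z₀ : (Fin n → ℝ) × (Fin n → ℝ))
    (p₀ : (Fin n → ℝ) × (Fin n → ℝ) → ℝ)
    (V : Set ((Fin n → ℝ) × (Fin n → ℝ))) (hV : V ∈ nhds z₀)
    (hp₀ : ContDiffOn ℝ (⊤ : ℕ∞) p₀ V)
    (hval : p₀ z₀ = Ec)
    (hjets : ∀ j : ℕ, 1 ≤ j → j ≤ k - 1 → iteratedFDeriv ℝ j p₀ z₀ = 0)
    -- 𝔭_k : the degree-k homogeneous Taylor term of p₀ at z₀
    (P : (Fin n → ℝ) × (Fin n → ℝ) → ℝ)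
    (hP : ∀ z : (Fin n → ℝ) × (Fin n → ℝ),
      P z = (1 / (Nat.factorial k : ℝ)) *
        iteratedFDeriv ℝ k p₀ z₀ (fun _ : Fin k => z - z₀))
    (Ω : Set ((Fin n → ℝ) × (Fin n → ℝ))) (hΩ : Ω ∈ nhds z₀)
    (S : ℝ → (Fin n → ℝ) → (Fin n → ℝ) → ℝ)
    (hS : ContDiffOn ℝ (⊤ : ℕ∞)
      (fun q : ℝ × (Fin n → ℝ) × (Fin n → ℝ) => S q.1 q.2.1 q.2.2)
      (Set.Ioo (-T) T ×ˢ Ω))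
    -- the x-gradient of S
    (gradS : ℝ → (Fin n → ℝ) → (Fin n → ℝ) → (Fin n → ℝ))
    (hgradS : ∀ (t : ℝ) (x ξ : Fin n → ℝ),
      gradS t x ξ = fun i => fderiv ℝ (fun x' => S t x' ξ) x (Pi.single i 1))
    -- (x, ∂_x S) stays in the domain of p₀
    (hdom : ∀ (t : ℝ) (x ξ : Fin n → ℝ), t ∈ Set.Ioo (-T) T → (x, ξ) ∈ Ω →
      (x, gradS t x ξ) ∈ V)
    -- Hamilton–Jacobi equation with initial condition S(0,x,ξ) = ⟨x,ξ⟩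
    (hHJ : ∀ (t : ℝ) (x ξ : Fin n → ℝ), t ∈ Set.Ioo (-T) T → (x, ξ) ∈ Ω →
      deriv (fun s : ℝ => S s x ξ) t + p₀ (x, gradS t x ξ) = 0)
    (hinit : ∀ x ξ : Fin n → ℝ, (x, ξ) ∈ Ω → S 0 x ξ = ∑ i, x i * ξ i) :
    ∃ Ω' ∈ nhds z₀, Ω' ⊆ Ω ∧
      ∃ G : ℝ → (Fin n → ℝ) × (Fin n → ℝ) → ℝ,
        ContDiffOn ℝ (⊤ : ℕ∞)
          (fun q : ℝ × (Fin n → ℝ) × (Fin n → ℝ) => G q.1 q.2)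
          (Set.Ioo (-T) T ×ˢ Ω') ∧
        (∀ (t : ℝ) (x ξ : Fin n → ℝ), t ∈ Set.Ioo (-T) T → (x, ξ) ∈ Ω' →
          S t x ξ - (∑ i, x i * ξ i) + t * Ec
            = -t * (P (x, ξ) + (p₀ (x, ξ) - Ec - P (x, ξ)) + t * G t (x, ξ))) ∧
        (∃ C : ℝ, ∀ z ∈ Ω', |p₀ z - Ec - P z| ≤ C * ‖z - z₀‖ ^ (k + 1)) ∧
        (∀ K : Set ℝ, IsCompact K → K ⊆ Set.Ioo (-T) T →
          ∃ C : ℝ, ∀ t ∈ K, ∀ z ∈ Ω', |G t z| ≤ C * ‖z - z₀‖ ^ (k + 1)) := by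
  exact generating_function_phase_structure_general n k (k + 1) (by omega) (by omega) Ec T hT z₀ p₀
    (hp₀.contDiffAt hV) hval hjets P hP Ω hΩ S hS gradS hgradS hHJ hinit
end

section
/- Let d ≥ 2 and let g : ℝ^d → ℝ be a homogeneous polynomial of degree k ≥ 1 such that ∇g(θ) ≠ 0 for every θ ∈ S^{d−1} with g(θ) = 0. Let σ denote the surface measure on the unit sphere S^{d−1}. Then the function W(u) = σ({ θ ∈ S^{d−1} : g(θ) ≤ u }) is C^∞ on an open neighborhood of u = 0. In particular its derivative Lvol(u) = W′(u), the Liouville (Leray) density of the level set {g = u} ∩ S^{d−1}, is a smooth function of u near 0. -/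
/- STATEMENT 12: Under the real-principal-type condition (H₄) on a homogeneous
polynomial g of degree k, the volume function W(u) = σ({θ ∈ S^{d−1} : g(θ) ≤ u})
(σ the surface measure, realized as (d−1)-dimensional Hausdorff measure) is C^∞
near u = 0; in particular the Liouville/Leray density Lvol = W′ is smooth near 0. -/

open MeasureTheory

/-!
Superlevel integrals `u ↦ ∫_{u < g} ψ dσ` over the sphere are differentiated by integrating by
parts along infinitesimal rotations, which are divergence free for the surface measure. Away from
the critical values of `g` on the sphere some rotation moves `g`, and dividing by its speed turns
`∫_{u < g} ψ dσ` into a local primitive of another superlevel integral `∫_{u < g} θ dσ`, with `θ`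
again smooth. Iterating, every superlevel integral is smooth off the critical values, and `W` is
the total mass minus the one with `ψ = 1`. Euler's identity shows that the radial derivative of `g`
vanishes on `{g = 0}`, so there the condition `∇g ≠ 0` concerns only the tangential directions and
says that `0` is not a critical value.
-/

open Set Filter Metric Module
open scoped Topology ContDiff

section SuperlevelIntegral

variable {X : Type*} [MeasurableSpace X] {σ : Measure X} {g f θ : X → ℝ}

/-- The integral of `ψ` over the superlevel set `{u < g}` as a function of the level `u`. The
sublevel volume function is the total mass minus the case `ψ = 1`. -/
noncomputable def superlevelIntegral (σ : Measure X) (g ψ : X → ℝ) (u : ℝ) : ℝ :=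
  ∫ x in {x | u < g x}, ψ x ∂σ

/-- The pushforward of `θ σ` under `g` is the distributional derivative of the pushforward of
`f σ`. Test functions need not have compact support, so this notion is meant for bounded `g`. -/
def HasWeakDerivAlong (σ : Measure X) (g f θ : X → ℝ) : Prop :=
  ∀ φ : ℝ → ℝ, ContDiff ℝ ∞ φ → ∫ x, deriv φ (g x) * f x ∂σ = -∫ x, φ (g x) * θ x ∂σ

/-- A smooth approximation of the indicator of `(0, ∞)` with bounded derivative. The shift by `-1`
makes the limit at `0` equal to `0` instead of `1 / 2`. -/
noncomputable def smoothStep (n : ℕ) (t : ℝ) : ℝ :=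
  Real.sigmoid (n * (n * t - 1))

theorem contDiff_smoothStep (n : ℕ) : ContDiff ℝ ∞ (smoothStep n) :=
  (contDiff_sigmoid.of_le le_top).comp (by fun_prop)

theorem abs_smoothStep_le_one (n : ℕ) (t : ℝ) : |smoothStep n t| ≤ 1 := by
  rw [smoothStep, abs_of_nonneg (Real.sigmoid_nonneg _)]
  exact Real.sigmoid_le_one _

theorem abs_deriv_smoothStep_le (n : ℕ) (t : ℝ) : |deriv (smoothStep n) t| ≤ n ^ 2 := by
  set s := Real.sigmoid (n * (n * t - 1))
  have hinner : HasDerivAt (fun t : ℝ => (n : ℝ) * (n * t - 1)) (n * (n * 1)) t :=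
    (((hasDerivAt_id t).const_mul (n : ℝ)).sub_const 1).const_mul (n : ℝ)
  have hderiv : deriv (smoothStep n) t = s * (1 - s) * (n * (n * 1)) :=
    ((Real.hasDerivAt_sigmoid _).comp t hinner).deriv
  have hs0 : 0 ≤ s := Real.sigmoid_nonneg _
  have hs1 : s ≤ 1 := Real.sigmoid_le_one _
  have hprod : s * (1 - s) ≤ 1 := by nlinarith
  rw [hderiv, abs_of_nonneg (mul_nonneg (mul_nonneg hs0 (by linarith)) (by positivity))]
  nlinarith [sq_nonneg (n : ℝ)]

theorem tendsto_smoothStep (t : ℝ) :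
    Tendsto (fun n => smoothStep n t) atTop (𝓝 ((Ioi 0).indicator 1 t)) := by
  rcases lt_or_ge 0 t with ht | ht
  · rw [indicator_of_mem (mem_Ioi.2 ht)]
    have hlin : Tendsto (fun n : ℕ => (n : ℝ) * t - 1) atTop atTop :=
      tendsto_atTop_add_const_right _ _ (tendsto_natCast_atTop_atTop.atTop_mul_const ht)
    exact Real.tendsto_sigmoid_atTop.comp (tendsto_natCast_atTop_atTop.atTop_mul_atTop₀ hlin)
  · rw [indicator_of_notMem (notMem_Ioi.2 ht)]
    refine Real.tendsto_sigmoid_atBot.comp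
      (tendsto_atBot_mono (fun n => ?_) (tendsto_neg_atTop_atBot.comp tendsto_natCast_atTop_atTop))
    have hn : (0 : ℝ) ≤ n := n.cast_nonneg
    have hnt : n * t ≤ 0 := mul_nonpos_of_nonneg_of_nonpos hn ht
    simp only [Function.comp_apply]
    nlinarith

theorem aestronglyMeasurable_comp_sub_mul (hg : AEMeasurable g σ) (hf : Integrable f σ)
    {s : ℝ → ℝ} (hs : Continuous s) (u : ℝ) :
    AEStronglyMeasurable (fun x => s (g x - u) * f x) σ :=
  (hs.measurable.comp_aemeasurable (hg.sub_const u)).aestronglyMeasurable.mul hf.1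

theorem integrable_comp_sub_mul (hg : AEMeasurable g σ) (hf : Integrable f σ)
    {s : ℝ → ℝ} (hs : Continuous s) {C : ℝ} (hC : ∀ t, |s t| ≤ C) (u : ℝ) :
    Integrable (fun x => s (g x - u) * f x) σ :=
  hf.bdd_mul (hs.measurable.comp_aemeasurable (hg.sub_const u)).aestronglyMeasurable
    (.of_forall fun _ => hC _)

theorem continuous_integral_comp_sub_mul (hg : AEMeasurable g σ) (hf : Integrable f σ)
    {s : ℝ → ℝ} (hs : Continuous s) {C : ℝ} (hC : ∀ t, |s t| ≤ C) :
    Continuous fun u => ∫ x, s (g x - u) * f x ∂σ :=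
  continuous_of_dominated (fun u => aestronglyMeasurable_comp_sub_mul hg hf hs u)
    (fun u => .of_forall fun x => norm_mul_le_of_le (hC _) le_rfl) (hf.norm.const_mul C)
    (.of_forall fun x => by fun_prop)

theorem HasWeakDerivAlong.hasDerivAt_integral_comp_sub_mul (hw : HasWeakDerivAlong σ g f θ)
    (hg : AEMeasurable g σ) (hf : Integrable f σ) {s : ℝ → ℝ} (hs : ContDiff ℝ ∞ s) {C C' : ℝ}
    (hC : ∀ t, |s t| ≤ C) (hC' : ∀ t, |deriv s t| ≤ C') (u : ℝ) :
    HasDerivAt (fun u => ∫ x, s (g x - u) * f x ∂σ) (∫ x, s (g x - u) * θ x ∂σ) u := by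
  have hs' : Continuous (deriv s) := hs.continuous_deriv (by simp)
  have hpoint (x : X) (v : ℝ) :
      HasDerivAt (fun v => s (g x - v) * f x) (-(deriv s (g x - v) * f x)) v := by
    have hinner : HasDerivAt (fun v => g x - v) (-1) v := (hasDerivAt_id v).const_sub (g x)
    have hsx := (hs.differentiable (by simp) (g x - v)).hasDerivAt
    simpa using (hsx.comp v hinner).mul_const (f x)
  have hder := (hasDerivAt_integral_of_dominated_loc_of_deriv_le (x₀ := u) univ_mem
    (.of_forall fun v => aestronglyMeasurable_comp_sub_mul hg hf hs.continuous v)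
    (integrable_comp_sub_mul hg hf hs.continuous hC u)
    (aestronglyMeasurable_comp_sub_mul hg hf hs' u).neg
    (.of_forall fun x v _ => by simpa only [norm_neg] using norm_mul_le_of_le (hC' _) le_rfl)
    (hf.norm.const_mul C') (.of_forall fun x v _ => hpoint x v)).2
  have htest := hw (fun t => s (t - u)) (hs.comp (by fun_prop))
  simp only [deriv_comp_sub_const] at htest
  rwa [integral_neg, htest, neg_neg] at hder

theorem integral_indicator_one_mul_eq_superlevelIntegral (hg : AEMeasurable g σ) (u : ℝ) :
    ∫ x, (Ioi 0).indicator 1 (g x - u) * f x ∂σ = superlevelIntegral σ g f u := by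
  rw [superlevelIntegral, ← integral_indicator₀ (nullMeasurableSet_lt aemeasurable_const hg)]
  congr with x
  by_cases hx : u < g x <;> simp [hx]

theorem tendsto_integral_smoothStep_mul (hg : AEMeasurable g σ) (hf : Integrable f σ) (u : ℝ) :
    Tendsto (fun n => ∫ x, smoothStep n (g x - u) * f x ∂σ) atTop
      (𝓝 (superlevelIntegral σ g f u)) := by
  rw [← integral_indicator_one_mul_eq_superlevelIntegral hg]
  exact tendsto_integral_of_dominated_convergence (fun x => 1 * ‖f x‖)
    (fun n => aestronglyMeasurable_comp_sub_mul hg hf (contDiff_smoothStep n).continuous u)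
    (hf.norm.const_mul 1)
    (fun n => .of_forall fun x => norm_mul_le_of_le (abs_smoothStep_le_one n _) le_rfl)
    (.of_forall fun x => (tendsto_smoothStep _).mul_const _)

theorem HasWeakDerivAlong.superlevelIntegral_sub (hw : HasWeakDerivAlong σ g f θ)
    (hg : AEMeasurable g σ) (hf : Integrable f σ) (hθ : Integrable θ σ) (a b : ℝ) :
    superlevelIntegral σ g f b - superlevelIntegral σ g f a =
      ∫ u in a..b, superlevelIntegral σ g θ u := by
  let I (n : ℕ) (h : X → ℝ) (u : ℝ) : ℝ := ∫ x, smoothStep n (g x - u) * h x ∂σ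
  have hcont (n : ℕ) : Continuous (I n θ) :=
    continuous_integral_comp_sub_mul hg hθ (contDiff_smoothStep n).continuous
      (abs_smoothStep_le_one n)
  have hftc (n : ℕ) : ∫ u in a..b, I n θ u = I n f b - I n f a :=
    intervalIntegral.integral_eq_sub_of_hasDerivAt
      (fun u _ => hw.hasDerivAt_integral_comp_sub_mul hg hf (contDiff_smoothStep n)
        (abs_smoothStep_le_one n) (abs_deriv_smoothStep_le n) u)
      ((hcont n).intervalIntegrable a b)
  have hbound (n : ℕ) (u : ℝ) : ‖I n θ u‖ ≤ ∫ x, 1 * ‖θ x‖ ∂σ :=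
    norm_integral_le_of_norm_le (hθ.norm.const_mul 1)
      (.of_forall fun x => norm_mul_le_of_le (abs_smoothStep_le_one n _) le_rfl)
  have hlim : Tendsto (fun n => ∫ u in a..b, I n θ u) atTop
      (𝓝 (∫ u in a..b, superlevelIntegral σ g θ u)) :=
    intervalIntegral.tendsto_integral_filter_of_dominated_convergence _
      (.of_forall fun n => (hcont n).aestronglyMeasurable)
      (.of_forall fun n => .of_forall fun u _ => hbound n u) intervalIntegrable_const
      (.of_forall fun u _ => tendsto_integral_smoothStep_mul hg hθ u)
  simp only [hftc] at hlim
  exact tendsto_nhds_unique ((tendsto_integral_smoothStep_mul hg hf b).sub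
    (tendsto_integral_smoothStep_mul hg hf a)) hlim

theorem superlevelIntegral_sub_fun (hf : Integrable f σ) (hθ : Integrable θ σ) (u : ℝ) :
    superlevelIntegral σ g (fun x => f x - θ x) u =
      superlevelIntegral σ g f u - superlevelIntegral σ g θ u :=
  integral_sub hf.integrableOn hθ.integrableOn

theorem superlevelIntegral_eq_of_eq_zero (hg : AEMeasurable g σ) {a b : ℝ}
    (hf : ∀ x, g x ∈ uIcc a b → f x = 0) :
    superlevelIntegral σ g f a = superlevelIntegral σ g f b := by
  rw [superlevelIntegral, superlevelIntegral,
    ← integral_indicator₀ (nullMeasurableSet_lt aemeasurable_const hg),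
    ← integral_indicator₀ (nullMeasurableSet_lt aemeasurable_const hg)]
  congr with x
  by_cases hx : g x ∈ uIcc a b
  · simp [indicator, hf x hx]
  · have hiff : a < g x ↔ b < g x := by
      rw [mem_uIcc] at hx
      grind
    simp [indicator, hiff]

theorem norm_superlevelIntegral_le (hf : Integrable f σ) (u : ℝ) :
    ‖superlevelIntegral σ g f u‖ ≤ ∫ x, ‖f x‖ ∂σ :=
  (norm_integral_le_integral_norm _).trans
    (setIntegral_le_integral hf.norm (.of_forall fun _ => norm_nonneg _))

theorem measureReal_sublevel_eq [IsFiniteMeasure σ] (hg : AEMeasurable g σ) (u : ℝ) :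
    σ.real {x | g x ≤ u} = σ.real univ - superlevelIntegral σ g 1 u := by
  have hcompl : {x | g x ≤ u} = {x | u < g x}ᶜ := by
    ext
    simp
  rw [hcompl, measureReal_compl₀ (nullMeasurableSet_lt aemeasurable_const hg)]
  simp [superlevelIntegral]

end SuperlevelIntegral

section Calculus

variable {E F : Type*} [NormedAddCommGroup E] [NormedSpace ℝ E] [NormedAddCommGroup F]
  [NormedSpace ℝ F]

theorem continuousOn_of_contDiffAt {n : WithTop ℕ∞} {s : Set E} {f : E → F}
    (hf : ∀ x ∈ s, ContDiffAt ℝ n f x) : ContinuousOn f s :=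
  fun x hx => (hf x hx).continuousAt.continuousWithinAt

theorem continuousOn_fderiv_apply {s : Set E} {f : E → F} {X : E → E}
    (hf : ∀ x ∈ s, ContDiffAt ℝ 1 f x) (hX : ContinuousOn X s) :
    ContinuousOn (fun x => fderiv ℝ f x (X x)) s :=
  (continuousOn_of_contDiffAt (n := 0)
    fun x hx => (hf x hx).fderiv_right (by simp)).clm_apply hX

theorem contDiffAt_fderiv_apply {f : E → F} {X : E → E} {x : E}
    (hf : ContDiffAt ℝ ∞ f x) (hX : ContDiffAt ℝ ∞ X x) :
    ContDiffAt ℝ ∞ (fun y => fderiv ℝ f y (X y)) x :=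
  (hf.fderiv_right (m := ∞) (by simp)).clm_apply hX

theorem fderiv_comp_mul_apply {φ : ℝ → ℝ} {g h : E → ℝ} {x : E} (hφ : DifferentiableAt ℝ φ (g x))
    (hg : DifferentiableAt ℝ g x) (hh : DifferentiableAt ℝ h x) (v : E) :
    fderiv ℝ (fun y => φ (g y) * h y) x v =
      deriv φ (g x) * (fderiv ℝ g x v * h x) + φ (g x) * fderiv ℝ h x v := by
  have hφg : HasFDerivAt (fun y => φ (g y)) (deriv φ (g x) • fderiv ℝ g x) x :=
    hφ.hasDerivAt.comp_hasFDerivAt x hg.hasFDerivAt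
  rw [(hφg.fun_mul hh.hasFDerivAt).fderiv]
  simp only [add_apply, smul_apply, smul_eq_mul]
  ring

end Calculus

section DivergenceFree

variable {V : Type*} [NormedAddCommGroup V] [NormedSpace ℝ V] [MeasurableSpace V]
  {σ : Measure V} {S : Set V}

/-- The vector field `X` has zero divergence with respect to `σ`, tested against functions that are
`C¹` near the support `S` of `σ`. -/
def IsDivergenceFree (σ : Measure V) (S : Set V) (X : V → V) : Prop :=
  ∀ F : V → ℝ, (∀ x ∈ S, ContDiffAt ℝ 1 F x) → ∫ x, fderiv ℝ F x (X x) ∂σ = 0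

variable [BorelSpace V]

theorem aemeasurable_of_continuousOn_of_ae_mem {X : Type*} [TopologicalSpace X] [T2Space X]
    [MeasurableSpace X] [OpensMeasurableSpace X] {σ : Measure X} {S : Set X} (hS : IsCompact S)
    (hσ : ∀ᵐ x ∂σ, x ∈ S) {f : X → ℝ} (hf : ContinuousOn f S) : AEMeasurable f σ := by
  rw [← Measure.restrict_eq_self_of_ae_mem hσ]
  exact hf.aemeasurable hS.measurableSet

theorem integrable_of_continuousOn_of_ae_mem {X : Type*} [TopologicalSpace X] [T2Space X]
    [MeasurableSpace X] [OpensMeasurableSpace X] {σ : Measure X} [IsFiniteMeasure σ] {S : Set X}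
    (hS : IsCompact S) (hσ : ∀ᵐ x ∂σ, x ∈ S) {f : X → ℝ} (hf : ContinuousOn f S) :
    Integrable f σ := by
  rw [← Measure.restrict_eq_self_of_ae_mem hσ]
  exact hf.integrableOn_compact hS

theorem isDivergenceFree_of_flow [IsFiniteMeasure σ] (hS : IsCompact S) (hσ : ∀ᵐ x ∂σ, x ∈ S)
    {X : V → V} (hX : ContinuousOn X S) {Φ : ℝ → V → V} (hΦ : ∀ t, MeasurePreserving (Φ t) σ σ)
    (hΦS : ∀ t, MapsTo (Φ t) S S) (hΦ0 : ∀ x ∈ S, Φ 0 x = x)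
    (hΦX : ∀ x ∈ S, ∀ t, HasDerivAt (fun t => Φ t x) (X (Φ t x)) t) :
    IsDivergenceFree σ S X := by
  intro F hF
  have hF' := continuousOn_fderiv_apply hF hX
  have hFint := integrable_of_continuousOn_of_ae_mem hS hσ (continuousOn_of_contDiffAt hF)
  have hF'int := integrable_of_continuousOn_of_ae_mem hS hσ hF'
  have hcomp {h : V → ℝ} (hh : Integrable h σ) (t : ℝ) : Integrable (fun x => h (Φ t x)) σ :=
    (hΦ t).integrable_comp_of_integrable hh
  obtain ⟨C, hC⟩ := hS.exists_bound_of_continuousOn hF'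
  have hder := (hasDerivAt_integral_of_dominated_loc_of_deriv_le (μ := σ) (x₀ := (0 : ℝ)) univ_mem
    (.of_forall fun t => (hcomp hFint t).1) (hcomp hFint 0) (hcomp hF'int 0).1
    (hσ.mono fun x hx t _ => hC _ (hΦS t hx)) (integrable_const C)
    (hσ.mono fun x hx t _ => ((hF _ (hΦS t hx)).differentiableAt
      one_ne_zero).hasFDerivAt.comp_hasDerivAt t (hΦX x hx t))).2
  have hconst (t : ℝ) : ∫ x, F (Φ t x) ∂σ = ∫ x, F x ∂σ := by
    rw [← integral_map (hΦ t).aemeasurable ((hΦ t).map_eq.symm ▸ hFint.1), (hΦ t).map_eq]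
  have hΦ0_ae : (fun x => fderiv ℝ F (Φ 0 x) (X (Φ 0 x))) =ᵐ[σ] fun x => fderiv ℝ F x (X x) :=
    hσ.mono fun x hx => by simp only [hΦ0 x hx]
  rw [← integral_congr_ae hΦ0_ae]
  simp only [hconst] at hder
  exact hder.unique (hasDerivAt_const _ _)

variable [IsFiniteMeasure σ] {ι : Type*} {X : ι → V → V} {g : V → ℝ}

theorem hasWeakDerivAlong_of_isDivergenceFree [Fintype ι] (hS : IsCompact S)
    (hσ : ∀ᵐ x ∂σ, x ∈ S) (hX : ∀ i, ContinuousOn (X i) S) (hdiv : ∀ i, IsDivergenceFree σ S (X i))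
    (hg : ∀ x ∈ S, ContDiffAt ℝ 1 g x) {h : ι → V → ℝ} (hh : ∀ i, ∀ x ∈ S, ContDiffAt ℝ 1 (h i) x) :
    HasWeakDerivAlong σ g (fun x => ∑ i, fderiv ℝ g x (X i x) * h i x)
      (fun x => ∑ i, fderiv ℝ (h i) x (X i x)) := by
  intro φ hφ
  have hφg : ContinuousOn (fun x => φ (g x)) S :=
    hφ.continuous.comp_continuousOn (continuousOn_of_contDiffAt hg)
  have hφ'g : ContinuousOn (fun x => deriv φ (g x)) S :=
    (hφ.continuous_deriv (by simp)).comp_continuousOn (continuousOn_of_contDiffAt hg)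
  have hprod (i : ι) : ∀ x ∈ S, ContDiffAt ℝ 1 (fun y => φ (g y) * h i y) x := fun x hx =>
    ((hφ.of_le (by simp)).contDiffAt.comp x (hg x hx)).mul (hh i x hx)
  have hleibniz : ∀ x ∈ S, ∑ i, fderiv ℝ (fun y => φ (g y) * h i y) x (X i x) =
      deriv φ (g x) * ∑ i, fderiv ℝ g x (X i x) * h i x +
        φ (g x) * ∑ i, fderiv ℝ (h i) x (X i x) := fun x hx => by
    rw [Finset.mul_sum, Finset.mul_sum, ← Finset.sum_add_distrib]
    exact Finset.sum_congr rfl fun i _ => fderiv_comp_mul_apply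
      (hφ.differentiable (by simp) _) ((hg x hx).differentiableAt one_ne_zero)
      ((hh i x hx).differentiableAt one_ne_zero) _
  have hzero : ∫ x, ∑ i, fderiv ℝ (fun y => φ (g y) * h i y) x (X i x) ∂σ = 0 := by
    rw [integral_finsetSum _ fun i _ => integrable_of_continuousOn_of_ae_mem hS hσ
      (continuousOn_fderiv_apply (hprod i) (hX i))]
    exact Finset.sum_eq_zero fun i _ => hdiv i _ (hprod i)
  rw [integral_congr_ae (hσ.mono hleibniz), integral_add] at hzero
  · exact eq_neg_of_add_eq_zero_left hzero
  · exact integrable_of_continuousOn_of_ae_mem hS hσ (hφ'g.mul (continuousOn_finsetSum _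
      fun i _ => (continuousOn_fderiv_apply hg (hX i)).mul (continuousOn_of_contDiffAt (hh i))))
  · exact integrable_of_continuousOn_of_ae_mem hS hσ (hφg.mul (continuousOn_finsetSum _
      fun i _ => continuousOn_fderiv_apply (hh i) (hX i)))

end DivergenceFree

section Transport

variable {V : Type*} [NormedAddCommGroup V] [NormedSpace ℝ V] {S : Set V} {ι : Type*}
  {X : ι → V → V} {g : V → ℝ}

/-- The values of `g` at the points of `S` where its derivatives along all the vector fields `X i`
vanish. When these fields span the tangent spaces of a submanifold `S`, they are the critical values
of `g` restricted to `S`. -/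
def criticalValuesAlong (X : ι → V → V) (g : V → ℝ) (S : Set V) : Set ℝ :=
  g '' {x ∈ S | ∀ i, fderiv ℝ g x (X i x) = 0}

theorem isClosed_criticalValuesAlong (hS : IsCompact S) (hX : ∀ i, ContinuousOn (X i) S)
    (hg : ∀ x ∈ S, ContDiffAt ℝ 1 g x) : IsClosed (criticalValuesAlong X g S) := by
  have hgX : ContinuousOn (fun x i => fderiv ℝ g x (X i x)) S :=
    continuousOn_pi.2 fun i => continuousOn_fderiv_apply hg (hX i)
  have hcrit : {x ∈ S | ∀ i, fderiv ℝ g x (X i x) = 0} =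
      S ∩ (fun x i => fderiv ℝ g x (X i x)) ⁻¹' {0} := by
    ext x
    simp [funext_iff]
  have hclosed := hgX.preimage_isClosed_of_isClosed hS.isClosed (isClosed_singleton (x := 0))
  exact ((hcrit ▸ hS.of_isClosed_subset hclosed inter_subset_left).image_of_continuousOn
    ((continuousOn_of_contDiffAt hg).mono (sep_subset _ _))).isClosed

theorem sum_sq_fderiv_ne_zero [Fintype ι] {x : V} (hx : x ∈ S)
    (hgx : g x ∉ criticalValuesAlong X g S) : ∑ i, fderiv ℝ g x (X i x) ^ 2 ≠ 0 := by
  intro hsum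
  rw [Finset.sum_eq_zero_iff_of_nonneg fun i _ => sq_nonneg _] at hsum
  exact hgx ⟨x, ⟨hx, fun i => pow_eq_zero_iff two_ne_zero |>.1 (hsum i (Finset.mem_univ i))⟩, rfl⟩

theorem contDiffAt_cutoff_mul_div {n : WithTop ℕ∞} {χ : ℝ → ℝ} {f D : V → ℝ} {x : V}
    (hχ : ContDiff ℝ n χ) (hg : ContDiffAt ℝ n g x) (hf : ContDiffAt ℝ n f x)
    (hD : ContDiffAt ℝ n D x) (hDx : g x ∈ tsupport χ → D x ≠ 0) :
    ContDiffAt ℝ n (fun y => χ (g y) * f y / D y) x := by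
  by_cases hx : g x ∈ tsupport χ
  · exact ((hχ.contDiffAt.comp x hg).mul hf).div hD (hDx hx)
  · have hzero : ∀ᶠ y in 𝓝 x, χ (g y) = 0 :=
      hg.continuousAt.eventually (notMem_tsupport_iff_eventuallyEq.1 hx)
    refine (contDiffAt_const (c := (0 : ℝ))).congr_of_eventuallyEq (hzero.mono fun y hy => ?_)
    simp only [hy, zero_mul, zero_div]

variable [MeasurableSpace V] [BorelSpace V] {σ : Measure V} [IsFiniteMeasure σ] {ψ : V → ℝ}

theorem exists_hasWeakDerivAlong_cutoff [Finite ι] (hS : IsCompact S) (hσ : ∀ᵐ x ∂σ, x ∈ S)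
    (hX : ∀ i, ∀ x ∈ S, ContDiffAt ℝ ∞ (X i) x) (hdiv : ∀ i, IsDivergenceFree σ S (X i))
    (hg : ∀ x ∈ S, ContDiffAt ℝ ∞ g x) {χ : ℝ → ℝ} (hχ : ContDiff ℝ ∞ χ)
    (hχg : tsupport χ ⊆ (criticalValuesAlong X g S)ᶜ) (hψ : ∀ x ∈ S, ContDiffAt ℝ ∞ ψ x) :
    ∃ θ : V → ℝ, (∀ x ∈ S, ContDiffAt ℝ ∞ θ x) ∧
      HasWeakDerivAlong σ g (fun x => χ (g x) * ψ x) θ := by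
  cases nonempty_fintype ι
  let L (i : ι) (x : V) : ℝ := fderiv ℝ g x (X i x)
  let D (x : V) : ℝ := ∑ i, L i x ^ 2
  have hL (i : ι) : ∀ x ∈ S, ContDiffAt ℝ ∞ (L i) x := fun x hx =>
    contDiffAt_fderiv_apply (hg x hx) (hX i x hx)
  have hD : ∀ x ∈ S, ContDiffAt ℝ ∞ D x := fun x hx =>
    ContDiffAt.sum fun i _ => (hL i x hx).pow 2
  have hDx : ∀ x ∈ S, g x ∈ tsupport χ → D x ≠ 0 := fun x hx hgx =>
    sum_sq_fderiv_ne_zero hx (hχg hgx)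
  let h (i : ι) (x : V) : ℝ := χ (g x) * (ψ x * L i x) / D x
  have hh (i : ι) : ∀ x ∈ S, ContDiffAt ℝ ∞ (h i) x := fun x hx =>
    contDiffAt_cutoff_mul_div hχ (hg x hx) ((hψ x hx).mul (hL i x hx)) (hD x hx) (hDx x hx)
  have hsum : ∀ x ∈ S, ∑ i, L i x * h i x = χ (g x) * ψ x := fun x hx => by
    have hfactor : ∑ i, L i x * h i x = χ (g x) * ψ x * D x / D x := by
      rw [Finset.mul_sum, Finset.sum_div]
      exact Finset.sum_congr rfl fun i _ => by ring
    by_cases hgx : g x ∈ tsupport χ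
    · rw [hfactor, mul_div_cancel_right₀ _ (hDx x hx hgx)]
    · rw [hfactor, image_eq_zero_of_notMem_tsupport hgx, zero_mul, zero_mul, zero_div]
  refine ⟨fun x => ∑ i, fderiv ℝ (h i) x (X i x), fun x hx => ContDiffAt.sum fun i _ =>
    contDiffAt_fderiv_apply (hh i x hx) (hX i x hx), fun φ hφ => ?_⟩
  have hparts := hasWeakDerivAlong_of_isDivergenceFree hS hσ
    (fun i => continuousOn_of_contDiffAt (hX i)) hdiv (fun x hx => (hg x hx).of_le (by simp))
    (fun i x hx => (hh i x hx).of_le (by simp)) φ hφ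
  rw [← hparts]
  exact integral_congr_ae (hσ.mono fun x hx => by simp only [← hsum x hx, L])

theorem exists_superlevelIntegral_sub_eq_intervalIntegral [Finite ι] (hS : IsCompact S)
    (hσ : ∀ᵐ x ∂σ, x ∈ S) (hX : ∀ i, ∀ x ∈ S, ContDiffAt ℝ ∞ (X i) x)
    (hdiv : ∀ i, IsDivergenceFree σ S (X i)) (hg : ∀ x ∈ S, ContDiffAt ℝ ∞ g x) {c : ℝ}
    (hc : c ∉ criticalValuesAlong X g S) (hψ : ∀ x ∈ S, ContDiffAt ℝ ∞ ψ x) :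
    ∃ θ : V → ℝ, (∀ x ∈ S, ContDiffAt ℝ ∞ θ x) ∧ ∃ δ > 0, ∀ a ∈ ball c δ, ∀ b ∈ ball c δ,
      superlevelIntegral σ g ψ b - superlevelIntegral σ g ψ a =
        ∫ u in a..b, superlevelIntegral σ g θ u := by
  have hclosed := isClosed_criticalValuesAlong hS (fun i => continuousOn_of_contDiffAt (hX i))
    fun x hx => (hg x hx).of_le (by simp)
  obtain ⟨r, hr, hrc⟩ := nhds_basis_closedBall.mem_iff.1 (hclosed.isOpen_compl.mem_nhds hc)
  let χ : ContDiffBump c := ⟨r / 2, r, half_pos hr, half_lt_self hr⟩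
  obtain ⟨θ, hθ, hweak⟩ := exists_hasWeakDerivAlong_cutoff hS hσ hX hdiv hg χ.contDiff
    (χ.tsupport_eq.trans_subset hrc) hψ
  have hint {f : V → ℝ} (hf : ∀ x ∈ S, ContDiffAt ℝ ∞ f x) : Integrable f σ :=
    integrable_of_continuousOn_of_ae_mem hS hσ (continuousOn_of_contDiffAt hf)
  have hχψ : Integrable (fun x => χ (g x) * ψ x) σ := hint fun x hx =>
    (χ.contDiff.contDiffAt.comp x (hg x hx)).mul (hψ x hx)
  have hgm : AEMeasurable g σ :=
    aemeasurable_of_continuousOn_of_ae_mem hS hσ (continuousOn_of_contDiffAt hg)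
  refine ⟨θ, hθ, r / 2, half_pos hr, fun a ha b hb => ?_⟩
  have hsub : uIcc a b ⊆ closedBall c (r / 2) := by
    rw [← segment_eq_uIcc]
    exact (convex_closedBall _ _).segment_subset (ball_subset_closedBall ha)
      (ball_subset_closedBall hb)
  have hrest := superlevelIntegral_eq_of_eq_zero (σ := σ) (f := fun x => ψ x - χ (g x) * ψ x) hgm
    fun x hx => by rw [χ.one_of_mem_closedBall (hsub hx), one_mul, sub_self]
  rw [superlevelIntegral_sub_fun (hint hψ) hχψ, superlevelIntegral_sub_fun (hint hψ) hχψ] at hrest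
  rw [← hweak.superlevelIntegral_sub hgm hχψ (hint hθ)]
  linarith

theorem continuousOn_superlevelIntegral [Finite ι] (hS : IsCompact S) (hσ : ∀ᵐ x ∂σ, x ∈ S)
    (hX : ∀ i, ∀ x ∈ S, ContDiffAt ℝ ∞ (X i) x) (hdiv : ∀ i, IsDivergenceFree σ S (X i))
    (hg : ∀ x ∈ S, ContDiffAt ℝ ∞ g x) (hψ : ∀ x ∈ S, ContDiffAt ℝ ∞ ψ x) :
    ContinuousOn (superlevelIntegral σ g ψ) (criticalValuesAlong X g S)ᶜ := by
  intro c hc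
  obtain ⟨θ, hθ, δ, hδ, hsub⟩ :=
    exists_superlevelIntegral_sub_eq_intervalIntegral hS hσ hX hdiv hg hc hψ
  have hlip : ∀ b ∈ ball c δ, dist (superlevelIntegral σ g ψ b) (superlevelIntegral σ g ψ c) ≤
      (∫ x, ‖θ x‖ ∂σ) * dist b c := fun b hb => by
    rw [Real.dist_eq, hsub c (mem_ball_self hδ) b hb]
    exact intervalIntegral.norm_integral_le_of_norm_le_const fun u _ => norm_superlevelIntegral_le
      (integrable_of_continuousOn_of_ae_mem hS hσ (continuousOn_of_contDiffAt hθ)) u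
  have hbound : Tendsto (fun b => (∫ x, ‖θ x‖ ∂σ) * dist b c) (𝓝 c) (𝓝 0) :=
    Continuous.tendsto' (by fun_prop) _ _ (by simp)
  exact (tendsto_iff_dist_tendsto_zero.2 (squeeze_zero' (.of_forall fun _ => dist_nonneg)
    (mem_of_superset (ball_mem_nhds c hδ) hlip) hbound)).mono_left nhdsWithin_le_nhds

theorem exists_hasDerivAt_superlevelIntegral [Finite ι] (hS : IsCompact S) (hσ : ∀ᵐ x ∂σ, x ∈ S)
    (hX : ∀ i, ∀ x ∈ S, ContDiffAt ℝ ∞ (X i) x) (hdiv : ∀ i, IsDivergenceFree σ S (X i))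
    (hg : ∀ x ∈ S, ContDiffAt ℝ ∞ g x) {c : ℝ} (hc : c ∉ criticalValuesAlong X g S)
    (hψ : ∀ x ∈ S, ContDiffAt ℝ ∞ ψ x) :
    ∃ θ : V → ℝ, (∀ x ∈ S, ContDiffAt ℝ ∞ θ x) ∧ ∀ᶠ a in 𝓝 c,
      HasDerivAt (superlevelIntegral σ g ψ) (superlevelIntegral σ g θ a) a := by
  have hopen := (isClosed_criticalValuesAlong hS (fun i => continuousOn_of_contDiffAt (hX i))
    fun x hx => (hg x hx).of_le (by simp)).isOpen_compl
  obtain ⟨θ, hθ, δ, hδ, hsub⟩ :=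
    exists_superlevelIntegral_sub_eq_intervalIntegral hS hσ hX hdiv hg hc hψ
  have hcont := continuousOn_superlevelIntegral hS hσ hX hdiv hg hθ
  refine ⟨θ, hθ, ?_⟩
  filter_upwards [ball_mem_nhds c hδ, hopen.mem_nhds hc] with a ha hac
  have hprimitive : ∀ b ∈ ball c δ, superlevelIntegral σ g ψ b =
      superlevelIntegral σ g ψ a + ∫ u in a..b, superlevelIntegral σ g θ u := fun b hb => by
    rw [← hsub a ha b hb, add_sub_cancel]
  exact ((intervalIntegral.integral_hasDerivAt_right IntervalIntegrable.refl
    (hcont.stronglyMeasurableAtFilter hopen a hac)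
    (hcont.continuousAt (hopen.mem_nhds hac))).const_add _).congr_of_eventuallyEq
    (mem_of_superset (isOpen_ball.mem_nhds ha) hprimitive)

theorem contDiffOn_of_forall_exists_hasDerivAt {E : Type*} [NormedAddCommGroup E] [NormedSpace ℝ E]
    {U : Set ℝ} (hU : IsOpen U) {𝓕 : Set (ℝ → E)}
    (h𝓕 : ∀ f ∈ 𝓕, ∀ c ∈ U, ∃ f' ∈ 𝓕, ∀ᶠ a in 𝓝 c, HasDerivAt f (f' a) a) {f : ℝ → E}
    (hf : f ∈ 𝓕) : ContDiffOn ℝ ∞ f U := by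
  refine contDiffOn_infty.2 fun n => ?_
  induction n generalizing f with
  | zero =>
    refine contDiffOn_zero.2 fun c hc => ?_
    obtain ⟨f', -, hf'⟩ := h𝓕 f hf c hc
    exact hf'.self_of_nhds.continuousAt.continuousWithinAt
  | succ n ih =>
    push_cast
    rw [contDiffOn_succ_iff_deriv_of_isOpen hU]
    refine ⟨fun c hc => ?_, by simp, fun c hc => ?_⟩
    · obtain ⟨f', -, hf'⟩ := h𝓕 f hf c hc
      exact hf'.self_of_nhds.differentiableAt.differentiableWithinAt
    · obtain ⟨f', hmem, hf'⟩ := h𝓕 f hf c hc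
      exact (((ih hmem).contDiffAt (hU.mem_nhds hc)).congr_of_eventuallyEq
        (hf'.mono fun a ha => ha.deriv)).contDiffWithinAt

theorem contDiffOn_superlevelIntegral [Finite ι] (hS : IsCompact S) (hσ : ∀ᵐ x ∂σ, x ∈ S)
    (hX : ∀ i, ∀ x ∈ S, ContDiffAt ℝ ∞ (X i) x) (hdiv : ∀ i, IsDivergenceFree σ S (X i))
    (hg : ∀ x ∈ S, ContDiffAt ℝ ∞ g x) (hψ : ∀ x ∈ S, ContDiffAt ℝ ∞ ψ x) :
    ContDiffOn ℝ ∞ (superlevelIntegral σ g ψ) (criticalValuesAlong X g S)ᶜ := by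
  refine contDiffOn_of_forall_exists_hasDerivAt
    (𝓕 := superlevelIntegral σ g '' {ψ | ∀ x ∈ S, ContDiffAt ℝ ∞ ψ x})
    (isClosed_criticalValuesAlong hS (fun i => continuousOn_of_contDiffAt (hX i))
      fun x hx => (hg x hx).of_le (by simp)).isOpen_compl ?_ (mem_image_of_mem _ hψ)
  rintro _ ⟨ψ, hψ, rfl⟩ c hc
  obtain ⟨θ, hθ, hderiv⟩ := exists_hasDerivAt_superlevelIntegral hS hσ hX hdiv hg hc hψ
  exact ⟨_, mem_image_of_mem _ hθ, hderiv⟩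

theorem contDiffOn_measureReal_sublevel [Finite ι] (hS : IsCompact S) (hσ : ∀ᵐ x ∂σ, x ∈ S)
    (hX : ∀ i, ∀ x ∈ S, ContDiffAt ℝ ∞ (X i) x) (hdiv : ∀ i, IsDivergenceFree σ S (X i))
    (hg : ∀ x ∈ S, ContDiffAt ℝ ∞ g x) :
    ContDiffOn ℝ ∞ (fun u => σ.real {x | g x ≤ u}) (criticalValuesAlong X g S)ᶜ := by
  have hgm : AEMeasurable g σ :=
    aemeasurable_of_continuousOn_of_ae_mem hS hσ (continuousOn_of_contDiffAt hg)
  simp only [measureReal_sublevel_eq hgm]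
  exact contDiffOn_const.sub
    (contDiffOn_superlevelIntegral hS hσ hX hdiv hg fun _ _ => contDiffAt_const)

end Transport

section InfinitesimalRotation

variable {V : Type*} [NormedAddCommGroup V] [InnerProductSpace ℝ V]

/-- An infinitesimal generator of the rotations in the plane spanned by `v` and `w`. If `v` and `w`
are orthonormal, it maps `w` to `v` and `v` to `-w`. -/
noncomputable def infinitesimalRotation (v w : V) : V →L[ℝ] V :=
  InnerProductSpace.rankOne ℝ v w - InnerProductSpace.rankOne ℝ w v

theorem infinitesimalRotation_apply (v w x : V) :
    infinitesimalRotation v w x = inner ℝ w x • v - inner ℝ v x • w :=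
  rfl

theorem infinitesimalRotation_mem_skewAdjoint [CompleteSpace V] (v w : V) :
    infinitesimalRotation v w ∈ skewAdjoint (V →L[ℝ] V) := by
  simp [skewAdjoint.mem_iff, infinitesimalRotation, ContinuousLinearMap.star_eq_adjoint]

theorem exists_apply_infinitesimalRotation_ne_zero {ι : Type*} (b : Basis ι ℝ V) {x v : V}
    (hx : x ≠ 0) (hxv : inner ℝ x v = 0) {l : V →L[ℝ] ℝ} (hl : l v ≠ 0) :
    ∃ p : ι × ι, l (infinitesimalRotation (b p.1) (b p.2) x) ≠ 0 := by
  by_contra! hzero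
  let B : V →ₗ[ℝ] V →ₗ[ℝ] ℝ := LinearMap.mk₂ ℝ (fun v w => l (infinitesimalRotation v w x))
    (fun v v' w => by simp [infinitesimalRotation]; ring)
    (fun c v w => by simp [infinitesimalRotation]; ring)
    (fun v w w' => by simp [infinitesimalRotation]; ring)
    (fun c v w => by simp [infinitesimalRotation]; ring)
  have hB : B = 0 := LinearMap.ext_basis b b fun i j => hzero (i, j)
  have hvx : l (infinitesimalRotation v x x) = 0 := DFunLike.congr_fun (DFunLike.congr_fun hB v) x
  rw [infinitesimalRotation_apply, real_inner_comm x v, hxv, zero_smul, sub_zero, map_smul,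
    smul_eq_mul, mul_eq_zero, inner_self_eq_zero] at hvx
  exact hvx.elim hx hl

theorem notMem_criticalValuesAlong_infinitesimalRotation {ι : Type*} (b : Basis ι ℝ V) {S : Set V}
    (hS : 0 ∉ S) {g : V → ℝ} {c : ℝ}
    (hreg : ∀ x ∈ S, g x = c → ∃ v : V, inner ℝ x v = 0 ∧ fderiv ℝ g x v ≠ 0) :
    c ∉ criticalValuesAlong (fun p : ι × ι => infinitesimalRotation (b p.1) (b p.2)) g S := by
  rintro ⟨x, ⟨hx, hcrit⟩, hgx⟩
  obtain ⟨v, hxv, hv⟩ := hreg x hx hgx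
  obtain ⟨p, hp⟩ := exists_apply_infinitesimalRotation_ne_zero b (ne_of_mem_of_not_mem hx hS) hxv hv
  exact hp (hcrit p)

end InfinitesimalRotation

section Sphere

theorem hausdorffMeasure_image_lt_top {E F : Type*} [NormedAddCommGroup E] [NormedSpace ℝ E]
    [FiniteDimensional ℝ E] [NormedAddCommGroup F] [NormedSpace ℝ F] [MeasurableSpace F]
    [BorelSpace F] {f : E → F} (hf : ContDiff ℝ 1 f) {K : Set E} (hK : IsCompact K) :
    μH[finrank ℝ E] (f '' K) < ⊤ := by
  borelize E
  obtain ⟨C, hC⟩ :=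
    (hf.locallyLipschitz.locallyLipschitzOn (s := K)).exists_lipschitzOnWith_of_compact hK
  have hKfin : μH[finrank ℝ E] K < ⊤ := hK.measure_lt_top
  exact (hC.hausdorffMeasure_image_le (Nat.cast_nonneg _)).trans_lt
    (ENNReal.mul_lt_top (by simp) hKfin)

variable {V : Type*} [NormedAddCommGroup V] [InnerProductSpace ℝ V]

theorem stereoInvFunAux_image_mem_nhdsWithin_sphere {x : V} (hx : ‖x‖ = 1) :
    (fun w : (ℝ ∙ (-x))ᗮ => stereoInvFunAux (-x) w) '' closedBall 0 1 ∈ 𝓝[sphere 0 1] x := by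
  have hpole : innerSL ℝ (-x) x ≠ (1 : ℝ) := by
    simp only [innerSL_apply_apply, inner_neg_left, real_inner_self_eq_norm_sq, hx]
    norm_num
  have hopen : IsOpen {y : V | innerSL ℝ (-x) y ≠ (1 : ℝ)} :=
    isOpen_ne_fun (innerSL ℝ (-x)).continuous continuous_const
  have hcont : ContinuousAt (stereoToFun (-x)) x :=
    continuousOn_stereoToFun.continuousAt (hopen.mem_nhds hpole)
  have hcenter : stereoToFun (-x) x = 0 := by
    simpa [stereoToFun_apply] using Or.inr (Submodule.mem_span_singleton.2 ⟨-1, by simp⟩)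
  have hball := hcont.preimage_mem_nhds (closedBall_mem_nhds _ one_pos)
  rw [hcenter] at hball
  filter_upwards [mem_nhdsWithin_of_mem_nhds hball,
    mem_nhdsWithin_of_mem_nhds (hopen.mem_nhds hpole), self_mem_nhdsWithin] with y hy hypole hyS
  refine ⟨stereoToFun (-x) y, hy, ?_⟩
  have hne : y ≠ -x := by
    rintro rfl
    simp [hx] at hypole
  exact congrArg Subtype.val (stereo_left_inv (by rwa [norm_neg]) (x := ⟨y, hyS⟩) hne)

variable [MeasurableSpace V] [BorelSpace V]

theorem measurePreserving_hausdorffMeasure_restrict_sphere (s r : ℝ) (e : V ≃ₗᵢ[ℝ] V) :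
    MeasurePreserving e ((μH[s] : Measure V).restrict (sphere 0 r))
      ((μH[s] : Measure V).restrict (sphere 0 r)) := by
  have hrestrict := (e.toIsometryEquiv.measurePreserving_hausdorffMeasure s).restrict_preimage
    (isClosed_sphere (x := (0 : V)) (ε := r)).measurableSet
  have hpreimage : e ⁻¹' sphere 0 r = sphere (0 : V) r := by
    ext x
    simp
  simpa [hpreimage] using hrestrict

/-- The surface measure of the unit sphere of `V`, as a measure on `V`: the Hausdorff measure of
codimension one, restricted to the sphere. -/
noncomputable def unitSphereMeasure (V : Type*) [NormedAddCommGroup V] [InnerProductSpace ℝ V]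
    [MeasurableSpace V] [BorelSpace V] : Measure V :=
  μH[(finrank ℝ V : ℝ) - 1].restrict (sphere 0 1)

theorem ae_mem_unitSphere : ∀ᵐ x ∂unitSphereMeasure V, x ∈ sphere (0 : V) 1 :=
  ae_restrict_mem isClosed_sphere.measurableSet

variable [FiniteDimensional ℝ V]

theorem hausdorffMeasure_unitSphere_lt_top :
    μH[(finrank ℝ V : ℝ) - 1] (sphere (0 : V) 1) < ⊤ := by
  refine (isCompact_sphere (0 : V) 1).measure_lt_top_of_nhdsWithin fun x hx => ?_
  have hx1 : ‖x‖ = 1 := by simpa using hx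
  have hx0 : x ≠ 0 := norm_ne_zero_iff.1 (by simp [hx1])
  have hdim : (finrank ℝ V : ℝ) - 1 = finrank ℝ (ℝ ∙ (-x))ᗮ := by
    have hsum := (ℝ ∙ (-x)).finrank_add_finrank_orthogonal
    rw [finrank_span_singleton (neg_ne_zero.2 hx0)] at hsum
    rw [← hsum]
    push_cast
    ring
  rw [hdim]
  have hchart : ContDiff ℝ 1 fun w : (ℝ ∙ (-x))ᗮ => stereoInvFunAux (-x) w :=
    contDiff_stereoInvFunAux.comp (ℝ ∙ (-x))ᗮ.subtypeL.contDiff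
  exact ⟨_, stereoInvFunAux_image_mem_nhdsWithin_sphere hx1,
    hausdorffMeasure_image_lt_top hchart (isCompact_closedBall _ _)⟩

instance : IsFiniteMeasure (unitSphereMeasure V) :=
  isFiniteMeasure_restrict.2 hausdorffMeasure_unitSphere_lt_top.ne

theorem isDivergenceFree_of_mem_skewAdjoint {σ : Measure V} [IsFiniteMeasure σ] {r : ℝ}
    (hσ : ∀ᵐ x ∂σ, x ∈ sphere (0 : V) r) (hinv : ∀ e : V ≃ₗᵢ[ℝ] V, MeasurePreserving e σ σ)
    {A : V →L[ℝ] V} (hA : A ∈ skewAdjoint (V →L[ℝ] V)) :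
    IsDivergenceFree σ (sphere 0 r) A := by
  let : NormedAlgebra ℚ (V →L[ℝ] V) := .restrictScalars ℚ ℝ _
  have hunitary (t : ℝ) : NormedSpace.exp (t • A) ∈ unitary (V →L[ℝ] V) :=
    NormedSpace.exp_mem_unitary_of_mem_skewAdjoint (skewAdjoint.smul_mem t hA)
  let e (t : ℝ) : V ≃ₗᵢ[ℝ] V := Unitary.linearIsometryEquiv ⟨_, hunitary t⟩
  have he (t : ℝ) (x : V) : e t x = NormedSpace.exp (t • A) x := rfl
  refine isDivergenceFree_of_flow (Φ := fun t => e t) (isCompact_sphere _ _) hσ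
    A.continuous.continuousOn (fun t => hinv (e t)) (fun t x hx => by simpa using hx)
    (fun x _ => by simp [he]) fun x _ t => ?_
  simpa [he] using (hasDerivAt_exp_smul_const' (𝕂 := ℝ) A t).clm_apply (hasDerivAt_const t x)

theorem isDivergenceFree_infinitesimalRotation (v w : V) :
    IsDivergenceFree (unitSphereMeasure V) (sphere 0 1) (infinitesimalRotation v w) :=
  isDivergenceFree_of_mem_skewAdjoint ae_mem_unitSphere
    (measurePreserving_hausdorffMeasure_restrict_sphere _ 1)
    (infinitesimalRotation_mem_skewAdjoint v w)

theorem volume_function_smooth_near_zero_general {g : V → ℝ}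
    (hg : ∀ θ : V, ‖θ‖ = 1 → ContDiffAt ℝ ∞ g θ)
    (hreg : ∀ θ : V, ‖θ‖ = 1 → g θ = 0 → ∃ v : V, inner ℝ θ v = 0 ∧ fderiv ℝ g θ v ≠ 0)
    {W : ℝ → ℝ} (hW : ∀ u : ℝ, W u =
      ((μH[(finrank ℝ V : ℝ) - 1] : Measure V) {θ : V | ‖θ‖ = 1 ∧ g θ ≤ u}).toReal) :
    ∃ U : Set ℝ, IsOpen U ∧ (0 : ℝ) ∈ U ∧ ContDiffOn ℝ ∞ W U ∧ ContDiffOn ℝ ∞ (deriv W) U := by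
  let b := finBasis ℝ V
  let X (p : Fin (finrank ℝ V) × Fin (finrank ℝ V)) : V → V :=
    infinitesimalRotation (b p.1) (b p.2)
  have hX (p) (x : V) : ContDiffAt ℝ ∞ (X p) x := ContinuousLinearMap.contDiff _ |>.contDiffAt
  have hS := isCompact_sphere (0 : V) 1
  have hgS : ∀ x ∈ sphere (0 : V) 1, ContDiffAt ℝ ∞ g x := fun x hx => hg x (by simpa using hx)
  have hopen : IsOpen (criticalValuesAlong X g (sphere 0 1))ᶜ :=
    (isClosed_criticalValuesAlong hS (fun p => continuousOn_of_contDiffAt fun x _ => hX p x)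
      fun x hx => (hgS x hx).of_le (by simp)).isOpen_compl
  have hzero : 0 ∉ criticalValuesAlong X g (sphere 0 1) :=
    notMem_criticalValuesAlong_infinitesimalRotation b (by simp)
      fun x hx => hreg x (by simpa using hx)
  have hW' (u : ℝ) : W u = (unitSphereMeasure V).real {x | g x ≤ u} := by
    rw [hW, measureReal_def, unitSphereMeasure,
      Measure.restrict_apply' isClosed_sphere.measurableSet]
    congr 2
    ext x
    simp [and_comm]
  have hsmooth : ContDiffOn ℝ ∞ W (criticalValuesAlong X g (sphere 0 1))ᶜ :=
    (contDiffOn_measureReal_sublevel hS ae_mem_unitSphere (fun p x _ => hX p x)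
      (fun p => isDivergenceFree_infinitesimalRotation _ _) hgS).congr fun u _ => hW' u
  exact ⟨_, hopen, hzero, hsmooth, hsmooth.deriv_of_isOpen hopen (by simp)⟩

end Sphere

section Homogeneous

theorem contDiff_eval_mvPolynomial {ι : Type*} [Fintype ι] (P : MvPolynomial ι ℝ) :
    ContDiff ℝ ∞ fun z : EuclideanSpace ℝ ι => MvPolynomial.eval (fun i => z i) P := by
  simp only [MvPolynomial.eval_eq]
  fun_prop

theorem eval_smul_of_isHomogeneous {ι R : Type*} [CommSemiring R] {P : MvPolynomial ι R} {k : ℕ}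
    (hP : P.IsHomogeneous k) (t : R) (x : ι → R) :
    MvPolynomial.eval (fun i => t * x i) P = t ^ k * MvPolynomial.eval x P := by
  rw [MvPolynomial.eval_eq, MvPolynomial.eval_eq, Finset.mul_sum]
  refine Finset.sum_congr rfl fun m hm => ?_
  have hdeg : ∑ i ∈ m.support, m i = k := by
    by_contra h
    exact MvPolynomial.mem_support_iff.1 hm (hP.coeff_eq_zero h)
  simp only [mul_pow, Finset.prod_mul_distrib, Finset.prod_pow_eq_pow_sum, hdeg]
  ring

theorem fderiv_apply_self_of_homogeneous {E : Type*} [NormedAddCommGroup E] [NormedSpace ℝ E]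
    {g : E → ℝ} {x : E} {k : ℕ} (hg : DifferentiableAt ℝ g x)
    (hhom : ∀ t : ℝ, g (t • x) = t ^ k * g x) : fderiv ℝ g x x = k * g x := by
  have hray : HasDerivAt (fun t : ℝ => t • x) x 1 := by
    simpa using (hasDerivAt_id (1 : ℝ)).smul_const x
  have hchain : HasDerivAt (fun t : ℝ => g (t • x)) (fderiv ℝ g x x) 1 :=
    HasFDerivAt.comp_hasDerivAt 1 (by simpa using hg.hasFDerivAt) hray
  simp only [hhom] at hchain
  simpa using hchain.unique ((hasDerivAt_pow k (1 : ℝ)).mul_const (g x))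

theorem exists_inner_eq_zero_and_apply_ne_zero {V : Type*} [NormedAddCommGroup V]
    [InnerProductSpace ℝ V] {x : V} {l : V →L[ℝ] ℝ} (hl : l ≠ 0) (hlx : l x = 0) :
    ∃ v : V, inner ℝ x v = 0 ∧ l v ≠ 0 := by
  obtain ⟨w, hw⟩ := DFunLike.ne_iff.1 hl
  refine ⟨w - (inner ℝ x w / inner ℝ x x) • x, ?_, by simpa [hlx] using hw⟩
  rcases eq_or_ne x 0 with rfl | hx
  · exact inner_zero_left _
  · rw [inner_sub_right, inner_smul_right, div_mul_cancel₀ _ (inner_self_ne_zero.2 hx), sub_self]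

end Homogeneous

theorem volume_function_smooth_near_zero
    (d k : ℕ) (hd : 2 ≤ d) (hk : 1 ≤ k)
    (g : EuclideanSpace ℝ (Fin d) → ℝ)
    (hpoly : ∃ P : MvPolynomial (Fin d) ℝ, P.IsHomogeneous k ∧
      ∀ z : EuclideanSpace ℝ (Fin d), g z = MvPolynomial.eval (fun i => z i) P)
    (hgrad : ∀ θ : EuclideanSpace ℝ (Fin d), ‖θ‖ = 1 → g θ = 0 → fderiv ℝ g θ ≠ 0)
    (W : ℝ → ℝ)
    (hW : ∀ u : ℝ, W u =
      ((μH[(d : ℝ) - 1] : Measure (EuclideanSpace ℝ (Fin d)))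
        {θ : EuclideanSpace ℝ (Fin d) | ‖θ‖ = 1 ∧ g θ ≤ u}).toReal) :
    ∃ U : Set ℝ, IsOpen U ∧ (0 : ℝ) ∈ U ∧
      ContDiffOn ℝ (⊤ : ℕ∞) W U ∧ ContDiffOn ℝ (⊤ : ℕ∞) (deriv W) U := by
  obtain ⟨P, hP, hgP⟩ := hpoly
  have hg : ContDiff ℝ ∞ g := funext hgP ▸ contDiff_eval_mvPolynomial P
  refine volume_function_smooth_near_zero_general (fun θ _ => hg.contDiffAt)
    (fun θ hθ hgθ => exists_inner_eq_zero_and_apply_ne_zero (hgrad θ hθ hgθ) ?_)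
    (by simpa using hW)
  rw [fderiv_apply_self_of_homogeneous (k := k) (hg.differentiable (by simp) θ), hgθ, mul_zero]
  intro t
  simpa [hgP] using eval_smul_of_isHomogeneous hP t fun i => θ i
end
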